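/- For every θ ∈ ℝ and every E ∈ σ(H_{α,θ,b}), the Lyapunov exponent L(E) is strictly positive if and only if |αE + 2λ| > 2. -/

import Mathlib

open scoped Real

/-- The quasi-periodic potential `v(x) = 2λcos(2πx)/(1 - αcos(2πx))`. -/
noncomputable def potV (α lam : ℝ) (x : ℝ) : ℝ :=
  2 * lam * Real.cos (2 * Real.pi * x) / (1 - α * Real.cos (2 * Real.pi * x))

/-- One-step transfer matrix `A(x,z) = [[z - V x, -1],[1,0]]`. -/
noncomputable def tMat (V : ℝ → ℝ) (x : ℝ) (z : ℂ) : Matrix (Fin 2) (Fin 2) ℂ :=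
  !![z - (V x : ℝ), -1; 1, 0]

/-- The `n`-step transfer matrix `A_n(x,z) = A(x+(n-1)b,z) ⋯ A(x+b,z) A(x,z)`. -/
noncomputable def tProd (V : ℝ → ℝ) (b : ℝ) (n : ℕ) (x : ℝ) (z : ℂ) :
    Matrix (Fin 2) (Fin 2) ℂ :=
  (((List.range n).reverse).map (fun j => tMat V (x + (j : ℝ) * b) z)).prod

/-- The operator norm of a 2×2 complex matrix, acting on the Euclidean space `ℂ²`. -/
noncomputable def opNorm2 (M : Matrix (Fin 2) (Fin 2) ℂ) : ℝ :=
  ‖Matrix.toEuclideanCLM (𝕜 := ℂ) M‖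

/-- The Lyapunov exponent `L(z) = lim_n (1/n)∫₀¹ log‖A_n(x,z)‖ dx`; the limit exists and
equals `inf_{n ≥ 1} (1/n)∫₀¹ log‖A_n(x,z)‖ dx` by subadditivity, so we take that as the
definition. -/
noncomputable def lyap (V : ℝ → ℝ) (b : ℝ) (z : ℂ) : ℝ :=
  ⨅ n : ℕ+, ((n : ℝ))⁻¹ * ∫ x in (0:ℝ)..(1:ℝ), Real.log (opNorm2 (tProd V b n x z))

/-- `IsSchrodingerOp V b θ H` says that `H` is the bounded operator on `ℓ²(ℤ)` given by
`(Hu)ₙ = u_{n+1} + u_{n-1} + V(nb+θ)uₙ`. -/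
def IsSchrodingerOp (V : ℝ → ℝ) (b θ : ℝ)
    (H : lp (fun _ : ℤ => ℂ) 2 →L[ℂ] lp (fun _ : ℤ => ℂ) 2) : Prop :=
  ∀ u : lp (fun _ : ℤ => ℂ) 2, ∀ n : ℤ,
    (H u : ∀ _ : ℤ, ℂ) n = (u : ∀ _ : ℤ, ℂ) (n + 1) + (u : ∀ _ : ℤ, ℂ) (n - 1)
      + (V ((n : ℝ) * b + θ) : ℂ) * (u : ∀ _ : ℤ, ℂ) n

/-! Part A: cocycle products -/
section PartA
attribute [local instance] Matrix.linftyOpNormedAddCommGroup Matrix.linftyOpNormedSpace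
  Matrix.linftyOpNormedRing Matrix.linftyOpNormedAlgebra

abbrev M2 := Matrix (Fin 2) (Fin 2) ℂ

def cp (F : ℂ → M2) (ρ : ℂ) : ℕ → ℂ → M2
  | 0, _ => 1
  | k + 1, X => F (X * ρ ^ k) * cp F ρ k X

def UB (F : ℂ → M2) (ρ : ℂ) (r c : ℝ) : Prop :=
  ∃ C : ℝ, 0 < C ∧ ∀ k : ℕ, ∀ X : ℂ, ‖X‖ = r → ‖cp F ρ k X‖ ≤ C * Real.exp (c * k)

lemma M2_norm_one : ‖(1 : M2)‖ = 1 := by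
  exact norm_one

lemma cp_zero (F : ℂ → M2) (ρ X : ℂ) : cp F ρ 0 X = 1 := rfl
lemma cp_succ (F : ℂ → M2) (ρ X : ℂ) (k : ℕ) : cp F ρ (k + 1) X = F (X * ρ ^ k) * cp F ρ k X := rfl

lemma cp_add (F : ℂ → M2) (ρ X : ℂ) (m n : ℕ) :
    cp F ρ (m + n) X = cp F ρ m (X * ρ ^ n) * cp F ρ n X := by
  induction m with
  | zero => simp [cp_zero]
  | succ m ih =>
    rw [show m + 1 + n = (m + n) + 1 by ring, cp_succ, cp_succ, ih, Matrix.mul_assoc]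
    congr 2
    ring

lemma cp_one (F : ℂ → M2) (ρ X : ℂ) : cp F ρ 1 X = F X := by
  simp [cp]

lemma cp_succ' (F : ℂ → M2) (ρ X : ℂ) (k : ℕ) :
    cp F ρ (k + 1) X = cp F ρ k (X * ρ) * F X := by
  rw [cp_add, cp_one, pow_one]

lemma norm_rot {ρ : ℂ} (hρ : ‖ρ‖ = 1) (X : ℂ) (k : ℕ) : ‖X * ρ ^ k‖ = ‖X‖ := by
  simp [hρ]

lemma cp_norm_le {F : ℂ → M2} {ρ : ℂ} (hρ : ‖ρ‖ = 1) {r B : ℝ}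
    (hB : ∀ X : ℂ, ‖X‖ = r → ‖F X‖ ≤ B) (hB1 : 1 ≤ B) (k : ℕ) (X : ℂ) (hX : ‖X‖ = r) :
    ‖cp F ρ k X‖ ≤ B ^ k := by
  induction k with
  | zero => simp [cp_zero]
  | succ k ih =>
    rw [cp_succ, pow_succ']
    refine (norm_mul_le _ _).trans ?_
    exact mul_le_mul (hB _ (by rw [norm_rot hρ, hX])) ih (norm_nonneg _) (by linarith)

lemma UB_of_one {F : ℂ → M2} {ρ : ℂ} (hρ : ‖ρ‖ = 1) {r B c : ℝ}
    (hB : ∀ X : ℂ, ‖X‖ = r → ‖F X‖ ≤ B) {k : ℕ} (hk : 1 ≤ k)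
    (h : ∀ X : ℂ, ‖X‖ = r → ‖cp F ρ k X‖ ≤ Real.exp (c * k)) : UB F ρ r c := by
  set B1 := max B 1 with hB1
  have hB' : ∀ X : ℂ, ‖X‖ = r → ‖F X‖ ≤ B1 := fun X hX => (hB X hX).trans (le_max_left _ _)
  have h1 : 1 ≤ B1 := le_max_right _ _
  refine ⟨B1 ^ k * Real.exp (|c| * k), by positivity, ?_⟩
  have key : ∀ q : ℕ, ∀ X : ℂ, ‖X‖ = r → ‖cp F ρ (k * q) X‖ ≤ Real.exp (c * (k * q : ℕ)) := by
    intro q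
    induction q with
    | zero => intro X hX; simp [cp_zero]
    | succ q ih =>
      intro X hX
      rw [show k * (q + 1) = k + k * q by ring, cp_add]
      refine (norm_mul_le _ _).trans ?_
      refine (mul_le_mul (h _ (by rw [norm_rot hρ, hX])) (ih X hX) (norm_nonneg _)
        (by positivity)).trans ?_
      rw [← Real.exp_add]
      apply le_of_eq; congr 1; push_cast; ring
  intro n X hX
  have hn : n = n % k + k * (n / k) := (Nat.mod_add_div n k).symm
  have hmod : n % k < k := Nat.mod_lt _ hk
  conv_lhs => rw [hn]
  rw [cp_add]
  refine (norm_mul_le _ _).trans ?_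
  have e1 := cp_norm_le hρ hB' h1 (n % k) (X * ρ ^ (k * (n / k))) (by rw [norm_rot hρ, hX])
  have e2 := key (n / k) X hX
  have e3 : B1 ^ (n % k) ≤ B1 ^ k := pow_le_pow_right₀ h1 hmod.le
  have e4 : Real.exp (c * (k * (n / k) : ℕ)) ≤ Real.exp (|c| * k) * Real.exp (c * n) := by
    rw [← Real.exp_add]
    apply Real.exp_le_exp.mpr
    have : (n : ℝ) = (n % k : ℕ) + ((k * (n / k) : ℕ) : ℝ) := by exact_mod_cast hn
    rw [this]
    have h5 : -(c * (n % k : ℕ)) ≤ |c| * k := by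
      have : ((n % k : ℕ) : ℝ) ≤ k := by exact_mod_cast hmod.le
      calc -(c * (n % k : ℕ)) ≤ |c * (n % k : ℕ)| := neg_le_abs _
        _ = |c| * (n % k : ℕ) := by rw [abs_mul, Nat.abs_cast]
        _ ≤ |c| * k := by gcongr
    linarith
  calc _ ≤ B1 ^ k * (Real.exp (|c| * k) * Real.exp (c * n)) :=
        mul_le_mul (e1.trans e3) (e2.trans e4) (norm_nonneg _) (by positivity)
    _ = _ := by ring

lemma UB_mono {F : ℂ → M2} {ρ : ℂ} {r c c' : ℝ} (h : UB F ρ r c) (hc : c ≤ c') : UB F ρ r c' := by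
  obtain ⟨C, hC, h⟩ := h
  refine ⟨C, hC, fun k X hX => (h k X hX).trans ?_⟩
  gcongr

/-- if bounded by `C e^{ck}` for infinitely many `k`, then UB for slightly larger exponent -/
lemma UB_of_freq {F : ℂ → M2} {ρ : ℂ} (hρ : ‖ρ‖ = 1) {r B c c' : ℝ} (hc : c < c')
    (hB : ∀ X : ℂ, ‖X‖ = r → ‖F X‖ ≤ B) {C : ℝ}
    (h : ∀ k0 : ℕ, ∃ k ≥ k0, ∀ X : ℂ, ‖X‖ = r → ‖cp F ρ k X‖ ≤ C * Real.exp (c * k)) :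
    UB F ρ r c' := by
  obtain ⟨k0, hk0⟩ := exists_nat_gt (C / (c' - c))
  obtain ⟨k, hk, hh⟩ := h (max k0 1)
  refine UB_of_one hρ hB (k := k) (le_trans (le_max_right _ _) hk) fun X hX => (hh X hX).trans ?_
  have h1 : (k0 : ℝ) ≤ k := by exact_mod_cast (le_max_left _ _).trans hk
  have h2 : C ≤ (c' - c) * k := by
    have := (div_lt_iff₀ (by linarith : 0 < c' - c)).mp (hk0.trans_le h1)
    linarith
  have h3 : C ≤ Real.exp ((c' - c) * k) := by
    have := Real.add_one_le_exp ((c' - c) * k); linarith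
  calc C * Real.exp (c * k) ≤ Real.exp ((c' - c) * k) * Real.exp (c * k) := by gcongr
    _ = _ := by rw [← Real.exp_add]; congr 1; ring

lemma M2_entry_le (M : M2) (i j : Fin 2) : ‖M i j‖ ≤ ‖M‖ := by
  rw [Matrix.linfty_opNorm_def]
  have h1 : ‖M i j‖₊ ≤ ∑ j, ‖M i j‖₊ :=
    Finset.single_le_sum (f := fun j => ‖M i j‖₊) (fun _ _ => zero_le) (Finset.mem_univ j)
  have h2 : ∑ j, ‖M i j‖₊ ≤ Finset.univ.sup fun i => ∑ j, ‖M i j‖₊ :=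
    Finset.le_sup (f := fun i => ∑ j, ‖M i j‖₊) (Finset.mem_univ i)
  exact_mod_cast h1.trans h2

lemma M2_norm_le {M : M2} {C : ℝ} (h : ∀ i j, ‖M i j‖ ≤ C) : ‖M‖ ≤ 2 * C := by
  have hC : 0 ≤ C := (norm_nonneg _).trans (h 0 0)
  lift C to NNReal using hC
  rw [Matrix.linfty_opNorm_def]
  have : (Finset.univ.sup fun i => ∑ j, ‖M i j‖₊) ≤ 2 * C := by
    apply Finset.sup_le
    intro i _
    rw [Fin.sum_univ_two, two_mul]
    exact add_le_add (by exact_mod_cast h i 0) (by exact_mod_cast h i 1)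
  exact_mod_cast this

lemma cp_det {F : ℂ → M2} {ρ : ℂ} (hF : ∀ X, (F X).det = 1) (k : ℕ) (X : ℂ) :
    (cp F ρ k X).det = 1 := by
  induction k with
  | zero => simp [cp_zero]
  | succ k ih => rw [cp_succ, Matrix.det_mul, hF, ih, one_mul]

lemma M2_det_le (M : M2) : ‖M.det‖ ≤ 2 * ‖M‖ ^ 2 := by
  rw [Matrix.det_fin_two]
  refine (norm_sub_le _ _).trans ?_
  rw [norm_mul, norm_mul]
  have := M2_entry_le M
  have h1 := mul_le_mul (this 0 0) (this 1 1) (norm_nonneg _) (norm_nonneg _)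
  have h2 := mul_le_mul (this 0 1) (this 1 0) (norm_nonneg _) (norm_nonneg _)
  nlinarith

lemma UB_nonneg {F : ℂ → M2} {ρ : ℂ} (hF : ∀ X, (F X).det = 1) {r c : ℝ} (hr : 0 ≤ r)
    (h : UB F ρ r c) : 0 ≤ c := by
  by_contra hc
  push Not at hc
  obtain ⟨C, hC, h⟩ := h
  have hX : ‖(r : ℂ)‖ = r := by simp [abs_of_nonneg hr]
  have h1 : ∀ k : ℕ, 1 ≤ 2 * (C * Real.exp (c * k)) ^ 2 := by
    intro k
    have := M2_det_le (cp F ρ k r)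
    rw [cp_det hF, norm_one] at this
    refine this.trans ?_
    gcongr
    exact h k _ hX
  have h2 : Filter.Tendsto (fun k : ℕ => 2 * (C * Real.exp (c * k)) ^ 2) Filter.atTop (nhds (2 * (C * 0) ^ 2)) := by
    refine ((Filter.Tendsto.const_mul C ?_).pow 2).const_mul 2
    refine Real.tendsto_exp_atBot.comp ?_
    exact Filter.Tendsto.const_mul_atTop_of_neg hc tendsto_natCast_atTop_atTop
  have := ge_of_tendsto' h2 h1
  norm_num at this

end PartA

/-! Part C: annulus maximum principle and interpolation -/
section PartC

def Ann (a R : ℝ) : Set ℂ := {z | a ≤ ‖z‖ ∧ ‖z‖ ≤ R}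

lemma annulus_max {E : Type*} [NormedAddCommGroup E] [NormedSpace ℂ E] {f : ℂ → E} {a R C : ℝ}
    (hd : DifferentiableOn ℂ f (Ann a R))
    (h1 : ∀ z : ℂ, ‖z‖ = a → ‖f z‖ ≤ C) (h2 : ∀ z : ℂ, ‖z‖ = R → ‖f z‖ ≤ C)
    (z : ℂ) (hz : z ∈ Ann a R) : ‖f z‖ ≤ C := by
  rcases eq_or_lt_of_le hz.1 with h | h
  · exact h1 z h.symm
  rcases eq_or_lt_of_le hz.2 with h' | h'
  · exact h2 z h'
  set U : Set ℂ := {z | a < ‖z‖ ∧ ‖z‖ < R} with hU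
  have hUo : IsOpen U :=
    (isOpen_lt continuous_const continuous_norm).inter (isOpen_lt continuous_norm continuous_const)
  have hAc : IsClosed (Ann a R) :=
    (isClosed_le continuous_const continuous_norm).inter
      (isClosed_le continuous_norm continuous_const)
  have hcl : closure U ⊆ Ann a R :=
    closure_minimal (fun z hz => ⟨hz.1.le, hz.2.le⟩) hAc
  have hbd : Bornology.IsBounded U := by
    refine (Metric.isBounded_ball (x := (0 : ℂ)) (r := R)).subset ?_
    intro z hz
    simpa using hz.2
  refine Complex.norm_le_of_forall_mem_frontier_norm_le hbd
    (DifferentiableOn.diffContOnCl (hd.mono hcl)) ?_ (subset_closure ⟨h, h'⟩)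
  intro w hw
  rw [frontier, hUo.interior_eq] at hw
  have hw1 := hcl hw.1
  have hw2 : ¬ (a < ‖w‖ ∧ ‖w‖ < R) := hw.2
  rcases eq_or_lt_of_le hw1.1 with h3 | h3
  · exact h1 w h3.symm
  rcases eq_or_lt_of_le hw1.2 with h4 | h4
  · exact h2 w h4
  exact absurd ⟨h3, h4⟩ hw2

lemma factor_zeros {U : Set ℂ} {ι : Type*} [DecidableEq ι] (y : ι → ℂ) (s : Finset ι) :
    ∀ f : ℂ → ℂ, DifferentiableOn ℂ f U → (Set.InjOn y s) → (∀ j ∈ s, U ∈ nhds (y j)) →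
    (∀ j ∈ s, f (y j) = 0) →
    ∃ Φ : ℂ → ℂ, DifferentiableOn ℂ Φ U ∧ ∀ z, f z = (∏ j ∈ s, (z - y j)) * Φ z := by
  induction s using Finset.induction_on with
  | empty => intro f hf _ _ _; exact ⟨f, hf, fun z => by simp⟩
  | insert i s his ih =>
    intro f hf hinj hU h0
    have hfi : f (y i) = 0 := h0 i (Finset.mem_insert_self _ _)
    have hg : DifferentiableOn ℂ (dslope f (y i)) U :=
      (Complex.differentiableOn_dslope (hU i (Finset.mem_insert_self _ _))).mpr hf
    have hfz : ∀ z, f z = (z - y i) * dslope f (y i) z := by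
      intro z
      have := sub_smul_dslope f (y i) z
      rw [hfi, sub_zero] at this
      rw [← this, smul_eq_mul]
    obtain ⟨Φ, h1, h2⟩ := ih (dslope f (y i)) hg
      (hinj.mono (by simp))
      (fun j hj => hU j (Finset.mem_insert_of_mem hj))
      (by
        intro j hj
        have hne : y j ≠ y i := by
          intro h
          have := hinj (by simp [hj]) (by simp) h
          exact his (this ▸ hj)
        have := hfz (y j)
        rw [h0 j (Finset.mem_insert_of_mem hj)] at this
        rcases mul_eq_zero.mp this.symm with h | h
        · exact absurd (sub_eq_zero.mp h) hne
        · exact h)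
    refine ⟨Φ, h1, fun z => ?_⟩
    rw [hfz, h2, Finset.prod_insert his, mul_assoc]

lemma interp {F : ℂ → ℂ} {a R : ℝ} (ha0 : 0 < a) (ha : a < 1) (hR : 1 < R) {N : ℕ} {y : ℕ → ℂ}
    (s : ℕ) {MR Ma m bR ba d Q g T : ℝ}
    (hF : DifferentiableOn ℂ F (Ann a R))
    (hMR : ∀ z : ℂ, ‖z‖ = R → ‖F z‖ ≤ MR) (hMa : ∀ z : ℂ, ‖z‖ = a → ‖F z‖ ≤ Ma)
    (hy : ∀ j < N, ‖y j‖ = 1)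
    (hm : ∀ j < N, ‖F (y j)‖ ≤ m) (hm0 : 0 ≤ m)
    (hbR0 : 0 < bR) (hba0 : 0 < ba) (hd0 : 0 < d)
    (hbR : ∀ z : ℂ, ‖z‖ = R → bR ≤ ‖∏ j ∈ Finset.range N, (z - y j)‖)
    (hba : ∀ z : ℂ, ‖z‖ = a → ba ≤ ‖∏ j ∈ Finset.range N, (z - y j)‖)
    (hd : ∀ j < N, d ≤ ‖∏ i ∈ (Finset.range N).erase j, (y j - y i)‖)
    (hQ : ∀ z : ℂ, ‖z‖ = 1 → ‖∏ j ∈ Finset.range N, (z - y j)‖ ≤ Q)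
    (hQ' : ∀ z : ℂ, ‖z‖ = 1 → ∀ j < N, ‖∏ i ∈ (Finset.range N).erase j, (z - y i)‖ ≤ Q)
    (hg : 0 < g) (hgR : g ≤ R - 1) (hga : g ≤ 1 - a)
    (hTR : MR * R ^ s / bR ≤ T) (hTa : Ma * a ^ s / ba ≤ T)
    (z : ℂ) (hz : ‖z‖ = 1) : ‖F z‖ ≤ Q * (T + N * m / (d * g)) + N * m * Q / d := by
  set w : ℕ → ℂ := fun j => (y j) ^ s * F (y j) / ∏ i ∈ (Finset.range N).erase j, (y j - y i) with hw
  set P : ℂ → ℂ := fun z => ∑ j ∈ Finset.range N, w j * ∏ i ∈ (Finset.range N).erase j, (z - y i) with hP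
  have hne : ∀ j < N, ∏ i ∈ (Finset.range N).erase j, (y j - y i) ≠ 0 := by
    intro j hj h
    have := hd j hj
    rw [h, norm_zero] at this
    linarith
  have hinj : Set.InjOn y (Finset.range N) := by
    intro j hj i hi h
    by_contra hji
    refine hne j (by simpa using hj) (Finset.prod_eq_zero (i := i) ?_ (by rw [h, sub_self]))
    simp at hi
    simp [hi, Ne.symm hji]
  have hPy : ∀ j < N, P (y j) = (y j) ^ s * F (y j) := by
    intro j hj
    rw [hP]
    simp only
    rw [Finset.sum_eq_single_of_mem j (by simpa using hj)]
    · rw [hw]; exact div_mul_cancel₀ _ (hne j hj)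
    · intro i hi hij
      rw [Finset.prod_eq_zero (i := j), mul_zero]
      · simp [hj, Ne.symm hij]
      · simp
  have hwn : ∀ j < N, ‖w j‖ ≤ m / d := by
    intro j hj
    rw [hw]
    simp only
    rw [norm_div, norm_mul, norm_pow, hy j hj, one_pow, one_mul]
    exact div_le_div₀ hm0 (hm j hj) hd0 (hd j hj)
  obtain ⟨Φ, hΦd, hΦ⟩ := factor_zeros (U := Ann a R) y (Finset.range N) (fun z => z ^ s * F z - P z)
    (by
      refine DifferentiableOn.sub ?_ ?_
      · exact (differentiableOn_id.pow s).mul hF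
      · rw [hP]; fun_prop)
    hinj
    (by
      intro j hj
      have h1 : {z : ℂ | a < ‖z‖ ∧ ‖z‖ < R} ∈ nhds (y j) := by
        refine ((isOpen_lt continuous_const continuous_norm).inter
          (isOpen_lt continuous_norm continuous_const)).mem_nhds ?_
        have := hy j (by simpa using hj)
        exact ⟨by simpa [this] using ha, by simpa [this] using hR⟩
      exact Filter.mem_of_superset h1 (fun z hz => ⟨hz.1.le, hz.2.le⟩))
    (by intro j hj; rw [hPy j (by simpa using hj), sub_self])
  -- boundary estimate for P
  have hPb : ∀ z : ℂ, (∀ j < N, g ≤ ‖z - y j‖) →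
      ‖P z‖ ≤ ‖∏ j ∈ Finset.range N, (z - y j)‖ * (N * m / (d * g)) := by
    intro z hzj
    calc ‖P z‖ ≤ ∑ j ∈ Finset.range N, ‖w j * ∏ i ∈ (Finset.range N).erase j, (z - y i)‖ :=
          norm_sum_le _ _
      _ ≤ ∑ j ∈ Finset.range N, ‖∏ j ∈ Finset.range N, (z - y j)‖ * (m / (d * g)) := by
          refine Finset.sum_le_sum fun j hj => ?_
          rw [← Finset.mul_prod_erase _ _ hj, norm_mul, norm_mul]
          have hj' : j < N := by simpa using hj
          have h1 := hwn j hj'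
          have h2 := hzj j hj'
          have h3 : ‖w j‖ ≤ ‖z - y j‖ * (m / (d * g)) := by
            refine h1.trans ?_
            calc m / d = g * (m / (d * g)) := by field_simp
              _ ≤ _ := by gcongr
          calc _ ≤ (‖z - y j‖ * (m / (d * g))) * ‖∏ i ∈ (Finset.range N).erase j, (z - y i)‖ := by gcongr
            _ = _ := by ring
      _ = _ := by rw [Finset.sum_const, Finset.card_range, nsmul_eq_mul]; ring
  have hgb : ∀ z : ℂ, (‖z‖ = a ∨ ‖z‖ = R) → ∀ j < N, g ≤ ‖z - y j‖ := by
    intro z hz j hj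
    have h1 := abs_norm_sub_norm_le z (y j)
    rw [hy j hj] at h1
    rcases hz with h | h
    · rw [h, abs_sub_comm] at h1
      linarith [le_abs_self (1 - a)]
    · rw [h] at h1
      linarith [le_abs_self (R - 1)]
  have hbound : ∀ z : ℂ, (‖z‖ = a ∨ ‖z‖ = R) → ∀ b' M' : ℝ, 0 < b' →
      b' ≤ ‖∏ j ∈ Finset.range N, (z - y j)‖ → ‖F z‖ ≤ M' → M' * ‖z‖ ^ s / b' ≤ T →
      ‖Φ z‖ ≤ T + N * m / (d * g) := by
    intro z hz b' M' hb' hb hM hT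
    have hB : 0 < ‖∏ j ∈ Finset.range N, (z - y j)‖ := hb'.trans_le hb
    have h1 := hΦ z
    have h2 : ‖∏ j ∈ Finset.range N, (z - y j)‖ * ‖Φ z‖ ≤
        ‖∏ j ∈ Finset.range N, (z - y j)‖ * (T + N * m / (d * g)) := by
      rw [← norm_mul, ← h1]
      refine (norm_sub_le _ _).trans ?_
      have h3 := hPb z (hgb z hz)
      have h4 : ‖z ^ s * F z‖ ≤ ‖∏ j ∈ Finset.range N, (z - y j)‖ * T := by
        rw [norm_mul, norm_pow]
        have hM0 : 0 ≤ M' := (norm_nonneg _).trans hM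
        have : 0 ≤ T := le_trans (by positivity) hT
        rw [div_le_iff₀ hb'] at hT
        calc ‖z‖ ^ s * ‖F z‖ ≤ ‖z‖ ^ s * M' := by gcongr
          _ = M' * ‖z‖ ^ s := by ring
          _ ≤ T * b' := hT
          _ ≤ T * ‖∏ j ∈ Finset.range N, (z - y j)‖ := by gcongr
          _ = _ := by ring
      rw [mul_add]; linarith
    exact le_of_mul_le_mul_left h2 hB
  have hΦz := annulus_max hΦd
    (fun z hz => hbound z (Or.inl hz) ba Ma hba0 (hba z hz) (hMa z hz) (by rw [hz]; exact hTa))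
    (fun z hz => hbound z (Or.inr hz) bR MR hbR0 (hbR z hz) (hMR z hz) (by rw [hz]; exact hTR))
    z ⟨by rw [hz]; exact ha.le, by rw [hz]; exact hR.le⟩
  have hPz : ‖P z‖ ≤ N * m * Q / d := by
    calc ‖P z‖ ≤ ∑ j ∈ Finset.range N, ‖w j * ∏ i ∈ (Finset.range N).erase j, (z - y i)‖ :=
          norm_sum_le _ _
      _ ≤ ∑ j ∈ Finset.range N, (m / d) * Q := by
          refine Finset.sum_le_sum fun j hj => ?_
          have hj' : j < N := by simpa using hj
          rw [norm_mul]
          exact mul_le_mul (hwn j hj') (hQ' z hz j hj') (norm_nonneg _) (by positivity)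
      _ = _ := by rw [Finset.sum_const, Finset.card_range, nsmul_eq_mul]; ring
  have hfin : ‖F z‖ = ‖(∏ j ∈ Finset.range N, (z - y j)) * Φ z + P z‖ := by
    rw [← hΦ z, sub_add_cancel, norm_mul, norm_pow, hz, one_pow, one_mul]
  rw [hfin]
  refine (norm_add_le _ _).trans ?_
  rw [norm_mul]
  have hQ0 : 0 ≤ Q := (norm_nonneg _).trans (hQ z hz)
  have := mul_le_mul (hQ z hz) hΦz (norm_nonneg _) hQ0
  linarith

end PartC

section PartB

lemma geom_bound {ρ : ℂ} (hρ : ‖ρ‖ = 1) {j : ℕ} (hj : ρ ^ j ≠ 1) (N : ℕ) :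
    ‖∑ i ∈ Finset.range N, (ρ ^ j) ^ i‖ ≤ 2 / ‖ρ ^ j - 1‖ := by
  rw [geom_sum_eq hj, norm_div]
  gcongr
  refine (norm_sub_le _ _).trans ?_
  simp [hρ]; norm_num

lemma log_one_sub (w : ℂ) : Real.log ‖1 - w‖ = (Complex.log (1 + -w)).re := by
  rw [Complex.log_re, sub_eq_add_neg]

lemma prod_rot_bound {ρ : ℂ} (hρ : ‖ρ‖ = 1) (hρ1 : ∀ m : ℕ, 1 ≤ m → ρ ^ m ≠ 1)
    {β0 κ : ℝ} (hβ0 : 0 ≤ β0) (hβ : β0 < 1) (hκ : 0 < κ) :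
    ∃ K : ℝ, 0 < K ∧ ∀ N : ℕ, ∀ γ : ℂ, ‖γ‖ ≤ β0 →
      Real.exp (-κ * N) / K ≤ ∏ j ∈ Finset.range N, ‖1 - γ * ρ ^ j‖ ∧
      ∏ j ∈ Finset.range N, ‖1 - γ * ρ ^ j‖ ≤ K * Real.exp (κ * N) := by
  obtain ⟨n, hn⟩ : ∃ n : ℕ, β0 ^ n * (1 - β0)⁻¹ < κ := by
    obtain ⟨n, hn⟩ := exists_pow_lt_of_lt_one (show 0 < κ * (1 - β0) by nlinarith) hβ
    refine ⟨n, ?_⟩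
    rw [← div_eq_mul_inv, div_lt_iff₀ (by linarith)]
    exact hn
  set K0 : ℝ := ∑ j ∈ Finset.range (n + 1), 2 / ‖ρ ^ j - 1‖ with hK0
  have key : ∀ N : ℕ, ∀ γ : ℂ, ‖γ‖ ≤ β0 →
      |∑ i ∈ Finset.range N, Real.log ‖1 - γ * ρ ^ i‖| ≤ κ * N + K0 := by
    intro N γ hγ
    have hz : ∀ i, ‖-(γ * ρ ^ i)‖ ≤ β0 := fun i => by simpa [hρ] using hγ
    have h1 : ‖∑ i ∈ Finset.range N, Complex.log (1 + -(γ * ρ ^ i))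
        - ∑ i ∈ Finset.range N, Complex.logTaylor (n + 1) (-(γ * ρ ^ i))‖ ≤ κ * N := by
      rw [← Finset.sum_sub_distrib]
      refine (norm_sum_le _ _).trans ?_
      calc _ ≤ ∑ i ∈ Finset.range N, κ := by
            refine Finset.sum_le_sum fun i _ => ?_
            refine (Complex.norm_log_sub_logTaylor_le n ((hz i).trans_lt hβ)).trans ?_
            refine le_trans ?_ hn.le
            have e1 : ‖-(γ * ρ ^ i)‖ ^ (n + 1) ≤ β0 ^ n := by
              calc _ ≤ β0 ^ (n + 1) := by gcongr; exact hz i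
                _ ≤ β0 ^ n := pow_le_pow_of_le_one hβ0 hβ.le (Nat.le_succ n)
            have e2 : (1 - ‖-(γ * ρ ^ i)‖)⁻¹ ≤ (1 - β0)⁻¹ := by
              apply inv_anti₀ (by linarith); linarith [hz i]
            have e3 : 0 < (1 - ‖-(γ * ρ ^ i)‖)⁻¹ := by
              apply inv_pos.mpr; linarith [hz i]
            have e4 : (1 : ℝ) ≤ n + 1 := by linarith [(Nat.cast_nonneg n : (0:ℝ) ≤ n)]
            calc _ ≤ ‖-(γ * ρ ^ i)‖ ^ (n + 1) * (1 - ‖-(γ * ρ ^ i)‖)⁻¹ :=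
                  div_le_self (by positivity) e4
              _ ≤ _ := mul_le_mul e1 e2 e3.le (by positivity)
        _ = _ := by simp [mul_comm]
    have h2 : ‖∑ i ∈ Finset.range N, Complex.logTaylor (n + 1) (-(γ * ρ ^ i))‖ ≤ K0 := by
      simp only [Complex.logTaylor]
      rw [Finset.sum_comm]
      refine (norm_sum_le _ _).trans ?_
      refine Finset.sum_le_sum fun j _ => ?_
      rcases Nat.eq_zero_or_pos j with h0 | hj
      · subst h0; simp
      · have : ∀ i ∈ Finset.range N, (-1 : ℂ) ^ (j + 1) * (-(γ * ρ ^ i)) ^ j / (j : ℂ)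
            = ((-1 : ℂ) ^ (j + 1) * (-γ) ^ j / (j : ℂ)) * (ρ ^ j) ^ i := by
          intro i _
          rw [← neg_mul, mul_pow, ← pow_mul, ← pow_mul, mul_comm i j]; ring
        rw [Finset.sum_congr rfl this, ← Finset.mul_sum, norm_mul]
        have hc : ‖(-1 : ℂ) ^ (j + 1) * (-γ) ^ j / (j : ℂ)‖ ≤ 1 := by
          rw [norm_div, norm_mul, norm_pow, norm_pow, norm_neg, norm_one, one_pow, one_mul,
            norm_neg, Complex.norm_natCast]
          have : (1 : ℝ) ≤ j := by exact_mod_cast hj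
          apply div_le_one_of_le₀ _ (by linarith)
          exact (pow_le_one₀ (norm_nonneg _) (hγ.trans hβ.le)).trans this
        calc _ ≤ 1 * (2 / ‖ρ ^ j - 1‖) :=
              mul_le_mul hc (geom_bound hρ (hρ1 j hj) N) (norm_nonneg _) zero_le_one
          _ = _ := one_mul _
    have h3 : ∑ i ∈ Finset.range N, Real.log ‖1 - γ * ρ ^ i‖ =
        (∑ i ∈ Finset.range N, Complex.log (1 + -(γ * ρ ^ i))).re := by
      rw [Complex.re_sum]
      exact Finset.sum_congr rfl fun i _ => log_one_sub _
    rw [h3]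
    refine (Complex.abs_re_le_norm _).trans ?_
    have := norm_add_le (∑ i ∈ Finset.range N, Complex.log (1 + -(γ * ρ ^ i))
        - ∑ i ∈ Finset.range N, Complex.logTaylor (n + 1) (-(γ * ρ ^ i)))
        (∑ i ∈ Finset.range N, Complex.logTaylor (n + 1) (-(γ * ρ ^ i)))
    rw [sub_add_cancel] at this
    linarith
  refine ⟨Real.exp K0, Real.exp_pos _, fun N γ hγ => ?_⟩
  have hpos : ∀ i ∈ Finset.range N, 0 < ‖1 - γ * ρ ^ i‖ := by
    intro i _
    rw [norm_pos_iff]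
    intro h
    have : ‖γ * ρ ^ i‖ = 1 := by rw [← sub_eq_zero.mp h, norm_one]
    rw [norm_mul, norm_pow, hρ, one_pow, mul_one] at this
    linarith
  have he : ∏ j ∈ Finset.range N, ‖1 - γ * ρ ^ j‖ =
      Real.exp (∑ i ∈ Finset.range N, Real.log ‖1 - γ * ρ ^ i‖) := by
    rw [Real.exp_sum]
    exact Finset.prod_congr rfl fun i hi => (Real.exp_log (hpos i hi)).symm
  have := abs_le.mp (key N γ hγ)
  rw [he, ← Real.exp_sub, ← Real.exp_add]
  constructor <;> apply Real.exp_le_exp.mpr <;> linarith [this.1, this.2]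

end PartB

section PartB2

lemma norm_exp_sub_one' (t : ℝ) : ‖Complex.exp (2 * π * Complex.I * t) - 1‖ = 2 * |Real.sin (π * t)| := by
  have := Complex.norm_exp_I_mul_ofReal_sub_one (2 * π * t)
  rw [show Complex.I * ((2 * π * t : ℝ) : ℂ) = 2 * π * Complex.I * t by push_cast; ring] at this
  rw [this, Real.norm_eq_abs, abs_mul, show 2 * π * t / 2 = π * t by ring]
  norm_num

noncomputable def hfac (q r : ℕ) : ℝ := ((q : ℝ) * (r - 1) + 1) / (q * r)

lemma hfac_pos {q r : ℕ} (hq : 1 ≤ q) (hr : 1 ≤ r) : 0 < hfac q r := by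
  have h1 : (1 : ℝ) ≤ q := by exact_mod_cast hq
  have h2 : (1 : ℝ) ≤ r := by exact_mod_cast hr
  unfold hfac
  have : 0 ≤ (q : ℝ) * (r - 1) := mul_nonneg (by linarith) (by linarith)
  positivity

lemma hfac_eq {q r : ℕ} (hq : 1 ≤ q) (hr : 1 ≤ r) : hfac q r = 1 - (((q : ℝ) - 1) / q ^ 2) * q / r := by
  have h1 : (1 : ℝ) ≤ q := by exact_mod_cast hq
  have h2 : (1 : ℝ) ≤ r := by exact_mod_cast hr
  unfold hfac
  field_simp
  ring

lemma hfac_le_one {q r : ℕ} (hq : 1 ≤ q) (hr : 1 ≤ r) : hfac q r ≤ 1 := by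
  rw [hfac_eq hq hr]
  have h1 : (1 : ℝ) ≤ q := by exact_mod_cast hq
  have : 0 ≤ (q : ℝ) - 1 := by linarith
  have : 0 ≤ (((q : ℝ) - 1) / q ^ 2) * q / r := by positivity
  linarith

lemma sin_shift_lower {q r : ℕ} (hr : 1 ≤ r) (hrq : r < q) {e : ℝ}
    (he : |e| ≤ ((q : ℝ) - 1) / q ^ 2) :
    hfac q r * hfac q (q - r) * Real.sin (π * (r / q)) ≤ Real.sin (π * (r / q + e)) := by
  have hq : 1 ≤ q := by omega
  have hq1 : (1 : ℝ) ≤ q := by exact_mod_cast hq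
  have hr1 : (1 : ℝ) ≤ r := by exact_mod_cast hr
  have hrq1 : (r : ℝ) < q := by exact_mod_cast hrq
  have hcast : ((q - r : ℕ) : ℝ) = q - r := by push_cast [hrq.le]; ring
  have hsin : 0 ≤ Real.sin (π * (r / q)) := by
    apply Real.sin_nonneg_of_nonneg_of_le_pi (by positivity)
    have : (r : ℝ) / q ≤ 1 := div_le_one_of_le₀ hrq1.le (by linarith)
    nlinarith [Real.pi_pos]
  have hconc := strictConcaveOn_sin_Icc.concaveOn
  have hmem : π * (r / q) ∈ Set.Icc 0 π := by
    refine ⟨by positivity, ?_⟩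
    have : (r : ℝ) / q ≤ 1 := div_le_one_of_le₀ hrq1.le (by linarith)
    nlinarith [Real.pi_pos]
  have p1 := hfac_pos hq hr
  have p2 := hfac_pos (r := q - r) hq (by omega)
  have l1 := hfac_le_one hq hr
  have l2 := hfac_le_one (r := q - r) hq (by omega)
  rcases le_total 0 e with h | h
  · rw [abs_of_nonneg h] at he
    set t := e * q / (q - r) with ht
    have hqr : 0 < (q : ℝ) - r := by linarith
    have ht0 : 0 ≤ t := by positivity
    have ht1 : t ≤ 1 - hfac q (q - r) := by
      rw [hfac_eq hq (by omega), hcast, ht]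
      have : e * q / (q - r) ≤ ((q : ℝ) - 1) / q ^ 2 * q / (q - r) := by gcongr
      linarith
    have := hconc.2 hmem (show π ∈ Set.Icc 0 π from ⟨Real.pi_pos.le, le_rfl⟩)
      (show 0 ≤ 1 - t by linarith) ht0 (by ring)
    simp only [smul_eq_mul, Real.sin_pi, mul_zero, add_zero] at this
    rw [show (1 - t) * (π * (r / q)) + t * π = π * (r / q + e) by
      rw [ht]; field_simp; ring] at this
    refine le_trans ?_ this
    apply mul_le_mul_of_nonneg_right _ hsin
    nlinarith
  · rw [abs_of_nonpos h] at he
    set t := -e * q / r with ht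
    have ht0 : 0 ≤ t := by
      have : 0 ≤ -e := by linarith
      positivity
    have ht1 : t ≤ 1 - hfac q r := by
      rw [hfac_eq hq hr, ht]
      have : -e * q / r ≤ ((q : ℝ) - 1) / q ^ 2 * q / r := by gcongr
      linarith
    have := hconc.2 hmem (show (0:ℝ) ∈ Set.Icc 0 π from ⟨le_rfl, Real.pi_pos.le⟩)
      (show 0 ≤ 1 - t by linarith) ht0 (by ring)
    simp only [smul_eq_mul, Real.sin_zero, mul_zero, add_zero] at this
    rw [show (1 - t) * (π * (r / q)) = π * (r / q + e) by
      rw [ht]; field_simp; ring] at this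
    refine le_trans ?_ this
    apply mul_le_mul_of_nonneg_right _ hsin
    nlinarith

lemma hfac_prod {q : ℕ} (hq : 1 ≤ q) (m : ℕ) (hm : 1 ≤ m) :
    1 / ((q : ℝ) * m) ≤ ∏ r ∈ Finset.Ico 1 (m + 1), hfac q r := by
  have hq1 : (1 : ℝ) ≤ q := by exact_mod_cast hq
  induction m, hm using Nat.le_induction with
  | base => simp [hfac]
  | succ m hm ih =>
    rw [Finset.prod_Ico_succ_top (by omega)]
    have hm1 : (1 : ℝ) ≤ m := by exact_mod_cast hm
    have h1 : (m : ℝ) / (m + 1) ≤ hfac q (m + 1) := by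
      unfold hfac
      push_cast
      rw [div_le_div_iff₀ (by positivity) (by positivity)]
      nlinarith
    calc 1 / ((q : ℝ) * (m + 1 : ℕ)) = 1 / (q * m) * (m / (m + 1)) := by push_cast; field_simp
      _ ≤ _ := mul_le_mul ih h1 (by positivity) (le_trans (by positivity) ih)

lemma hfac_prod' {q : ℕ} (hq : 2 ≤ q) :
    1 / ((q : ℝ)) ^ 2 ≤ ∏ r ∈ Finset.Ico 1 q, hfac q r := by
  have hq1 : (2 : ℝ) ≤ q := by exact_mod_cast hq
  have := hfac_prod (q := q) (by omega) (q - 1) (by omega)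
  rw [show q - 1 + 1 = q by omega] at this
  refine le_trans ?_ this
  have : ((q - 1 : ℕ) : ℝ) ≤ q := by exact_mod_cast Nat.sub_le _ _
  have h2 : (1:ℝ) ≤ ((q - 1 : ℕ) : ℝ) := by exact_mod_cast (by omega : 1 ≤ q - 1)
  rw [sq]
  gcongr

lemma prod_sin_eq {q : ℕ} (hq : 2 ≤ q) :
    ∏ r ∈ Finset.Ico 1 q, (2 * Real.sin (π * ((r : ℝ) / q))) = q := by
  obtain ⟨n, rfl⟩ : ∃ n, q = n + 1 := ⟨q - 1, by omega⟩
  have hp := Complex.isPrimitiveRoot_exp (n + 1) (by omega)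
  have h := hp.prod_one_sub_pow_eq_order
  have h2 := congrArg norm h
  rw [norm_prod] at h2
  rw [Finset.prod_Ico_eq_prod_range]
  have h3 : ‖((n : ℂ) + 1)‖ = ((n + 1 : ℕ) : ℝ) := by
    rw [← Complex.norm_natCast]; push_cast; rfl
  rw [h3] at h2
  refine Eq.trans ?_ h2
  refine Finset.prod_congr (by simp) fun k hk => ?_
  rw [norm_sub_rev, ← Complex.exp_nat_mul]
  have hk' : k < n := by simpa using hk
  have h4 := norm_exp_sub_one' (((1 + k : ℕ) : ℝ) / ((n + 1 : ℕ) : ℝ))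
  rw [show (((k + 1 : ℕ) : ℂ) * (2 * π * Complex.I / ((n + 1 : ℕ) : ℂ))) =
    2 * π * Complex.I * ((((1 + k : ℕ) : ℝ) / ((n + 1 : ℕ) : ℝ) : ℝ) : ℂ) by push_cast; ring, h4]
  rw [abs_of_nonneg]
  apply Real.sin_nonneg_of_nonneg_of_le_pi (by positivity)
  have : ((1 + k : ℕ) : ℝ) / ((n + 1 : ℕ) : ℝ) ≤ 1 :=
    div_le_one_of_le₀ (by exact_mod_cast (by omega)) (by positivity)
  nlinarith [Real.pi_pos]

lemma node_sep {b : ℝ} {q : ℕ} {p : ℤ} (hq : 2 ≤ q) (hpq : IsCoprime p (q : ℤ))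
    (hb : |b - p / q| ≤ 1 / (q : ℝ) ^ 2) (j : ℕ) (hj : j < q) :
    1 / (q : ℝ) ^ 3 ≤ ∏ i ∈ (Finset.range q).erase j,
      ‖Complex.exp (2 * π * Complex.I * b) ^ j - Complex.exp (2 * π * Complex.I * b) ^ i‖ := by
  have hq0 : (0 : ℤ) < q := by exact_mod_cast (by omega : 0 < q)
  have hqr : (2 : ℝ) ≤ q := by exact_mod_cast hq
  set R : ℕ → ℕ := fun i => ((((j : ℤ) - i) * p) % q).toNat with hR
  have hRcast : ∀ i, ((R i : ℕ) : ℤ) = (((j : ℤ) - i) * p) % q := fun i =>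
    Int.toNat_of_nonneg (Int.emod_nonneg _ hq0.ne')
  have hRlt : ∀ i, R i < q := by
    intro i
    have := Int.emod_lt_of_pos (((j : ℤ) - i) * p) hq0
    rw [← hRcast] at this
    exact_mod_cast this
  have hdvd : ∀ i < q, ∀ i' < q, (q : ℤ) ∣ ((i : ℤ) - i') → i = i' := by
    intro i hi i' hi' h
    have h1 : |(i : ℤ) - i'| < q := by rw [abs_lt]; omega
    have := Int.eq_zero_of_abs_lt_dvd h h1
    omega
  have hinj : Set.InjOn R ((Finset.range q).erase j : Finset ℕ) := by
    intro i hi i' hi' h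
    have hi1 : i < q := by simpa using (Finset.mem_erase.mp hi).2
    have hi2 : i' < q := by simpa using (Finset.mem_erase.mp hi').2
    have h1 : (((j : ℤ) - i) * p) % q = (((j : ℤ) - i') * p) % q := by
      rw [← hRcast, ← hRcast, h]
    have h2 : (q : ℤ) ∣ (((j : ℤ) - i) * p) - (((j : ℤ) - i') * p) :=
      Int.ModEq.dvd (n := (q : ℤ)) h1.symm
    rw [← sub_mul] at h2
    have h3 := hpq.symm.dvd_of_dvd_mul_right h2
    rw [show (j : ℤ) - i - (j - i') = i' - i by ring] at h3
    exact (hdvd i' hi2 i hi1 h3).symm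
  have hRpos : ∀ i ∈ (Finset.range q).erase j, 1 ≤ R i := by
    intro i hi
    have hi1 : i < q := by simpa using (Finset.mem_erase.mp hi).2
    by_contra h
    have h0 : R i = 0 := by omega
    have h1 := hRcast i
    rw [h0] at h1
    have h2 : (q : ℤ) ∣ ((j : ℤ) - i) * p := Int.dvd_of_emod_eq_zero (by rw [← h1]; rfl)
    have h3 := hpq.symm.dvd_of_dvd_mul_right h2
    exact (Finset.mem_erase.mp hi).1 (hdvd j hj i hi1 h3).symm
  have himg : ((Finset.range q).erase j).image R = Finset.Ico 1 q := by
    apply Finset.eq_of_subset_of_card_le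
    · intro r hr
      obtain ⟨i, hi, rfl⟩ := Finset.mem_image.mp hr
      exact Finset.mem_Ico.mpr ⟨hRpos i hi, hRlt i⟩
    · rw [Finset.card_image_of_injOn hinj, Finset.card_erase_of_mem (by simpa using hj)]
      simp
  set G : ℕ → ℝ := fun r => hfac q r * hfac q (q - r) * (2 * Real.sin (π * ((r : ℝ) / q))) with hG
  have hterm : ∀ i ∈ (Finset.range q).erase j, G (R i) ≤
      ‖Complex.exp (2 * π * Complex.I * b) ^ j - Complex.exp (2 * π * Complex.I * b) ^ i‖ := by
    intro i hi
    have hi1 : i < q := by simpa using (Finset.mem_erase.mp hi).2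
    set e : ℝ := ((j : ℝ) - i) * (b - p / q) with he
    have he1 : |e| ≤ ((q : ℝ) - 1) / q ^ 2 := by
      rw [he, abs_mul, div_eq_mul_one_div ((q : ℝ) - 1)]
      refine mul_le_mul ?_ hb (abs_nonneg _) (by linarith)
      have h1 : (i : ℝ) + 1 ≤ q := by exact_mod_cast hi1
      have h2 : (j : ℝ) + 1 ≤ q := by exact_mod_cast hj
      have h3 : (0 : ℝ) ≤ i := Nat.cast_nonneg _
      have h4 : (0 : ℝ) ≤ j := Nat.cast_nonneg _
      rw [abs_le]; constructor <;> linarith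
    have h1 := sin_shift_lower (hRpos i hi) (hRlt i) he1
    obtain ⟨k, hk⟩ : ∃ k : ℤ, ((j : ℝ) - i) * b = k + (((R i : ℕ) : ℝ) / q + e) := by
      refine ⟨(((j : ℤ) - i) * p) / q, ?_⟩
      have h5 : (((j : ℝ) - i) * p) = ((R i : ℕ) : ℝ) + q * (((((j : ℤ) - i) * p) / q : ℤ) : ℝ) := by
        have := Int.emod_add_mul_ediv (((j : ℤ) - i) * p) q
        rw [← hRcast] at this
        exact_mod_cast this.symm
      rw [he]
      have hq' : (q : ℝ) ≠ 0 := by linarith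
      field_simp
      linarith
    have h2 : ‖Complex.exp (2 * π * Complex.I * b) ^ j - Complex.exp (2 * π * Complex.I * b) ^ i‖
        = 2 * |Real.sin (π * (((R i : ℕ) : ℝ) / q + e))| := by
      rw [← norm_exp_sub_one']
      have h6 : Complex.exp (2 * π * Complex.I * ((((R i : ℕ) : ℝ) / q + e : ℝ) : ℂ)) =
          Complex.exp (2 * π * Complex.I * b) ^ j / Complex.exp (2 * π * Complex.I * b) ^ i := by
        rw [← Complex.exp_nat_mul, ← Complex.exp_nat_mul, ← Complex.exp_sub]
        rw [Complex.exp_eq_exp_iff_exists_int]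
        refine ⟨-k, ?_⟩
        have : ((((R i : ℕ) : ℝ) / q + e : ℝ) : ℂ) = ((j : ℂ) - i) * b - k := by
          have : (((R i : ℕ) : ℝ) / q + e : ℝ) = ((j : ℝ) - i) * b - k := by linarith
          rw [this]; push_cast; ring
        rw [this]; push_cast; ring
      rw [h6]
      have hu : ‖Complex.exp (2 * π * Complex.I * b) ^ i‖ = 1 := by
        rw [norm_pow, show (2 * π * Complex.I * b : ℂ) = ((2 * π * b : ℝ) : ℂ) * Complex.I by push_cast; ring,
          Complex.norm_exp_ofReal_mul_I, one_pow]
      have hne : Complex.exp (2 * π * Complex.I * b) ^ i ≠ 0 := pow_ne_zero _ (Complex.exp_ne_zero _)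
      rw [div_sub_one hne, norm_div, hu, div_one]
    rw [h2, hG]
    have := le_abs_self (Real.sin (π * (((R i : ℕ) : ℝ) / q + e)))
    simp only
    nlinarith
  have hGpos : ∀ i ∈ (Finset.range q).erase j, 0 ≤ G (R i) := by
    intro i hi
    have hr := hRpos i hi
    have hrq := hRlt i
    have p1 := hfac_pos (q := q) (by omega) hr
    have p2 := hfac_pos (q := q) (r := q - R i) (by omega) (by omega)
    have : 0 ≤ Real.sin (π * ((R i : ℝ) / q)) := by
      apply Real.sin_nonneg_of_nonneg_of_le_pi (by positivity)
      have : ((R i : ℕ) : ℝ) / q ≤ 1 :=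
        div_le_one_of_le₀ (by exact_mod_cast hrq.le) (by linarith)
      nlinarith [Real.pi_pos]
    rw [hG]; simp only
    positivity
  refine le_trans ?_ (Finset.prod_le_prod hGpos hterm)
  rw [← Finset.prod_image (f := G) (g := R) hinj, himg, hG]
  simp only
  rw [Finset.prod_mul_distrib, Finset.prod_mul_distrib, prod_sin_eq hq]
  have hrefl : ∏ r ∈ Finset.Ico 1 q, hfac q (q - r) = ∏ r ∈ Finset.Ico 1 q, hfac q r := by
    have := Finset.prod_Ico_reflect (fun r => hfac q r) 1 (m := q) (n := q) (by omega)
    simpa using this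
  rw [hrefl]
  have h := hfac_prod' hq
  calc 1 / (q : ℝ) ^ 3 = 1 / (q : ℝ) ^ 2 * (1 / (q : ℝ) ^ 2) * q := by field_simp
    _ ≤ _ := by
      have h0 : (0:ℝ) ≤ 1 / (q : ℝ) ^ 2 := by positivity
      have h1 := mul_le_mul h h h0 (h0.trans h)
      gcongr

lemma exists_good_q {b : ℝ} (hb : Irrational b) (n : ℕ) : ∃ q : ℕ, n ≤ q ∧ 2 ≤ q ∧ ∃ p : ℤ,
    IsCoprime p (q : ℤ) ∧ |b - p / q| ≤ 1 / (q : ℝ) ^ 2 := by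
  have hinf := Real.infinite_rat_abs_sub_lt_one_div_den_sq_of_irrational hb
  by_contra hcon
  push Not at hcon
  apply hinf
  set M := max n 2 with hM
  -- finitely many rationals with den ≤ M and bounded
  have hfin : Set.Finite ((fun x : ℤ × ℕ => (x.1 : ℚ) / x.2) ''
      (Set.Icc (-⌈(|b| + 1) * M⌉) ⌈(|b| + 1) * M⌉ ×ˢ Set.Iic M)) :=
    ((Set.finite_Icc _ _).prod (Set.finite_Iic _)).image _
  refine hfin.subset ?_
  intro x hx
  have hden : x.den ≤ M := by
    by_contra h
    push Not at h
    have h1 : n ≤ x.den := (le_max_left _ _).trans h.le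
    have h2 : 2 ≤ x.den := (le_max_right _ _).trans h.le
    have h3 := hcon x.den h1 h2 x.num (by
      rw [Int.isCoprime_iff_gcd_eq_one]; exact x.reduced)
    have hx' : |b - (x : ℝ)| < 1 / (x.den : ℝ) ^ 2 := hx
    rw [Rat.cast_def] at hx'
    linarith
  refine ⟨(x.num, x.den), ⟨?_, hden⟩, Rat.num_div_den x⟩
  have hx' : |b - (x : ℝ)| < 1 / (x.den : ℝ) ^ 2 := hx
  have hd1 : (1 : ℝ) ≤ x.den := by exact_mod_cast x.den_pos
  have h1 : (1 : ℝ) / (x.den : ℝ) ^ 2 ≤ 1 := by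
    rw [div_le_one (by positivity)]; nlinarith
  have h2 : |(x : ℝ)| ≤ |b| + 1 := by
    have := abs_sub_abs_le_abs_sub (x : ℝ) b
    rw [abs_sub_comm] at this; linarith
  have h3 : (x.num : ℝ) = x * x.den := by
    rw [Rat.cast_def]; field_simp
  have h4 : |(x.num : ℝ)| ≤ (|b| + 1) * M := by
    rw [h3, abs_mul, Nat.abs_cast]
    have : (x.den : ℝ) ≤ M := by exact_mod_cast hden
    gcongr
  have h5 := abs_le.mp (h4.trans (Int.le_ceil _))
  simp only [Set.mem_Icc]
  constructor
  · exact_mod_cast h5.1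
  · exact_mod_cast h5.2

end PartB2

section PartD
attribute [local instance] Matrix.linftyOpNormedAddCommGroup Matrix.linftyOpNormedSpace
  Matrix.linftyOpNormedRing Matrix.linftyOpNormedAlgebra

lemma nodeprod_big {ρ : ℂ} (hρ : ‖ρ‖ = 1) (hρ1 : ∀ m : ℕ, 1 ≤ m → ρ ^ m ≠ 1)
    {R κ : ℝ} (hR : 1 < R) (hκ : 0 < κ) : ∃ K : ℝ, 0 < K ∧ ∀ (N : ℕ) (ξ z : ℂ), ‖ξ‖ = 1 → ‖z‖ = R →
      Real.exp (N * Real.log R - κ * N) / K ≤ ‖∏ j ∈ Finset.range N, (z - ξ * ρ ^ j)‖ ∧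
      ‖∏ j ∈ Finset.range N, (z - ξ * ρ ^ j)‖ ≤ K * Real.exp (N * Real.log R + κ * N) := by
  obtain ⟨K, hK, h⟩ := prod_rot_bound hρ hρ1 (β0 := R⁻¹) (by positivity) (inv_lt_one_of_one_lt₀ hR) hκ
  refine ⟨K, hK, fun N ξ z hξ hz => ?_⟩
  have hz0 : z ≠ 0 := by rw [← norm_pos_iff, hz]; linarith
  obtain ⟨h1, h2⟩ := h N (ξ / z) (by rw [norm_div, hξ, hz, one_div])
  have he : ‖∏ j ∈ Finset.range N, (z - ξ * ρ ^ j)‖ =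
      Real.exp (N * Real.log R) * ∏ j ∈ Finset.range N, ‖1 - ξ / z * ρ ^ j‖ := by
    rw [norm_prod, Real.exp_nat_mul, Real.exp_log (by linarith)]
    have : ∀ j ∈ Finset.range N, ‖z - ξ * ρ ^ j‖ = R * ‖1 - ξ / z * ρ ^ j‖ := by
      intro j _
      rw [← hz, ← norm_mul]; congr 1; field_simp
    rw [Finset.prod_congr rfl this, Finset.prod_mul_distrib, Finset.prod_const, Finset.card_range]
  rw [he, Real.exp_add, sub_eq_add_neg, Real.exp_add, ← neg_mul, mul_div_assoc]
  constructor
  · gcongr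
  · calc _ ≤ Real.exp (N * Real.log R) * (K * Real.exp (κ * N)) := by gcongr
      _ = _ := by ring

lemma nodeprod_small {ρ : ℂ} (hρ : ‖ρ‖ = 1) (hρ1 : ∀ m : ℕ, 1 ≤ m → ρ ^ m ≠ 1)
    {a κ : ℝ} (ha0 : 0 < a) (ha : a < 1) (hκ : 0 < κ) :
    ∃ K : ℝ, 0 < K ∧ ∀ (N : ℕ) (ξ z : ℂ), ‖ξ‖ = 1 → ‖z‖ = a →
      Real.exp (- κ * N) / K ≤ ‖∏ j ∈ Finset.range N, (z - ξ * ρ ^ j)‖ := by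
  have hρ0 : ρ ≠ 0 := by rw [← norm_pos_iff, hρ]; norm_num
  obtain ⟨K, hK, h⟩ := prod_rot_bound (ρ := ρ⁻¹) (by rw [norm_inv, hρ, inv_one])
    (fun m hm => by
      rw [inv_pow]; intro h; exact hρ1 m hm (inv_eq_one.mp h)) ha0.le ha hκ
  refine ⟨K, hK, fun N ξ z hξ hz => ?_⟩
  have hξ0 : ξ ≠ 0 := by rw [← norm_pos_iff, hξ]; norm_num
  obtain ⟨h1, h2⟩ := h N (z / ξ) (by rw [norm_div, hξ, hz, div_one])
  refine h1.trans (le_of_eq ?_)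
  rw [norm_prod]
  refine Finset.prod_congr rfl fun j _ => ?_
  have : z - ξ * ρ ^ j = -(ξ * ρ ^ j) * (1 - z / ξ * ρ⁻¹ ^ j) := by
    have := pow_ne_zero j hρ0
    rw [inv_pow]
    field_simp
    ring
  rw [this, norm_mul, norm_neg, norm_mul, norm_pow, hρ, hξ, one_pow, one_mul, one_mul]

lemma norm_sub_le_scale {z w : ℂ} (hz : ‖z‖ = 1) (hw : ‖w‖ = 1) {R : ℝ} (hR : 1 ≤ R) :
    ‖z - w‖ ≤ ‖(R : ℂ) * z - w‖ := by
  have h1 : ‖z - w‖ ^ 2 = 2 - 2 * (z * (starRingEnd ℂ) w).re := by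
    rw [Complex.sq_norm, Complex.normSq_sub, ← Complex.sq_norm, ← Complex.sq_norm, hz, hw]; ring
  have h2 : ‖(R : ℂ) * z - w‖ ^ 2 = R ^ 2 + 1 - 2 * R * (z * (starRingEnd ℂ) w).re := by
    rw [Complex.sq_norm, Complex.normSq_sub, ← Complex.sq_norm, ← Complex.sq_norm, norm_mul, hz, hw,
      mul_assoc, Complex.re_ofReal_mul, Complex.norm_real, Real.norm_eq_abs, mul_one, sq_abs]
    ring
  have h3 : (z * (starRingEnd ℂ) w).re ≤ 1 := by
    refine (Complex.re_le_norm _).trans ?_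
    rw [norm_mul, hz, RCLike.norm_conj, hw, one_mul]
  refine le_of_sq_le_sq ?_ (norm_nonneg _) 
  rw [h1, h2]
  nlinarith

lemma nodeprod_one {ρ : ℂ} (hρ : ‖ρ‖ = 1) (hρ1 : ∀ m : ℕ, 1 ≤ m → ρ ^ m ≠ 1)
    {κ : ℝ} (hκ : 0 < κ) : ∃ K : ℝ, 0 < K ∧ ∀ (N : ℕ) (ξ z : ℂ), ‖ξ‖ = 1 → ‖z‖ = 1 →
      ‖∏ j ∈ Finset.range N, (z - ξ * ρ ^ j)‖ ≤ K * Real.exp (2 * κ * N) ∧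
      ∀ j < N, ‖∏ i ∈ (Finset.range N).erase j, (z - ξ * ρ ^ i)‖ ≤ K * Real.exp (2 * κ * N) := by
  have hR : 1 < Real.exp κ := by simpa using hκ
  obtain ⟨K, hK, h⟩ := nodeprod_big hρ hρ1 hR hκ
  have hg : 0 < Real.exp κ - 1 := by linarith
  refine ⟨K + K / (Real.exp κ - 1), by positivity, fun N ξ z hξ hz => ?_⟩
  have hz' : ‖((Real.exp κ : ℝ) : ℂ) * z‖ = Real.exp κ := by
    rw [norm_mul, hz, mul_one, Complex.norm_real, Real.norm_eq_abs, Real.abs_exp]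
  have h1 := (h N ξ _ hξ hz').2
  rw [Real.log_exp, show (N : ℝ) * κ + κ * N = 2 * κ * N by ring, norm_prod] at h1
  have hw : ∀ i, ‖ξ * ρ ^ i‖ = 1 := fun i => by rw [norm_rot hρ, hξ]
  constructor
  · rw [norm_prod]
    calc _ ≤ ∏ j ∈ Finset.range N, ‖((Real.exp κ : ℝ) : ℂ) * z - ξ * ρ ^ j‖ :=
          Finset.prod_le_prod (fun _ _ => norm_nonneg _)
            fun i _ => norm_sub_le_scale hz (hw i) hR.le
      _ ≤ K * Real.exp (2 * κ * N) := h1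
      _ ≤ _ := by
        gcongr
        have : 0 < K / (Real.exp κ - 1) := by positivity
        linarith
  · intro j hj
    rw [norm_prod]
    rw [← Finset.mul_prod_erase _ _ (Finset.mem_range.mpr hj)] at h1
    have h2 : Real.exp κ - 1 ≤ ‖((Real.exp κ : ℝ) : ℂ) * z - ξ * ρ ^ j‖ := by
      have := norm_sub_norm_le (((Real.exp κ : ℝ) : ℂ) * z) (ξ * ρ ^ j)
      rwa [hz', hw] at this
    set P := ∏ i ∈ (Finset.range N).erase j, ‖((Real.exp κ : ℝ) : ℂ) * z - ξ * ρ ^ i‖ with hP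
    have hP0 : 0 ≤ P := Finset.prod_nonneg fun _ _ => norm_nonneg _
    calc _ ≤ P :=
          Finset.prod_le_prod (fun _ _ => norm_nonneg _)
            fun i _ => norm_sub_le_scale hz (hw i) hR.le
      _ ≤ K / (Real.exp κ - 1) * Real.exp (2 * κ * N) := by
        rw [div_mul_eq_mul_div, le_div_iff₀ hg]
        nlinarith
      _ ≤ _ := by
        gcongr
        linarith

lemma cp_differentiableOn {F : ℂ → M2} {ρ : ℂ} (hρ : ‖ρ‖ = 1) {a R : ℝ}
    (hF : ∀ i j, DifferentiableOn ℂ (fun X => F X i j) (Ann a R)) (k : ℕ) :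
    ∀ i j, DifferentiableOn ℂ (fun X => cp F ρ k X i j) (Ann a R) := by
  induction k with
  | zero => intro i j; simp only [cp_zero]; fun_prop
  | succ k ih =>
    intro i j
    simp only [cp_succ, Matrix.mul_apply, Fin.sum_univ_two]
    have : ∀ l, DifferentiableOn ℂ (fun X => F (X * ρ ^ k) i l) (Ann a R) := by
      intro l
      refine (hF i l).comp (f := fun X => X * ρ ^ k) (by fun_prop) ?_
      intro X hX
      have := norm_rot hρ X k
      exact ⟨by rw [this]; exact hX.1, by rw [this]; exact hX.2⟩
    exact ((this 0).mul (ih 0 j)).add ((this 1).mul (ih 1 j))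

end PartD

section PartE
attribute [local instance] Matrix.linftyOpNormedAddCommGroup Matrix.linftyOpNormedSpace
  Matrix.linftyOpNormedRing Matrix.linftyOpNormedAlgebra

lemma rho_norm (b : ℝ) : ‖Complex.exp (2 * π * Complex.I * b)‖ = 1 := by
  rw [show (2 * π * Complex.I * b : ℂ) = ((2 * π * b : ℝ) : ℂ) * Complex.I by push_cast; ring,
          Complex.norm_exp_ofReal_mul_I]

lemma rho_pow_ne {b : ℝ} (hb : Irrational b) (m : ℕ) (hm : 1 ≤ m) :
    Complex.exp (2 * π * Complex.I * b) ^ m ≠ 1 := by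
  intro h
  rw [← Complex.exp_nat_mul, Complex.exp_eq_one_iff] at h
  obtain ⟨n, hn⟩ := h
  have h1 : ((m : ℂ) * b - n) * (2 * π * Complex.I) = 0 := by rw [sub_mul, ← hn]; ring
  have h2 : ((m : ℂ) * b - n) = 0 := by
    rcases mul_eq_zero.mp h1 with h | h
    · exact h
    · exact absurd h Complex.two_pi_I_ne_zero
  have h3 : (m : ℝ) * b - n = 0 := by exact_mod_cast h2
  have hm' : (m : ℝ) ≠ 0 := by positivity
  apply hb
  refine ⟨(n : ℚ) / m, ?_⟩
  push_cast
  field_simp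
  linarith

lemma pow4_le_exp {κ : ℝ} (hκ : 0 < κ) (k : ℕ) : (k : ℝ) ^ 4 ≤ 24 / κ ^ 4 * Real.exp (κ * k) := by
  have := Real.pow_div_factorial_le_exp (κ * k) (by positivity) 4
  rw [mul_pow] at this
  norm_num [Nat.factorial] at this
  rw [div_mul_eq_mul_div, le_div_iff₀ (by positivity)]
  linarith

lemma exp_quot_le {C K x y w v : ℝ} (hC : 0 ≤ C) (hK : 0 < K) (h : x + y - w ≤ v) :
    C * Real.exp x * Real.exp y / (Real.exp w / K) ≤ C * K * Real.exp v := by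
  have : C * Real.exp x * Real.exp y / (Real.exp w / K) = C * K * Real.exp (x + y - w) := by
    rw [Real.exp_sub, Real.exp_add]; field_simp
  rw [this]
  gcongr

set_option maxHeartbeats 1000000 in
lemma stepI_bound {F : ℂ → M2} {b : ℝ} (hb : Irrational b) {ρ : ℂ}
    (hρ : ρ = Complex.exp (2 * π * Complex.I * b)) {r1 r f τ κ : ℝ}
    (hr1 : 0 < r1) (hr : r1 < r) (hr' : r < 1)
    (hF : ∀ i j, DifferentiableOn ℂ (fun X => F X i j) (Ann r1 r⁻¹))
    (hκ : 0 < κ) (hκ1 : 10 * κ ≤ τ / 4 * Real.log (r⁻¹ / r)) (hκ2 : 10 * κ ≤ τ / 4 * Real.log (r / r1))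
    (hU1 : UB F ρ r⁻¹ (f + κ)) (hU2 : UB F ρ r1 (f + (1 - τ) * Real.log (r / r1) + κ)) :
    ∃ C : ℝ, ∀ (k N s : ℕ) (p : ℤ), 2 ≤ N → N ≤ k → IsCoprime p (N : ℤ) →
      |b - p / N| ≤ 1 / (N : ℝ) ^ 2 → (s : ℝ) + τ / 4 * k ≤ N → (1 - τ) * k + τ / 4 * k ≤ s →
      ∀ X0 : ℂ, ‖X0‖ = r → (∀ j < N, ‖cp F ρ k (X0 * ρ ^ j)‖ ≤ Real.exp ((f - 10 * κ) * k)) →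
      ∀ X : ℂ, ‖X‖ = r → ‖cp F ρ k X‖ ≤ C * Real.exp ((f - 6 * κ) * k) := by
  have hρn : ‖ρ‖ = 1 := by rw [hρ]; exact rho_norm b
  have hρ1 : ∀ m : ℕ, 1 ≤ m → ρ ^ m ≠ 1 := by rw [hρ]; exact rho_pow_ne hb
  have hr0 : 0 < r := hr1.trans hr
  have hrinv : 1 < r⁻¹ := (one_lt_inv₀ hr0).mpr hr'
  set R := r⁻¹ / r with hRdef
  set a := r1 / r with hadef
  have ha0 : 0 < a := by positivity
  have ha1 : a < 1 := by rw [hadef, div_lt_one hr0]; exact hr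
  have hR1 : 1 < R := by rw [hRdef, lt_div_iff₀ hr0]; linarith
  have hla : Real.log a = - Real.log (r / r1) := by
    rw [← Real.log_inv, inv_div]
  set la := Real.log (r / r1) with hlad
  set lR := Real.log R with hlRd
  have hla0 : 0 < la := Real.log_pos (by rw [lt_div_iff₀ hr1]; linarith)
  have hlR0 : 0 < lR := Real.log_pos hR1
  obtain ⟨C1, hC1, hU1⟩ := hU1
  obtain ⟨C2, hC2, hU2⟩ := hU2
  obtain ⟨K1, hK1, hn1⟩ := nodeprod_big hρn hρ1 hR1 hκ
  obtain ⟨K2, hK2, hn2⟩ := nodeprod_small hρn hρ1 ha0 ha1 hκ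
  obtain ⟨K3, hK3, hn3⟩ := nodeprod_one hρn hρ1 hκ
  set g := min (R - 1) (1 - a) with hg
  have hg0 : 0 < g := lt_min (by linarith) (by linarith)
  set C5 := 24 / κ ^ 4 with hC5
  have hC50 : 0 < C5 := by positivity
  refine ⟨2 * (K3 * (C1 * K1 + C2 * K2 + C5 / g + C5)), ?_⟩
  intro k N s p hN hNk hp hbp hsN hsk X0 hX0 hX0j X hX
  have hNk' : (N : ℝ) ≤ k := by exact_mod_cast hNk
  have hk0 : (0 : ℝ) ≤ k := Nat.cast_nonneg k
  have hN0 : (0 : ℝ) < N := by exact_mod_cast (by omega : 0 < N)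
  have hr0c : (r : ℂ) ≠ 0 := by exact_mod_cast hr0.ne'
  have hrn : ‖(r : ℂ)‖ = r := by simp [abs_of_pos hr0]
  set ξ := X0 / r with hξd
  have hξ : ‖ξ‖ = 1 := by rw [hξd, norm_div, hX0, hrn, div_self hr0.ne']
  have hrξ : (r : ℂ) * ξ = X0 := by rw [hξd]; field_simp
  set T := (C1 * K1 + C2 * K2) * Real.exp ((f - 8 * κ) * k) with hT
  have hmain : ∀ i j, ‖cp F ρ k X i j‖ ≤ K3 * (C1 * K1 + C2 * K2 + C5 / g + C5) * Real.exp ((f - 6 * κ) * k) := by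
    intro i j
    have hX' : ‖X / r‖ = 1 := by rw [norm_div, hX, hrn, div_self hr0.ne']
    have hdiff : DifferentiableOn ℂ (fun y : ℂ => cp F ρ k (r * y) i j) (Ann a R) := by
      refine (cp_differentiableOn hρn hF k i j).comp (f := fun y : ℂ => (r : ℂ) * y) (by fun_prop) ?_
      intro y hy
      constructor
      · rw [norm_mul, hrn]
        have := hy.1
        rw [hadef, div_le_iff₀ hr0] at this; linarith
      · rw [norm_mul, hrn]
        have := hy.2
        rw [hRdef, le_div_iff₀ hr0] at this; linarith
    have hI := interp (F := fun y : ℂ => cp F ρ k (r * y) i j) ha0 ha1 hR1 (N := N)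
      (y := fun j => ξ * ρ ^ j) s
      (MR := C1 * Real.exp ((f + κ) * k))
      (Ma := C2 * Real.exp ((f + (1 - τ) * la + κ) * k)) (m := Real.exp ((f - 10 * κ) * k))
      (bR := Real.exp (N * lR - κ * N) / K1) (ba := Real.exp (- κ * N) / K2)
      (d := 1 / (N : ℝ) ^ 3) (Q := K3 * Real.exp (2 * κ * N)) (g := g) (T := T)
      hdiff
      (fun z hz => (M2_entry_le _ _ _).trans (hU1 k _ (by
        rw [norm_mul, hrn, hz, hRdef]; field_simp)))
      (fun z hz => (M2_entry_le _ _ _).trans (hU2 k _ (by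
        rw [norm_mul, hrn, hz, hadef]; field_simp)))
      (fun j _ => by rw [norm_rot hρn, hξ])
      (fun j hj => (M2_entry_le _ _ _).trans (by
        have := hX0j j hj
        rwa [← mul_assoc, hrξ]))
      (Real.exp_pos _).le (by positivity) (by positivity) (by positivity)
      (fun z hz => (hn1 N ξ z hξ hz).1)
      (fun z hz => hn2 N ξ z hξ hz)
      (fun j hj => by
        rw [norm_prod]
        have := node_sep hN hp hbp j hj
        rw [← hρ] at this
        refine this.trans (le_of_eq (Finset.prod_congr rfl fun i _ => ?_))
        rw [← mul_sub, norm_mul, hξ, one_mul])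
      (fun z hz => (hn3 N ξ z hξ hz).1)
      (fun z hz => (hn3 N ξ z hξ hz).2)
      hg0 (min_le_left _ _) (min_le_right _ _)
      (by
        have e1 : R ^ s = Real.exp (s * lR) := by
          rw [Real.exp_nat_mul, Real.exp_log (by linarith)]
        rw [e1, hT]
        refine (exp_quot_le (v := (f - 8 * κ) * k) hC1.le hK1 ?_).trans ?_
        · have t1 : κ * N ≤ κ * k := by gcongr
          have t2 : (τ / 4 * k) * lR ≤ (N - s) * lR := by gcongr; linarith
          have t3 : (10 * κ) * k ≤ (τ / 4 * lR) * k := by gcongr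
          linarith only [t1, t2, t3]
        · gcongr
          have : 0 < C2 * K2 := by positivity
          linarith only [this])
      (by
        have e1 : a ^ s = Real.exp (s * (-la)) := by
          rw [Real.exp_nat_mul, ← hla, Real.exp_log ha0]
        rw [e1, hT]
        refine (exp_quot_le (v := (f - 8 * κ) * k) hC2.le hK2 ?_).trans ?_
        · have t1 : κ * N ≤ κ * k := by gcongr
          have t2 : ((1 - τ) * k + τ / 4 * k) * la ≤ s * la := by gcongr
          have t3 : (10 * κ) * k ≤ (τ / 4 * la) * k := by gcongr
          linarith only [t1, t2, t3]
        · gcongr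
          have : 0 < C1 * K1 := by positivity
          linarith only [this])
      (X / r) hX'
    simp only [show (r : ℂ) * (X / r) = X by field_simp] at hI
    refine hI.trans ?_
    set m := Real.exp ((f - 10 * κ) * k) with hm
    have hm0 : 0 < m := Real.exp_pos _
    have q1 : N * m / (1 / (N : ℝ) ^ 3 * g) = (N : ℝ) ^ 4 * m / g := by field_simp
    have q2 : N * m * (K3 * Real.exp (2 * κ * N)) / (1 / (N : ℝ) ^ 3) =
      K3 * Real.exp (2 * κ * N) * ((N : ℝ) ^ 4 * m) := by field_simp
    rw [q1, q2]
    have q3 : (N : ℝ) ^ 4 * m ≤ C5 * Real.exp ((f - 8 * κ) * k) := by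
      calc (N : ℝ) ^ 4 * m ≤ (k : ℝ) ^ 4 * m := by gcongr
        _ ≤ C5 * Real.exp (κ * k) * m := by gcongr; exact pow4_le_exp hκ k
        _ = C5 * Real.exp ((f - 9 * κ) * k) := by
          rw [hm, mul_assoc, ← Real.exp_add]; congr 2; ring
        _ ≤ _ := by gcongr; linarith
    have q4 : Real.exp (2 * κ * N) ≤ Real.exp (2 * κ * k) := by gcongr
    calc K3 * Real.exp (2 * κ * N) * (T + (N : ℝ) ^ 4 * m / g) + K3 * Real.exp (2 * κ * N) * ((N : ℝ) ^ 4 * m)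
        = K3 * Real.exp (2 * κ * N) * (T + (N : ℝ) ^ 4 * m / g + (N : ℝ) ^ 4 * m) := by ring
      _ ≤ K3 * Real.exp (2 * κ * k) * (T + C5 * Real.exp ((f - 8 * κ) * k) / g + C5 * Real.exp ((f - 8 * κ) * k)) := by
        have : 0 ≤ T := by positivity
        gcongr
      _ = K3 * (C1 * K1 + C2 * K2 + C5 / g + C5) * (Real.exp (2 * κ * k) * Real.exp ((f - 8 * κ) * k)) := by
        rw [hT]; ring
      _ = _ := by rw [← Real.exp_add]; congr 2; ring
  have := M2_norm_le hmain
  rw [← mul_assoc] at this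
  exact this

lemma good_shift {F : ℂ → M2} {b : ℝ} (hb : Irrational b) {ρ : ℂ}
    (hρ : ρ = Complex.exp (2 * π * Complex.I * b)) {r1 r f τ κ B : ℝ}
    (hr1 : 0 < r1) (hr : r1 < r) (hr' : r < 1)
    (hF : ∀ i j, DifferentiableOn ℂ (fun X => F X i j) (Ann r1 r⁻¹))
    (hB : ∀ X : ℂ, ‖X‖ = r → ‖F X‖ ≤ B)
    (hτ : 0 < τ) (hτ1 : τ < 1)
    (hκ : 0 < κ) (hκ1 : 10 * κ ≤ τ / 4 * Real.log (r⁻¹ / r)) (hκ2 : 10 * κ ≤ τ / 4 * Real.log (r / r1))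
    (hU1 : UB F ρ r⁻¹ (f + κ)) (hU2 : UB F ρ r1 (f + (1 - τ) * Real.log (r / r1) + κ))
    (hnot : ∀ c < f, ¬ UB F ρ r c) :
    ∀ k0 : ℕ, ∃ k ≥ k0, ∃ N : ℕ, (N : ℝ) ≤ (1 - τ / 3) * k ∧
      ∀ X : ℂ, ‖X‖ = r → ∃ j < N, Real.exp ((f - 10 * κ) * k) ≤ ‖cp F ρ k (X * ρ ^ j)‖ := by
  obtain ⟨C, hC⟩ := stepI_bound hb hρ hr1 hr hr' hF hκ hκ1 hκ2 hU1 hU2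
  have hρn : ‖ρ‖ = 1 := by rw [hρ]; exact rho_norm b
  intro k0
  by_contra hcon
  push Not at hcon
  refine hnot (f - 5 * κ) (by linarith) ?_
  refine UB_of_freq hρn (c := f - 6 * κ) (C := C) (by linarith) hB ?_
  intro k1
  obtain ⟨n0, hn0⟩ := exists_nat_gt (24 / τ)
  obtain ⟨q, hqn, hq2, p, hp, hbp⟩ := exists_good_q hb (max n0 (max k0 k1))
  have hτ3 : 0 < 1 - τ / 3 := by linarith
  set k := ⌈(q : ℝ) / (1 - τ / 3)⌉₊ with hk
  have hk1 : (q : ℝ) / (1 - τ / 3) ≤ k := Nat.le_ceil _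
  have hk2 : (k : ℝ) < (q : ℝ) / (1 - τ / 3) + 1 := Nat.ceil_lt_add_one (by positivity)
  have hqk : (q : ℝ) ≤ (1 - τ / 3) * k := by
    rw [div_le_iff₀ hτ3] at hk1; linarith
  have hkq : (1 - τ / 3) * k < q + (1 - τ / 3) := by
    have : (k : ℝ) - 1 < q / (1 - τ / 3) := by linarith
    rw [lt_div_iff₀ hτ3] at this; linarith
  have hqk' : q ≤ k := by
    have : (q : ℝ) ≤ k := by nlinarith [(Nat.cast_nonneg k : (0:ℝ) ≤ k)]
    exact_mod_cast this
  have hkk0 : k0 ≤ k := by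
    have := le_max_left k0 k1; have := le_max_right n0 (max k0 k1); omega
  have hkk1 : k1 ≤ k := by
    have := le_max_right k0 k1; have := le_max_right n0 (max k0 k1); omega
  have hkn0 : n0 ≤ k := by have := le_max_left n0 (max k0 k1); omega
  have hτk : 24 ≤ τ * k := by
    have h1 : (n0 : ℝ) ≤ k := by exact_mod_cast hkn0
    have := (div_lt_iff₀ hτ).mp (hn0.trans_le h1); linarith
  obtain ⟨X0, hX0, hX0j⟩ := hcon k hkk0 q hqk
  refine ⟨k, hkk1, ?_⟩
  set s := ⌈(1 - 2 * τ / 3) * (k : ℝ)⌉₊ with hs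
  have hs1 : (1 - 2 * τ / 3) * (k : ℝ) ≤ s := Nat.le_ceil _
  have hs2 : (s : ℝ) < (1 - 2 * τ / 3) * (k : ℝ) + 1 :=
    Nat.ceil_lt_add_one (mul_nonneg (by linarith) (Nat.cast_nonneg k))
  exact hC k q s p hq2 hqk' hp hbp (by linarith) (by linarith) X0 hX0 (fun j hj => (hX0j j hj).le)

end PartE

section PartK
attribute [local instance] Matrix.linftyOpNormedAddCommGroup Matrix.linftyOpNormedSpace
  Matrix.linftyOpNormedRing Matrix.linftyOpNormedAlgebra

lemma two_dim_ineq (A : M2) (Y W : Fin 2 → ℂ) :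
    ‖A.mulVec W‖ * ‖Y‖ ≤ ‖W‖ * ‖A.mulVec Y‖ + ‖A‖ * ‖Y 0 * W 1 - Y 1 * W 0‖ := by
  set om := Y 0 * W 1 - Y 1 * W 0 with hom
  have hcase : ‖Y‖ = ‖Y 0‖ ∨ ‖Y‖ = ‖Y 1‖ := by
    rcases le_total ‖Y 0‖ ‖Y 1‖ with h | h
    · right
      refine le_antisymm ((pi_norm_le_iff_of_nonneg (norm_nonneg _)).mpr ?_) (norm_le_pi_norm Y 1)
      intro i; fin_cases i
      · exact h
      · exact le_rfl
    · left
      refine le_antisymm ((pi_norm_le_iff_of_nonneg (norm_nonneg _)).mpr ?_) (norm_le_pi_norm Y 0)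
      intro i; fin_cases i
      · exact le_rfl
      · exact h
  have main : ∀ (c d : ℂ) (e : Fin 2 → ℂ), ‖Y‖ = ‖c‖ → ‖d‖ ≤ ‖W‖ → ‖e‖ ≤ ‖om‖ →
      c • W = d • Y + e → ‖A.mulVec W‖ * ‖Y‖ ≤ ‖W‖ * ‖A.mulVec Y‖ + ‖A‖ * ‖om‖ := by
    intro c d e hc hd he h
    have h1 : c • A.mulVec W = d • A.mulVec Y + A.mulVec e := by
      rw [← Matrix.mulVec_smul, h, Matrix.mulVec_add, Matrix.mulVec_smul]
    have h2 := congrArg norm h1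
    rw [norm_smul, ← hc] at h2
    have h3 := norm_add_le (d • A.mulVec Y) (A.mulVec e)
    rw [norm_smul] at h3
    have h4 : ‖A.mulVec e‖ ≤ ‖A‖ * ‖om‖ := (Matrix.linfty_opNorm_mulVec A e).trans (by gcongr)
    have h5 : ‖d‖ * ‖A.mulVec Y‖ ≤ ‖W‖ * ‖A.mulVec Y‖ := by gcongr
    rw [mul_comm, h2]; linarith
  rcases hcase with h | h
  · refine main (Y 0) (W 0) ![0, om] h (norm_le_pi_norm W 0) ?_ ?_
    · rw [pi_norm_le_iff_of_nonneg (norm_nonneg _)]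
      intro i; fin_cases i <;> simp
    · ext i; fin_cases i
      · simp; ring
      · simp [hom]; ring
  · refine main (Y 1) (W 1) ![-om, 0] h (norm_le_pi_norm W 1) ?_ ?_
    · rw [pi_norm_le_iff_of_nonneg (norm_nonneg _)]
      intro i; fin_cases i <;> simp
    · ext i; fin_cases i
      · simp [hom]; ring
      · simp; ring

lemma M2_exists_vec (M : M2) : ∃ p : Fin 2 → ℂ, ‖p‖ ≤ 1 ∧ ‖M‖ ≤ 2 * ‖M.mulVec p‖ := by
  have h : ‖M‖ ≤ 2 * max ‖M.mulVec ![1, 0]‖ ‖M.mulVec ![0, 1]‖ := by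
    apply M2_norm_le
    intro i j
    fin_cases j
    · refine le_trans ?_ (le_max_left _ _)
      refine le_trans (le_of_eq ?_) (norm_le_pi_norm _ i)
      simp [Matrix.mulVec, dotProduct, Fin.sum_univ_two]
    · refine le_trans ?_ (le_max_right _ _)
      refine le_trans (le_of_eq ?_) (norm_le_pi_norm _ i)
      simp [Matrix.mulVec, dotProduct, Fin.sum_univ_two]
  rcases max_choice ‖M.mulVec ![1, 0]‖ ‖M.mulVec ![0, 1]‖ with h' | h'
  · refine ⟨![1, 0], ?_, by rw [h'] at h; exact h⟩
    rw [pi_norm_le_iff_of_nonneg zero_le_one]; intro i; fin_cases i <;> simp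
  · refine ⟨![0, 1], ?_, by rw [h'] at h; exact h⟩
    rw [pi_norm_le_iff_of_nonneg zero_le_one]; intro i; fin_cases i <;> simp

lemma omega_le (Y W : Fin 2 → ℂ) : ‖Y 0 * W 1 - Y 1 * W 0‖ ≤ 2 * ‖Y‖ * ‖W‖ := by
  refine (norm_sub_le _ _).trans ?_
  rw [norm_mul, norm_mul]
  have h1 := mul_le_mul (norm_le_pi_norm Y 0) (norm_le_pi_norm W 1) (norm_nonneg _) (norm_nonneg _)
  have h2 := mul_le_mul (norm_le_pi_norm Y 1) (norm_le_pi_norm W 0) (norm_nonneg _) (norm_nonneg _)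
  linarith

lemma site_ineq {A' A'' : M2} (hdet : A'.det = 1) {a1 a2 μ e1 e2 : ℝ}
    (h1 : ‖A'‖ ≤ a1) (h2 : ‖A''‖ ≤ a2) (hμ : μ ≤ ‖A'' * A'‖) (Ya Yn Yk : Fin 2 → ℂ)
    (he1 : ‖Yn - A'.mulVec Ya‖ ≤ e1) (he2 : ‖Yk - A''.mulVec Yn‖ ≤ e2) :
    μ * ‖Yn‖ ≤ 2 * (a1 * (‖Yk‖ + e2) + a2 * (2 * ‖Ya‖ + 2 * e1 * a1)) := by
  obtain ⟨p, hp, hMp⟩ := M2_exists_vec (A'' * A')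
  set W := A'.mulVec p with hW
  have hWn : ‖W‖ ≤ a1 := by
    calc ‖W‖ ≤ ‖A'‖ * ‖p‖ := Matrix.linfty_opNorm_mulVec A' p
      _ ≤ ‖A'‖ * 1 := by gcongr
      _ ≤ a1 := by linarith
  have hA := two_dim_ineq A'' Yn W
  rw [← Matrix.mulVec_mulVec] at hMp
  have hk : ‖A''.mulVec Yn‖ ≤ ‖Yk‖ + e2 := by
    have := norm_sub_norm_le (A''.mulVec Yn) Yk
    rw [norm_sub_rev] at this; linarith
  set ev := Yn - A'.mulVec Ya with hev
  have hom : Yn 0 * W 1 - Yn 1 * W 0 = (Ya 0 * p 1 - Ya 1 * p 0) + (ev 0 * W 1 - ev 1 * W 0) := by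
    have : (A'.mulVec Ya) 0 * W 1 - (A'.mulVec Ya) 1 * W 0 = A'.det * (Ya 0 * p 1 - Ya 1 * p 0) := by
      rw [hW, Matrix.det_fin_two]
      simp [Matrix.mulVec, dotProduct, Fin.sum_univ_two]; ring
    rw [hdet, one_mul] at this
    rw [← this, hev]
    simp only [Pi.sub_apply]; ring
  have hom2 : ‖Yn 0 * W 1 - Yn 1 * W 0‖ ≤ 2 * ‖Ya‖ + 2 * e1 * a1 := by
    rw [hom]
    refine (norm_add_le _ _).trans ?_
    have t1 := omega_le Ya p
    have t2 := omega_le ev W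
    have t3 : 2 * ‖Ya‖ * ‖p‖ ≤ 2 * ‖Ya‖ * 1 := by gcongr
    have t4 : 2 * ‖ev‖ * ‖W‖ ≤ 2 * e1 * a1 := by
      have : 0 ≤ e1 := (norm_nonneg _).trans he1
      gcongr
    linarith
  have ha1 : 0 ≤ a1 := (norm_nonneg _).trans h1
  have ha2 : 0 ≤ a2 := (norm_nonneg _).trans h2
  have s1 : ‖W‖ * ‖A''.mulVec Yn‖ ≤ a1 * (‖Yk‖ + e2) := by gcongr
  have s2 : ‖A''‖ * ‖Yn 0 * W 1 - Yn 1 * W 0‖ ≤ a2 * (2 * ‖Ya‖ + 2 * e1 * a1) := by gcongr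
  have s3 : μ * ‖Yn‖ ≤ (2 * ‖A''.mulVec W‖) * ‖Yn‖ := by
    gcongr; exact hμ.trans hMp
  nlinarith

lemma sum_shift_tsum {y : ℤ → ℝ} (hy : Summable fun n => y n ^ 2) (i : ℤ) :
    Summable (fun n => y (n + i) ^ 2) ∧ ∑' n, y (n + i) ^ 2 = ∑' n, y n ^ 2 := by
  constructor
  · exact (Equiv.addRight i).summable_iff.mpr hy
  · exact (Equiv.addRight i).tsum_eq (fun n => y n ^ 2)

lemma schur_sum {y h : ℤ → ℝ} (hy : Summable fun n => y n ^ 2) (hh : Summable fun n => h n ^ 2)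
    (hy0 : ∀ n, 0 ≤ y n) (hh0 : ∀ n, 0 ≤ h n) {k : ℕ} {δ K : ℝ} (hδ : 0 ≤ δ) (hK : 0 ≤ K)
    (hδk : δ * (2 * k + 1) ≤ 1 / 2)
    (H : ∀ n, y n ≤ δ * ∑ i ∈ Finset.Icc (-(k : ℤ)) k, y (n + i)
      + K * ∑ i ∈ Finset.Icc (-(k : ℤ)) k, h (n + i)) :
    ∑' n, y n ^ 2 ≤ 4 * K ^ 2 * (2 * k + 1) ^ 2 * ∑' n, h n ^ 2 := by
  set s := Finset.Icc (-(k : ℤ)) k with hs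
  have hcard : (s.card : ℝ) = 2 * k + 1 := by
    rw [hs, Int.card_Icc, show ((k : ℤ) + 1 - -(k : ℤ)).toNat = 2 * k + 1 by omega]; push_cast; ring
  set c : ℝ := 2 * k + 1 with hc
  have hc0 : 0 < c := by positivity
  have H2 : ∀ n, y n ^ 2 ≤ (2 * δ ^ 2 * c) * ∑ i ∈ s, y (n + i) ^ 2
      + (2 * K ^ 2 * c) * ∑ i ∈ s, h (n + i) ^ 2 := by
    intro n
    have a1 : (∑ i ∈ s, y (n + i)) ^ 2 ≤ c * ∑ i ∈ s, y (n + i) ^ 2 := by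
      rw [← hcard]; exact sq_sum_le_card_mul_sum_sq
    have a2 : (∑ i ∈ s, h (n + i)) ^ 2 ≤ c * ∑ i ∈ s, h (n + i) ^ 2 := by
      rw [← hcard]; exact sq_sum_le_card_mul_sum_sq
    have a3 : y n ^ 2 ≤ (δ * ∑ i ∈ s, y (n + i) + K * ∑ i ∈ s, h (n + i)) ^ 2 := by
      have := H n
      have := hy0 n
      gcongr
    have a4 : (δ * ∑ i ∈ s, y (n + i) + K * ∑ i ∈ s, h (n + i)) ^ 2
        ≤ 2 * (δ * ∑ i ∈ s, y (n + i)) ^ 2 + 2 * (K * ∑ i ∈ s, h (n + i)) ^ 2 := by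
      nlinarith [sq_nonneg (δ * ∑ i ∈ s, y (n + i) - K * ∑ i ∈ s, h (n + i))]
    have a5 : δ ^ 2 * (∑ i ∈ s, y (n + i)) ^ 2 ≤ δ ^ 2 * (c * ∑ i ∈ s, y (n + i) ^ 2) := by gcongr
    have a6 : K ^ 2 * (∑ i ∈ s, h (n + i)) ^ 2 ≤ K ^ 2 * (c * ∑ i ∈ s, h (n + i) ^ 2) := by gcongr
    rw [mul_pow, mul_pow] at a4
    linarith
  have S1 : Summable fun n => ∑ i ∈ s, y (n + i) ^ 2 := summable_sum fun i _ => (sum_shift_tsum hy i).1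
  have S2 : Summable fun n => ∑ i ∈ s, h (n + i) ^ 2 := summable_sum fun i _ => (sum_shift_tsum hh i).1
  have T1 : ∑' n, ∑ i ∈ s, y (n + i) ^ 2 = c * ∑' n, y n ^ 2 := by
    rw [Summable.tsum_finsetSum fun i _ => (sum_shift_tsum hy i).1,
      Finset.sum_congr rfl fun i _ => (sum_shift_tsum hy i).2, Finset.sum_const, nsmul_eq_mul, hcard]
  have T2 : ∑' n, ∑ i ∈ s, h (n + i) ^ 2 = c * ∑' n, h n ^ 2 := by
    rw [Summable.tsum_finsetSum fun i _ => (sum_shift_tsum hh i).1,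
      Finset.sum_congr rfl fun i _ => (sum_shift_tsum hh i).2, Finset.sum_const, nsmul_eq_mul, hcard]
  have T := hy.tsum_le_tsum H2 ((S1.mul_left _).add (S2.mul_left _))
  rw [Summable.tsum_add (S1.mul_left _) (S2.mul_left _), tsum_mul_left, tsum_mul_left, T1, T2] at T
  have hS : 0 ≤ ∑' n, y n ^ 2 := tsum_nonneg fun n => sq_nonneg _
  have hδc : 2 * δ ^ 2 * c * c ≤ 1 / 2 := by
    have : (δ * c) ^ 2 ≤ (1 / 2) ^ 2 := by gcongr
    nlinarith
  nlinarith [mul_le_mul_of_nonneg_right hδc hS]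

end PartK

section PartK2
attribute [local instance] Matrix.linftyOpNormedAddCommGroup Matrix.linftyOpNormedSpace
  Matrix.linftyOpNormedRing Matrix.linftyOpNormedAlgebra

def schM (w : ℂ → ℂ) : ℂ → M2 := fun X => !![w X, -1; 1, 0]

lemma schM_det (w : ℂ → ℂ) (X : ℂ) : (schM w X).det = 1 := by
  simp [schM, Matrix.det_fin_two]

lemma evol_err {w : ℂ → ℂ} {ρ X : ℂ} (hρ : ‖ρ‖ = 1) {r B : ℝ} (hB1 : 1 ≤ B)
    (hB : ∀ X : ℂ, ‖X‖ = r → ‖schM w X‖ ≤ B) (hX : ‖X‖ = r) {u g : ℤ → ℂ}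
    (hrec : ∀ n : ℤ, u (n + 1) + u (n - 1) - w (X * ρ ^ n) * u n = g n) (n0 : ℤ) (l : ℕ) :
    ‖![u (n0 + l), u (n0 + l - 1)] - (cp (schM w) ρ l (X * ρ ^ n0)).mulVec ![u n0, u (n0 - 1)]‖
      ≤ B ^ l * ∑ i ∈ Finset.range l, ‖g (n0 + i)‖ := by
  have hρ0 : ρ ≠ 0 := by rw [← norm_pos_iff, hρ]; norm_num
  induction l with
  | zero => simp [cp_zero]
  | succ l ih =>
    set v := (cp (schM w) ρ l (X * ρ ^ n0)).mulVec ![u n0, u (n0 - 1)] with hv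
    have hXl : X * ρ ^ n0 * ρ ^ l = X * ρ ^ (n0 + l) := by
      rw [mul_assoc, zpow_add₀ hρ0, zpow_natCast]
    have h1 : ![u (n0 + (l + 1 : ℕ)), u (n0 + (l + 1 : ℕ) - 1)]
        - (cp (schM w) ρ (l + 1) (X * ρ ^ n0)).mulVec ![u n0, u (n0 - 1)]
        = (schM w (X * ρ ^ (n0 + l))).mulVec (![u (n0 + l), u (n0 + l - 1)] - v) + ![g (n0 + l), 0] := by
      rw [cp_succ, ← Matrix.mulVec_mulVec, ← hv, Matrix.mulVec_sub, hXl, ← hrec (n0 + l)]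
      have : ![u (n0 + (l + 1 : ℕ)), u (n0 + (l + 1 : ℕ) - 1)] =
        (schM w (X * ρ ^ (n0 + l))).mulVec ![u (n0 + l), u (n0 + l - 1)] +
        ![u (n0 + l + 1) + u (n0 + l - 1) - w (X * ρ ^ (n0 + l)) * u (n0 + l), 0] := by
        ext i; fin_cases i
        · simp [schM, Matrix.mulVec, dotProduct, Fin.sum_univ_two, add_assoc]; ring
        · simp [schM, Matrix.mulVec, dotProduct, Fin.sum_univ_two, ← add_assoc]
      rw [this]; abel
    rw [h1]
    refine (norm_add_le _ _).trans ?_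
    have h2 : ‖(schM w (X * ρ ^ (n0 + l))).mulVec (![u (n0 + l), u (n0 + l - 1)] - v)‖ ≤
        B * (B ^ l * ∑ i ∈ Finset.range l, ‖g (n0 + i)‖) := by
      refine (Matrix.linfty_opNorm_mulVec _ _).trans ?_
      have : ‖schM w (X * ρ ^ (n0 + l))‖ ≤ B := hB _ (by simp [hρ, hX])
      gcongr
    have h3 : ‖![g (n0 + l), 0]‖ ≤ ‖g (n0 + l)‖ := by
      rw [pi_norm_le_iff_of_nonneg (norm_nonneg _)]; intro i; fin_cases i <;> simp
    have h4 : ‖g (n0 + l)‖ ≤ B ^ (l + 1) * ‖g (n0 + l)‖ :=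
      le_mul_of_one_le_left (norm_nonneg _) (one_le_pow₀ hB1)
    rw [Finset.sum_range_succ, mul_add, pow_succ'] 
    rw [pow_succ'] at h4
    linarith

lemma exists_k_small {c D : ℝ} (hc : 0 < c) (hD : 0 ≤ D) :
    ∃ k0 : ℕ, ∀ k ≥ k0, D * Real.exp (-c * k) * (2 * (k : ℝ) + 1) ≤ 1 / 2 := by
  have h1 := Real.tendsto_pow_mul_exp_neg_atTop_nhds_zero 1
  have h2 := h1.comp (Filter.Tendsto.const_mul_atTop hc (tendsto_natCast_atTop_atTop (R := ℝ)))
  have h4 : Filter.Tendsto (fun k : ℕ => D * (3 / c) * ((c * k) ^ 1 * Real.exp (-(c * k)))) Filter.atTop (nhds (D * (3 / c) * 0)) :=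
    h2.const_mul _
  rw [mul_zero] at h4
  obtain ⟨k0, hk0⟩ := Filter.eventually_atTop.mp (h4.eventually (gt_mem_nhds (show (0:ℝ) < 1 / 2 by norm_num)))
  refine ⟨max k0 1, fun k hk => ?_⟩
  have hk1 : (1 : ℝ) ≤ k := by exact_mod_cast (le_max_right _ _).trans hk
  have h5 := hk0 k ((le_max_left _ _).trans hk)
  have : D * (3 / c) * ((c * k) ^ 1 * Real.exp (-(c * k))) = D * Real.exp (-c * k) * (3 * k) := by
    rw [neg_mul]; field_simp
  rw [this] at h5
  refine le_trans ?_ h5.le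
  gcongr
  linarith

lemma lemmaK_aux {w : ℂ → ℂ} {b : ℝ} (hb : Irrational b) {ρ : ℂ}
    (hρ : ρ = Complex.exp (2 * π * Complex.I * b)) {r1 r f τ κ B : ℝ}
    (hr1 : 0 < r1) (hr : r1 < r) (hr' : r < 1)
    (hF : ∀ i j, DifferentiableOn ℂ (fun X => schM w X i j) (Ann r1 r⁻¹))
    (hB1 : 1 ≤ B) (hB : ∀ X : ℂ, ‖X‖ = r → ‖schM w X‖ ≤ B)
    (hτ : 0 < τ) (hτ1 : τ < 1) (hf : 0 < f)
    (hκ : 0 < κ) (hκ1 : 10 * κ ≤ τ / 4 * Real.log (r⁻¹ / r)) (hκ2 : 10 * κ ≤ τ / 4 * Real.log (r / r1))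
    (hκ3 : 11 * κ ≤ f * τ / 18)
    (hU0 : UB (schM w) ρ r (f + κ))
    (hU1 : UB (schM w) ρ r⁻¹ (f + κ)) (hU2 : UB (schM w) ρ r1 (f + (1 - τ) * Real.log (r / r1) + κ))
    (hnot : ∀ c < f, ¬ UB (schM w) ρ r c) :
    ∃ K : ℝ, 0 < K ∧ ∀ X : ℂ, ‖X‖ = r → ∀ u g : ℤ → ℂ, Summable (fun n => ‖u n‖ ^ 2) →
      Summable (fun n => ‖g n‖ ^ 2) →
      (∀ n : ℤ, u (n + 1) + u (n - 1) - w (X * ρ ^ n) * u n = g n) →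
      ∑' n, ‖u n‖ ^ 2 ≤ K * ∑' n, ‖g n‖ ^ 2 := by
  have hρn : ‖ρ‖ = 1 := by rw [hρ]; exact rho_norm b
  have hρ0 : ρ ≠ 0 := by rw [← norm_pos_iff, hρn]; norm_num
  have hgs := good_shift hb hρ hr1 hr hr' hF hB hτ hτ1 hκ hκ1 hκ2 hU1 hU2 hnot
  obtain ⟨C, hC, hU0⟩ := hU0
  obtain ⟨k0, hk0⟩ := exists_k_small (c := f * τ / 18) (D := 6 * C * Real.exp f) (by positivity) (by positivity)
  obtain ⟨k, hk, N, hN, hgood⟩ := hgs k0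
  set d0 := ⌊τ * k / 9⌋₊ with hd0
  have hk00 : (0 : ℝ) ≤ k := Nat.cast_nonneg k
  have hd1 : (d0 : ℝ) ≤ τ * k / 9 := Nat.floor_le (by positivity)
  have hd2 : τ * k / 9 < d0 + 1 := Nat.lt_floor_add_one _
  have hd3 : d0 ≤ k := by
    have : (d0 : ℝ) ≤ k := by nlinarith
    exact_mod_cast this
  have hNd : N + d0 + d0 ≤ k := by
    have : (N : ℝ) + d0 + d0 ≤ k := by nlinarith
    exact_mod_cast this
  set as := C * Real.exp ((f + κ) * (k - d0)) with has
  have has0 : 0 < as := by positivity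
  set μ := Real.exp ((f - 10 * κ) * k) with hμ
  have hμ0 : 0 < μ := Real.exp_pos _
  set δ := 6 * as / μ with hδ
  set K := 2 * (as + 2 * as ^ 2) * B ^ k / μ with hK
  have hB0 : 0 < B := by linarith
  have hK0 : 0 < K := by positivity
  have hδk : δ * (2 * k + 1) ≤ 1 / 2 := by
    refine le_trans ?_ (hk0 k hk)
    have : δ ≤ 6 * C * Real.exp f * Real.exp (-(f * τ / 18) * k) := by
      have e : δ = 6 * C * Real.exp ((f + κ) * (k - d0) - (f - 10 * κ) * k) := by
        rw [hδ, has, hμ, Real.exp_sub]; ring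
      rw [e, mul_assoc (6 * C), ← Real.exp_add]
      gcongr
      have t1 : 11 * κ * k ≤ f * τ / 18 * k := by gcongr
      have t2 : f * (τ * k / 9) ≤ f * (d0 + 1) := by gcongr
      have t3 : 0 ≤ κ * d0 := by positivity
      linarith only [t1, t2, t3]
    gcongr
  have hcpb : ∀ l : ℕ, l + d0 ≤ k → ∀ Z : ℂ, ‖Z‖ = r → ‖cp (schM w) ρ l Z‖ ≤ as := by
    intro l hl Z hZ
    refine (hU0 l Z hZ).trans ?_
    rw [has]
    have : (l : ℝ) + d0 ≤ k := by exact_mod_cast hl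
    gcongr
    linarith
  refine ⟨4 * K ^ 2 * (2 * k + 1) ^ 2, by positivity, fun X hX u g hu hg hrec => ?_⟩
  set Y : ℤ → Fin 2 → ℂ := fun n => ![u n, u (n - 1)] with hY
  set y : ℤ → ℝ := fun n => ‖Y n‖ with hy
  have hyu : ∀ n, ‖u n‖ ≤ y n := fun n => by
    have := norm_le_pi_norm (Y n) 0
    simpa [hY] using this
  have hyu2 : ∀ n, y n ^ 2 ≤ ‖u n‖ ^ 2 + ‖u (n - 1)‖ ^ 2 := by
    intro n
    have : y n ≤ max ‖u n‖ ‖u (n - 1)‖ := by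
      refine (pi_norm_le_iff_of_nonneg (le_trans (norm_nonneg _) (le_max_left _ _))).mpr ?_
      intro i; fin_cases i
      · simp [hY]
      · simp [hY]
    rcases max_choice ‖u n‖ ‖u (n - 1)‖ with h | h
    · rw [h] at this
      have : y n ^ 2 ≤ ‖u n‖ ^ 2 := by have : 0 ≤ y n := norm_nonneg _; gcongr
      nlinarith [sq_nonneg ‖u (n - 1)‖]
    · rw [h] at this
      have : y n ^ 2 ≤ ‖u (n - 1)‖ ^ 2 := by have : 0 ≤ y n := norm_nonneg _; gcongr
      nlinarith [sq_nonneg ‖u n‖]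
  have hys : Summable fun n => y n ^ 2 := by
    refine Summable.of_nonneg_of_le (fun n => sq_nonneg _) hyu2 (hu.add ?_)
    exact (sum_shift_tsum (y := fun n => ‖u n‖) hu (-1)).1
  have hmain := schur_sum (y := y) (h := fun n => ‖g n‖) hys hg (fun n => norm_nonneg _)
    (fun n => norm_nonneg _) (k := k) (δ := δ) (K := K) (by positivity) hK0.le hδk
    (by
      intro n
      set S := ∑ i ∈ Finset.Icc (-(k : ℤ)) k, y (n + i) with hS
      set G := ∑ i ∈ Finset.Icc (-(k : ℤ)) k, ‖g (n + i)‖ with hG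
      have hle : ∀ m : ℤ, n - k ≤ m → m ≤ n + k → y m ≤ S := by
        intro m h1 h2
        have := Finset.single_le_sum (f := fun i => y (n + i)) (s := Finset.Icc (-(k : ℤ)) k)
          (fun i _ => norm_nonneg _) (Finset.mem_Icc.mpr (⟨by omega, by omega⟩ : -(k:ℤ) ≤ m - n ∧ m - n ≤ k))
        simpa using this
      have hsub : ∀ (n0 : ℤ) (l : ℕ), n - k ≤ n0 → n0 + l ≤ n + k →
          ∑ i ∈ Finset.range l, ‖g (n0 + i)‖ ≤ G := by
        intro n0 l h1 h2
        have hinj : Set.InjOn (fun i : ℕ => n0 + (i : ℤ) - n) (Finset.range l) := by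
          intro i _ j _ h; simp at h; exact h
        have h3 : ∑ i ∈ Finset.range l, ‖g (n0 + i)‖ =
            ∑ i ∈ (Finset.range l).image (fun i : ℕ => n0 + (i : ℤ) - n), ‖g (n + i)‖ := by
          rw [Finset.sum_image hinj]
          refine Finset.sum_congr rfl fun i _ => ?_
          congr 2; ring
        rw [h3]
        refine Finset.sum_le_sum_of_subset_of_nonneg ?_ (fun _ _ _ => norm_nonneg _)
        intro i hi
        obtain ⟨j, hj, rfl⟩ := Finset.mem_image.mp hi
        rw [Finset.mem_range] at hj
        rw [Finset.mem_Icc]; constructor <;> omega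
      obtain ⟨j, hj, hjm⟩ := hgood (X * ρ ^ (n - k + d0)) (by simp [hρn, hX])
      set a : ℤ := n - k + d0 + j with ha
      set l : ℕ := k - d0 - j with hl
      set l' : ℕ := d0 + j with hl'
      have hll : l' + l = k := by omega
      have hal : a + l = n := by omega
      have hnl : n + l' = a + k := by omega
      have hXa : X * ρ ^ (n - k + d0) * ρ ^ j = X * ρ ^ a := by
        rw [mul_assoc, ha, zpow_add₀ hρ0 _ (j : ℤ), zpow_natCast]
      have hXn : X * ρ ^ a * ρ ^ l = X * ρ ^ n := by
        rw [mul_assoc, ← hal, zpow_add₀ hρ0 _ (l : ℤ), zpow_natCast]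
      have hnX : ∀ m : ℤ, ‖X * ρ ^ m‖ = r := fun m => by simp [hρn, hX]
      rw [hXa, ← hll, cp_add, hXn] at hjm
      have E1 := evol_err hρn hB1 hB hX hrec a l
      have E2 := evol_err hρn hB1 hB hX hrec n l'
      rw [hal] at E1
      have E1' := E1.trans (mul_le_mul_of_nonneg_left (hsub a l (by omega) (by omega)) (by positivity))
      have E2' := E2.trans (mul_le_mul_of_nonneg_left (hsub n l' (by omega) (by omega)) (by positivity))
      have hG0 : 0 ≤ G := Finset.sum_nonneg fun _ _ => norm_nonneg _
      have E1'' : ‖Y n - (cp (schM w) ρ l (X * ρ ^ a)).mulVec (Y a)‖ ≤ B ^ k * G :=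
        E1'.trans (by gcongr; omega)
      have E2'' : ‖Y (n + l') - (cp (schM w) ρ l' (X * ρ ^ n)).mulVec (Y n)‖ ≤ B ^ k * G :=
        E2'.trans (by gcongr; omega)
      have hsite := site_ineq (cp_det (schM_det w) l (X * ρ ^ a))
        (hcpb l (by omega) _ (hnX a)) (hcpb l' (by omega) _ (hnX n)) (μ := μ)
        hjm (Y a) (Y n) (Y (n + l')) E1'' E2''
      have q1 : ‖Y (n + l')‖ ≤ S := hle _ (by omega) (by omega)
      have q2 : ‖Y a‖ ≤ S := hle _ (by omega) (by omega)
      have hfin : μ * y n ≤ 6 * as * S + 2 * (as + 2 * as ^ 2) * B ^ k * G := by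
        refine hsite.trans ?_
        have q3 : as * ‖Y (n + l')‖ ≤ as * S := by gcongr
        have q4 : as * ‖Y a‖ ≤ as * S := by gcongr
        linarith
      have : y n ≤ (6 * as * S + 2 * (as + 2 * as ^ 2) * B ^ k * G) / μ := by
        rw [le_div_iff₀ hμ0]; linarith
      refine this.trans (le_of_eq ?_)
      rw [hδ, hK]; ring)
  refine le_trans ?_ hmain
  refine hu.tsum_le_tsum (fun n => ?_) hys
  have := hyu n
  gcongr

lemma lemmaK {w : ℂ → ℂ} {b : ℝ} (hb : Irrational b) {ρ : ℂ}
    (hρ : ρ = Complex.exp (2 * π * Complex.I * b)) {r1 r f τ B : ℝ}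
    (hr1 : 0 < r1) (hr : r1 < r) (hr' : r < 1)
    (hw : DifferentiableOn ℂ w (Ann r1 r⁻¹))
    (hB : ∀ X : ℂ, ‖X‖ = r → ‖schM w X‖ ≤ B)
    (hτ : 0 < τ) (hτ1 : τ < 1) (hf : 0 < f)
    (hU0 : ∀ κ > 0, UB (schM w) ρ r (f + κ))
    (hU1 : ∀ κ > 0, UB (schM w) ρ r⁻¹ (f + κ))
    (hU2 : UB (schM w) ρ r1 (f + (1 - τ) * Real.log (r / r1)))
    (hnot : ∀ c < f, ¬ UB (schM w) ρ r c) :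
    ∃ K : ℝ, 0 < K ∧ ∀ X : ℂ, ‖X‖ = r → ∀ u g : ℤ → ℂ, Summable (fun n => ‖u n‖ ^ 2) →
      Summable (fun n => ‖g n‖ ^ 2) →
      (∀ n : ℤ, u (n + 1) + u (n - 1) - w (X * ρ ^ n) * u n = g n) →
      ∑' n, ‖u n‖ ^ 2 ≤ K * ∑' n, ‖g n‖ ^ 2 := by
  have hr0 : 0 < r := hr1.trans hr
  have hla0 : 0 < Real.log (r / r1) := Real.log_pos (by rw [lt_div_iff₀ hr1]; linarith)
  have hlR0 : 0 < Real.log (r⁻¹ / r) := by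
    have : 1 < r⁻¹ := (one_lt_inv₀ hr0).mpr hr'
    exact Real.log_pos (by rw [lt_div_iff₀ hr0]; linarith)
  obtain ⟨κ, hκ, h1, h2, h3⟩ : ∃ κ > 0, 10 * κ ≤ τ / 4 * Real.log (r⁻¹ / r) ∧
      10 * κ ≤ τ / 4 * Real.log (r / r1) ∧ 11 * κ ≤ f * τ / 18 := by
    have p1 : 0 < τ / 4 * Real.log (r⁻¹ / r) := by positivity
    have p2 : 0 < τ / 4 * Real.log (r / r1) := by positivity
    have p3 : 0 < f * τ / 18 := by positivity
    refine ⟨min (τ / 4 * Real.log (r⁻¹ / r)) (min (τ / 4 * Real.log (r / r1)) (f * τ / 18)) / 11,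
      by positivity, ?_, ?_, ?_⟩
    · have := min_le_left (τ / 4 * Real.log (r⁻¹ / r)) (min (τ / 4 * Real.log (r / r1)) (f * τ / 18))
      linarith
    · have := (min_le_right (τ / 4 * Real.log (r⁻¹ / r)) (min (τ / 4 * Real.log (r / r1)) (f * τ / 18))).trans
        (min_le_left _ _)
      linarith
    · have := (min_le_right (τ / 4 * Real.log (r⁻¹ / r)) (min (τ / 4 * Real.log (r / r1)) (f * τ / 18))).trans
        (min_le_right _ _)
      linarith
  refine lemmaK_aux hb hρ hr1 hr hr' ?_ (le_max_right B 1) (fun X hX => (hB X hX).trans (le_max_left _ _))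
    hτ hτ1 hf hκ h1 h2 h3 (hU0 κ hκ) (hU1 κ hκ) (UB_mono hU2 (by linarith)) hnot
  intro i j
  fin_cases i <;> fin_cases j
  · simpa [schM] using hw
  all_goals simp [schM]

end PartK2

section PartF1
attribute [local instance] Matrix.linftyOpNormedAddCommGroup Matrix.linftyOpNormedSpace
  Matrix.linftyOpNormedRing Matrix.linftyOpNormedAlgebra

/-- `1 - α cos` in the multiplicative coordinate. -/
noncomputable def aF (α : ℝ) (X : ℂ) : ℂ := 1 - α * ((X + X⁻¹) / 2)
/-- the potential in the multiplicative coordinate. -/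
noncomputable def vF (α lam : ℝ) (X : ℂ) : ℂ := lam * (X + X⁻¹) / aF α X
noncomputable def bet (α : ℝ) : ℝ := α / (1 + √(1 - α ^ 2))
noncomputable def cst (α : ℝ) : ℝ := (1 + √(1 - α ^ 2)) / 2
noncomputable def pF (α : ℝ) (X : ℂ) : ℂ := X - α * ((X ^ 2 + 1) / 2)
noncomputable def nF (α lam : ℝ) (z X : ℂ) : M2 :=
  !![z * pF α X - lam * (X ^ 2 + 1), -pF α X; pF α X, 0]

lemma cst_pos (α : ℝ) : 0 < cst α := by unfold cst; positivity

lemma cst_bet (α : ℝ) : cst α * bet α = α / 2 := by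
  unfold cst bet
  have : 0 < 1 + √(1 - α ^ 2) := by positivity
  field_simp

lemma one_sub_sq_pos {α : ℝ} (hα : α ∈ Set.Ioo (-1 : ℝ) 1) : 0 < 1 - α ^ 2 := by
  have := hα.1; have := hα.2; nlinarith

lemma cst_one {α : ℝ} (hα : α ∈ Set.Ioo (-1 : ℝ) 1) : cst α * (1 + bet α ^ 2) = 1 := by
  have h := Real.sq_sqrt (one_sub_sq_pos hα).le
  unfold cst bet
  have : 0 < 1 + √(1 - α ^ 2) := by positivity
  field_simp
  nlinarith

lemma bet_lt {α : ℝ} (hα : α ∈ Set.Ioo (-1 : ℝ) 1) : |bet α| < 1 := by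
  unfold bet
  have h := Real.sqrt_pos.mpr (one_sub_sq_pos hα)
  rw [abs_div, abs_of_pos (show 0 < 1 + √(1 - α ^ 2) by positivity), div_lt_one (by positivity)]
  have := abs_lt.mpr hα
  linarith

lemma aF_fac {α : ℝ} (hα : α ∈ Set.Ioo (-1 : ℝ) 1) {X : ℂ} (hX : X ≠ 0) :
    aF α X = cst α * (1 - bet α * X) * (1 - bet α * X⁻¹) := by
  have h1 : ((cst α : ℝ) : ℂ) * (1 + (bet α : ℝ) ^ 2) = 1 := by exact_mod_cast cst_one hα
  have h2 : ((cst α : ℝ) : ℂ) * (bet α : ℝ) = α / 2 := by exact_mod_cast cst_bet α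
  unfold aF
  have h3 : X * X⁻¹ = 1 := mul_inv_cancel₀ hX
  linear_combination (-1 : ℂ) * h1 + (X + X⁻¹) * h2 - (cst α : ℂ) * (bet α) ^ 2 * h3

lemma aF_ne {α : ℝ} (hα : α ∈ Set.Ioo (-1 : ℝ) 1) {X : ℂ} (h1 : |bet α| < ‖X‖)
    (h2 : |bet α| * ‖X‖ < 1) : aF α X ≠ 0 := by
  have hX0 : 0 < ‖X‖ := (abs_nonneg _).trans_lt h1
  rw [aF_fac hα (norm_pos_iff.mp hX0)]
  refine mul_ne_zero (mul_ne_zero (by exact_mod_cast (cst_pos α).ne') ?_) ?_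
  · intro h
    have : ‖(bet α : ℂ) * X‖ = 1 := by rw [← sub_eq_zero.mp h]; simp
    rw [norm_mul, Complex.norm_real, Real.norm_eq_abs] at this; linarith
  · intro h
    have : ‖(bet α : ℂ) * X⁻¹‖ = 1 := by rw [← sub_eq_zero.mp h]; simp
    rw [norm_mul, Complex.norm_real, Real.norm_eq_abs, norm_inv, mul_inv_eq_one₀ hX0.ne'] at this
    linarith

lemma aF_inv (α : ℝ) (X : ℂ) : aF α X⁻¹ = aF α X := by
  unfold aF; rw [inv_inv, add_comm X⁻¹]

lemma vF_inv (α lam : ℝ) (X : ℂ) : vF α lam X⁻¹ = vF α lam X := by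
  unfold vF; rw [aF_inv, inv_inv, add_comm X⁻¹]

lemma nF_eq {α lam : ℝ} {z X : ℂ} (hX : X ≠ 0) (ha : aF α X ≠ 0) :
    nF α lam z X = (X * aF α X) • schM (fun X => z - vF α lam X) X := by
  have hp : X * aF α X = pF α X := by unfold aF pF; field_simp
  have hv : (X * aF α X) * vF α lam X = lam * (X ^ 2 + 1) := by
    unfold vF; field_simp
  ext i j
  fin_cases i <;> fin_cases j <;> simp [nF, schM, Matrix.smul_apply, hp]
  rw [hp] at hv
  linear_combination hv

lemma rot_ne {ρ X : ℂ} (hρ : ‖ρ‖ = 1) (hX : X ≠ 0) (k : ℕ) : X * ρ ^ k ≠ 0 := by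
  rw [← norm_pos_iff, norm_rot hρ]; exact norm_pos_iff.mpr hX

lemma cp_nF {α lam : ℝ} {z X ρ : ℂ} (hρ : ‖ρ‖ = 1) (hX : X ≠ 0)
    (ha : ∀ j : ℕ, aF α (X * ρ ^ j) ≠ 0) (k : ℕ) :
    cp (nF α lam z) ρ k X = (∏ j ∈ Finset.range k, (X * ρ ^ j * aF α (X * ρ ^ j))) •
      cp (schM (fun X => z - vF α lam X)) ρ k X := by
  induction k with
  | zero => simp [cp_zero]
  | succ k ih =>
    rw [cp_succ, cp_succ, ih, nF_eq (rot_ne hρ hX k) (ha k), Finset.prod_range_succ, smul_mul_smul_comm,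
      mul_comm (X * ρ ^ k * aF α (X * ρ ^ k))]

lemma aF_prod {α : ℝ} (hα : α ∈ Set.Ioo (-1 : ℝ) 1) {ρ : ℂ} (hρ : ‖ρ‖ = 1)
    (hρ1 : ∀ m : ℕ, 1 ≤ m → ρ ^ m ≠ 1) {r κ : ℝ} (hr : |bet α| < r) (hr' : |bet α| * r < 1)
    (hκ : 0 < κ) : ∃ K : ℝ, 0 < K ∧ ∀ (N : ℕ) (X : ℂ), ‖X‖ = r →
      cst α ^ N * (Real.exp (-κ * N) / K) ≤ ∏ j ∈ Finset.range N, ‖aF α (X * ρ ^ j)‖ ∧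
      ∏ j ∈ Finset.range N, ‖aF α (X * ρ ^ j)‖ ≤ cst α ^ N * (K * Real.exp (κ * N)) := by
  have hr0 : 0 < r := (abs_nonneg _).trans_lt hr
  have hρ0 : ρ ≠ 0 := by rw [← norm_pos_iff, hρ]; norm_num
  obtain ⟨K1, hK1, h1⟩ := prod_rot_bound hρ hρ1 (β0 := |bet α| * r) (by positivity) hr' (half_pos hκ)
  obtain ⟨K2, hK2, h2⟩ := prod_rot_bound (ρ := ρ⁻¹) (by simp [hρ])
    (fun m hm h => hρ1 m hm (by rwa [inv_pow, inv_eq_one] at h))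
    (β0 := |bet α| * r⁻¹) (by positivity)
    (by rw [← div_eq_mul_inv, div_lt_one hr0]; exact hr) (half_pos hκ)
  refine ⟨K1 * K2, by positivity, fun N X hX => ?_⟩
  have hX0 : X ≠ 0 := by rw [← norm_pos_iff, hX]; exact hr0
  obtain ⟨a1, b1⟩ := h1 N (bet α * X) (by rw [norm_mul, Complex.norm_real, Real.norm_eq_abs, hX])
  obtain ⟨a2, b2⟩ := h2 N (bet α * X⁻¹) (by
    rw [norm_mul, Complex.norm_real, Real.norm_eq_abs, norm_inv, hX])
  have he : ∏ j ∈ Finset.range N, ‖aF α (X * ρ ^ j)‖ = cst α ^ N *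
      ((∏ j ∈ Finset.range N, ‖1 - bet α * X * ρ ^ j‖) *
        ∏ j ∈ Finset.range N, ‖1 - bet α * X⁻¹ * ρ⁻¹ ^ j‖) := by
    rw [← Finset.prod_mul_distrib]
    rw [show cst α ^ N = ∏ _j ∈ Finset.range N, cst α by simp, ← Finset.prod_mul_distrib]
    refine Finset.prod_congr rfl fun j _ => ?_
    rw [aF_fac hα (rot_ne hρ hX0 j), norm_mul, norm_mul, Complex.norm_real, Real.norm_eq_abs,
      abs_of_pos (cst_pos α), mul_inv, inv_pow, mul_assoc, mul_assoc, mul_assoc]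
  rw [he]
  have hc := cst_pos α
  have e1 : Real.exp (-κ * N) / (K1 * K2) = (Real.exp (-(κ / 2) * N) / K1) * (Real.exp (-(κ / 2) * N) / K2) := by
    rw [div_mul_div_comm, ← Real.exp_add]; ring_nf
  have e2 : K1 * K2 * Real.exp (κ * N) = (K1 * Real.exp ((κ / 2) * N)) * (K2 * Real.exp ((κ / 2) * N)) := by
    rw [mul_mul_mul_comm, ← Real.exp_add]; ring_nf
  rw [e1, e2]
  constructor <;> gcongr
end PartF1

section PartF2
attribute [local instance] Matrix.linftyOpNormedAddCommGroup Matrix.linftyOpNormedSpace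
  Matrix.linftyOpNormedRing Matrix.linftyOpNormedAlgebra

lemma M2_pow_bound {M : M2} {t1 t2 : ℂ} {T : ℝ} (hT : 0 < T) (h1 : ‖t1‖ ≤ T) (h2 : ‖t2‖ ≤ T)
    (hM : (M - t2 • (1 : M2)) * (M - t1 • (1 : M2)) = 0) (k : ℕ) :
    ‖M ^ k‖ ≤ T ^ k * (1 + k * (‖M - t1 • (1 : M2)‖ / T)) := by
  have hq : ∀ k : ℕ, M ^ k * (M - t1 • (1 : M2)) = t2 ^ k • (M - t1 • (1 : M2)) := by
    intro k
    induction k with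
    | zero => simp
    | succ k ih =>
      have h3 : M * (M - t1 • (1 : M2)) = t2 • (M - t1 • (1 : M2)) := by
        rw [sub_mul] at hM
        simpa using sub_eq_zero.mp hM
      rw [pow_succ, mul_assoc, h3, mul_smul_comm, ih, smul_smul, pow_succ, mul_comm]
  induction k with
  | zero => simp
  | succ k ih =>
    set D := ‖M - t1 • (1 : M2)‖ with hD
    have e : M ^ (k + 1) = t1 • M ^ k + t2 ^ k • (M - t1 • (1 : M2)) := by
      rw [← hq k, mul_sub, pow_succ, mul_smul_comm, mul_one]; abel
    rw [e]
    refine (norm_add_le _ _).trans ?_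
    rw [norm_smul, norm_smul, norm_pow t2, ← hD]
    have a1 : ‖t1‖ * ‖M ^ k‖ ≤ T * (T ^ k * (1 + k * (D / T))) := by gcongr
    have a2 : ‖t2‖ ^ k * D ≤ T ^ k * D := by gcongr
    refine (add_le_add a1 a2).trans (le_of_eq ?_)
    push_cast
    field_simp
    ring

lemma exists_eigs {α D : ℝ} (hα : α ∈ Set.Ioo (-1 : ℝ) 1) (hD : |D| ≤ 2) :
    ∃ t1 t2 : ℂ, t1 + t2 = -D / 2 ∧ t1 * t2 = α ^ 2 / 4 ∧ ‖t1‖ ≤ cst α ∧ ‖t2‖ ≤ cst α := by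
  have hD' := abs_le.mp hD
  have hD2 : D ^ 2 ≤ 4 := by nlinarith
  rcases le_total 0 (D ^ 2 - 4 * α ^ 2) with h | h
  · set s := √(D ^ 2 - 4 * α ^ 2) with hs
    have hs0 : 0 ≤ s := Real.sqrt_nonneg _
    have hs2 : s ^ 2 = D ^ 2 - 4 * α ^ 2 := Real.sq_sqrt h
    have hs2c : (s : ℂ) ^ 2 = D ^ 2 - 4 * α ^ 2 := by exact_mod_cast hs2
    have hs3 : s ≤ 2 * √(1 - α ^ 2) := by
      rw [show 2 * √(1 - α ^ 2) = √(4 * (1 - α ^ 2)) by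
        rw [Real.sqrt_mul (by norm_num), show (4 : ℝ) = 2 ^ 2 by norm_num,
          Real.sqrt_sq (by norm_num)]]
      exact Real.sqrt_le_sqrt (by linarith)
    refine ⟨((-D + s) / 4 : ℝ), ((-D - s) / 4 : ℝ), by push_cast; ring, by push_cast; linear_combination (-1 / 16 : ℂ) * hs2c, ?_, ?_⟩
    all_goals
      rw [Complex.norm_real, Real.norm_eq_abs, abs_le]; unfold cst
      constructor <;> linarith
  · set s := √(4 * α ^ 2 - D ^ 2) with hs
    have hs0 : 0 ≤ s := Real.sqrt_nonneg _
    have hs2 : s ^ 2 = 4 * α ^ 2 - D ^ 2 := Real.sq_sqrt (by linarith)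
    have hs2c : (s : ℂ) ^ 2 = 4 * α ^ 2 - D ^ 2 := by exact_mod_cast hs2
    have hc : 1 / 2 ≤ cst α := by unfold cst; have := Real.sqrt_nonneg (1 - α ^ 2); linarith
    have hα2 := one_sub_sq_pos hα
    have key : ∀ x y : ℝ, x ^ 2 + y ^ 2 ≤ 1 / 4 → ‖(⟨x, y⟩ : ℂ)‖ ≤ cst α := by
      intro x y hxy
      rw [Complex.norm_eq_sqrt_sq_add_sq]
      refine (Real.sqrt_le_iff.mpr ⟨by norm_num, ?_⟩).trans hc
      norm_num; linarith
    refine ⟨⟨-D / 4, s / 4⟩, ⟨-D / 4, -s / 4⟩, ?_, ?_, key _ _ ?_, key _ _ ?_⟩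
    · apply Complex.ext <;> simp <;> [skip; ring] 
      ring
    · apply Complex.ext
      · simp [pow_two]; nlinarith
      · simp [pow_two]; ring
    · nlinarith
    · nlinarith

lemma cp_continuous {F : ℂ → M2} (hF : Continuous F) (ρ : ℂ) (k : ℕ) :
    Continuous (fun X => cp F ρ k X) := by
  induction k with
  | zero => simp only [cp_zero]; fun_prop
  | succ k ih =>
    simp only [cp_succ]
    exact (hF.comp (by fun_prop)).mul ih

lemma cp_at_zero (F : ℂ → M2) (ρ : ℂ) (k : ℕ) : cp F ρ k 0 = F 0 ^ k := by
  induction k with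
  | zero => simp [cp_zero]
  | succ k ih => rw [cp_succ, ih, zero_mul, pow_succ']

lemma nF_continuous (α lam : ℝ) (z : ℂ) : Continuous (nF α lam z) := by
  refine continuous_matrix fun i j => ?_
  fin_cases i <;> fin_cases j <;> simp [nF, pF] <;> fun_prop

lemma nF_small {α lam E : ℝ} (hα : α ∈ Set.Ioo (-1 : ℝ) 1) (hD : |α * E + 2 * lam| ≤ 2)
    {ρ : ℂ} (hρ : ‖ρ‖ = 1) {κ : ℝ} (hκ : 0 < κ) :
    ∃ r0 : ℝ, 0 < r0 ∧ r0 ≤ 1 / 2 ∧ UB (nF α lam E) ρ r0 (Real.log (cst α) + κ) := by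
  obtain ⟨t1, t2, hs, hp, h1, h2⟩ := exists_eigs hα hD
  set M := nF α lam E 0 with hM
  have hc := cst_pos α
  have hCH : (M - t2 • (1 : M2)) * (M - t1 • (1 : M2)) = 0 := by
    push_cast at hs
    ext i j
    fin_cases i <;> fin_cases j <;>
      simp [hM, nF, pF, Matrix.mul_apply, Fin.sum_univ_two, Matrix.one_apply]
    · linear_combination (↑E * α / 2 + lam : ℂ) * hs + hp
    · linear_combination (-α / 2 : ℂ) * hs
    · linear_combination (α / 2 : ℂ) * hs
    · linear_combination hp
  have hb := M2_pow_bound hc h1 h2 hCH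
  set D := ‖M - t1 • (1 : M2)‖ / cst α with hDd
  have hD0 : 0 ≤ D := by positivity
  obtain ⟨k0, hk0⟩ := exists_k_small hκ (show 0 ≤ max 1 D by positivity)
  set k := max k0 1 with hk
  have hk1 : 1 ≤ k := le_max_right _ _
  have h3 := hk0 k (le_max_left _ _)
  have h4 : ‖M ^ k‖ < Real.exp ((Real.log (cst α) + κ) * k) := by
    refine (hb k).trans_lt ?_
    rw [add_mul, Real.exp_add, mul_comm (Real.log _), Real.exp_nat_mul, Real.exp_log hc]
    have h5 : (1 + k * D) < Real.exp (κ * k) := by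
      rw [neg_mul, Real.exp_neg] at h3
      have he := Real.exp_pos (κ * k)
      have h6 : max 1 D * (2 * (k : ℝ) + 1) ≤ 1 / 2 * Real.exp (κ * k) := by
        rw [mul_right_comm, ← div_eq_mul_inv, div_le_iff₀ he] at h3; exact h3
      have h7 : k * D ≤ k * max 1 D := by gcongr; exact le_max_right _ _
      have h8 : (0 : ℝ) ≤ k * max 1 D := by positivity
      have h9 := le_max_left 1 D
      nlinarith
    gcongr
  have hcont := ((cp_continuous (nF_continuous α lam E) ρ k).norm).tendsto 0
  rw [cp_at_zero, ← hM] at hcont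
  obtain ⟨ε, hε, hball⟩ := Metric.eventually_nhds_iff.mp (hcont.eventually (gt_mem_nhds h4))
  refine ⟨min (ε / 2) (1 / 2), by positivity, min_le_right _ _, ?_⟩
  set r0 := min (ε / 2) (1 / 2) with hr0
  obtain ⟨B, hB⟩ := (isCompact_sphere (0 : ℂ) r0).exists_bound_of_continuousOn (nF_continuous α lam E).continuousOn
  refine UB_of_one hρ (B := B) (fun X hX => hB X (by simpa using hX)) hk1 fun X hX => (hball ?_).le
  rw [dist_zero_right, hX]
  exact (min_le_left _ _).trans_lt (by linarith)

end PartF2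

section PartF3
attribute [local instance] Matrix.linftyOpNormedAddCommGroup Matrix.linftyOpNormedSpace
  Matrix.linftyOpNormedRing Matrix.linftyOpNormedAlgebra

lemma nF_diff (α lam : ℝ) (z : ℂ) (i j : Fin 2) : Differentiable ℂ (fun X => nF α lam z X i j) := by
  fin_cases i <;> fin_cases j <;> simp [nF, pF] <;> fun_prop

lemma cp_nF_norm {α lam : ℝ} (hα : α ∈ Set.Ioo (-1 : ℝ) 1) {z X ρ : ℂ} (hρ : ‖ρ‖ = 1)
    (h1 : |bet α| < ‖X‖) (h2 : |bet α| * ‖X‖ < 1) (k : ℕ) :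
    ‖cp (nF α lam z) ρ k X‖ = ‖X‖ ^ k * (∏ j ∈ Finset.range k, ‖aF α (X * ρ ^ j)‖) *
      ‖cp (schM (fun X => z - vF α lam X)) ρ k X‖ := by
  have hX0 : X ≠ 0 := norm_pos_iff.mp ((abs_nonneg _).trans_lt h1)
  rw [cp_nF hρ hX0 (fun j => aF_ne hα (by rwa [norm_rot hρ]) (by rwa [norm_rot hρ])), norm_smul,
    norm_prod]
  simp only [norm_mul, Finset.prod_mul_distrib, norm_pow, hρ, one_pow, mul_one, Finset.prod_const,
    Finset.card_range]

lemma stepS1 {α lam E : ℝ} (hα : α ∈ Set.Ioo (-1 : ℝ) 1) (hD : |α * E + 2 * lam| ≤ 2)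
    {ρ : ℂ} (hρ : ‖ρ‖ = 1) (hρ1 : ∀ m : ℕ, 1 ≤ m → ρ ^ m ≠ 1) {L : ℝ} (hL : 0 < L)
    (hU : ∀ κ > 0, UB (schM (fun X => E - vF α lam X)) ρ 1 (L + κ)) :
    ∃ τ : ℝ, 0 < τ ∧ τ < 1 ∧ ∀ r1 : ℝ, |bet α| < r1 → 1 / 2 < r1 → r1 < 1 → ∀ κ > 0,
      UB (schM (fun X => E - vF α lam X)) ρ r1 (L + κ + (1 - τ) * Real.log (1 / r1)) := by
  obtain ⟨r0, hr0, hr0', C0, hC0, hU0⟩ := nF_small (lam := lam) (E := E) hα hD hρ (half_pos hL)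
  have hl0 : 0 < Real.log (1 / r0) := Real.log_pos (by rw [lt_div_iff₀ hr0]; linarith)
  set τ := min (1 / 2) (L / 2 / Real.log (1 / r0)) with hτ
  have hτ0 : 0 < τ := by positivity
  have hτl : τ * Real.log (1 / r0) ≤ L / 2 := by
    rw [← le_div_iff₀ hl0]; exact min_le_right _ _
  refine ⟨τ, hτ0, (min_le_left _ _).trans_lt (by norm_num), fun r1 hb1 hh1 h11 κ hκ => ?_⟩
  have hbet := bet_lt hα
  have hκ3 : 0 < κ / 3 := by positivity
  obtain ⟨C1, hC1, hU1⟩ := hU (κ / 3) hκ3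
  obtain ⟨K, hK, hKa⟩ := aF_prod hα hρ hρ1 (r := 1) hbet (by simpa using hbet) hκ3
  have hr1p : 0 < r1 := by linarith
  have hb1' : |bet α| * r1 < 1 := by nlinarith [abs_nonneg (bet α)]
  obtain ⟨K1, hK1, hKa1⟩ := aF_prod hα hρ hρ1 (r := r1) hb1 hb1' hκ3
  have hc := cst_pos α
  set Cm := max C0 (K * C1) with hCm
  have hCm0 : 0 < Cm := by positivity
  refine ⟨2 * K1 * Cm * (1 / r1), by positivity, fun k X hX => ?_⟩
  set m := ⌊τ * k⌋₊ with hm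
  have hm1 : (m : ℝ) ≤ τ * k := Nat.floor_le (by positivity)
  have hm2 : τ * k < m + 1 := Nat.lt_floor_add_one _
  set Bk := Cm * (cst α ^ k * Real.exp ((L + 2 * κ / 3) * k)) with hBk
  have hent : ∀ i j, ‖cp (nF α lam E) ρ k X i j‖ ≤ r1 ^ m * Bk := by
    intro i j
    have hd : DifferentiableOn ℂ (fun Y : ℂ => (Y ^ m)⁻¹ * cp (nF α lam E) ρ k Y i j) (Ann r0 1) := by
      refine DifferentiableOn.mul ?_ (cp_differentiableOn hρ (fun i j => (nF_diff α lam E i j).differentiableOn) k i j)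
      intro Y hY
      have : Y ≠ 0 := norm_pos_iff.mp (hr0.trans_le hY.1)
      have h2 : Y ^ m ≠ 0 := pow_ne_zero _ this
      exact (DifferentiableAt.fun_inv (𝕜 := ℂ) (z := Y) (h := fun Y : ℂ => Y ^ m) (by fun_prop) h2).differentiableWithinAt
    have hh := annulus_max hd (C := Bk) ?_ ?_ X ⟨by linarith, by linarith⟩
    · rw [norm_mul, norm_inv, norm_pow, hX, ← div_eq_inv_mul, div_le_iff₀ (by positivity)] at hh
      linarith
    · intro Y hY
      have h1 := (M2_entry_le _ i j).trans (hU0 k Y hY)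
      rw [norm_mul, norm_inv, norm_pow, hY]
      have h2 : (r0 ^ m)⁻¹ ≤ Real.exp (L / 2 * k) := by
        rw [← inv_pow, ← Real.exp_log (show 0 < r0⁻¹ by positivity), ← Real.exp_nat_mul]
        apply Real.exp_le_exp.mpr
        rw [one_div] at hτl hl0
        calc (m : ℝ) * Real.log r0⁻¹ ≤ τ * k * Real.log r0⁻¹ := by gcongr
          _ = τ * Real.log r0⁻¹ * k := by ring
          _ ≤ _ := by gcongr
      calc _ ≤ Real.exp (L / 2 * k) * (C0 * Real.exp ((Real.log (cst α) + L / 2) * k)) := by gcongr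
        _ = C0 * (cst α ^ k * Real.exp (L * k)) := by
          conv_rhs => rw [← Real.exp_log hc, ← Real.exp_nat_mul, ← Real.exp_add]
          rw [mul_left_comm, ← Real.exp_add]; congr 2; ring
        _ ≤ Bk := by rw [hBk]; gcongr; · exact le_max_left _ _
                     · linarith
    · intro Y hY
      have h1 := M2_entry_le (cp (nF α lam E) ρ k Y) i j
      rw [cp_nF_norm hα hρ (by rw [hY]; exact hbet) (by rw [hY, mul_one]; exact hbet), hY, one_pow, one_mul] at h1
      rw [norm_mul, norm_inv, norm_pow, hY, one_pow, inv_one, one_mul]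
      refine h1.trans ?_
      calc _ ≤ (cst α ^ k * (K * Real.exp (κ / 3 * k))) * (C1 * Real.exp ((L + κ / 3) * k)) := by
            gcongr
            · exact (hKa k Y hY).2
            · exact hU1 k Y hY
        _ = (K * C1) * (cst α ^ k * Real.exp ((L + 2 * κ / 3) * k)) := by
            rw [show (L + 2 * κ / 3) * k = κ / 3 * k + (L + κ / 3) * k by ring, Real.exp_add]; ring
        _ ≤ Bk := by rw [hBk]; gcongr; exact le_max_right _ _
  have hN := M2_norm_le hent
  rw [cp_nF_norm hα hρ (by rw [hX]; exact hb1) (by rw [hX]; exact hb1'), hX] at hN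
  have ha := (hKa1 k X hX).1
  set A := ‖cp (schM (fun X => (E : ℂ) - vF α lam X)) ρ k X‖ with hA
  have hA0 : 0 ≤ A := norm_nonneg _
  have h5 : r1 ^ k * (cst α ^ k * (Real.exp (-(κ / 3) * k) / K1)) * A ≤ 2 * (r1 ^ m * Bk) := by
    refine le_trans ?_ hN
    gcongr
  have h6 : r1 ^ k * (cst α ^ k * (Real.exp (-(κ / 3) * k) / K1)) * A = 
     (Real.exp (k * Real.log r1) * cst α ^ k * Real.exp (-(κ / 3) * k)) / K1 * A := by
    rw [Real.exp_nat_mul, Real.exp_log hr1p]; ring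
  have h7 : r1 ^ m ≤ Real.exp ((τ * k - 1) * Real.log r1) := by
    rw [← Real.exp_log hr1p, ← Real.exp_nat_mul, Real.exp_log hr1p]
    apply Real.exp_le_exp.mpr
    have := Real.log_neg hr1p h11
    nlinarith
  rw [h6] at h5
  have h8 : A ≤ 2 * K1 * Cm * (Real.exp ((τ * k - 1) * Real.log r1) * Real.exp ((L + 2 * κ / 3) * k) * 
      (Real.exp (k * Real.log r1) * Real.exp (-(κ / 3) * k))⁻¹) := by
    rw [div_mul_eq_mul_div, div_le_iff₀ hK1] at h5
    rw [← mul_assoc, ← div_eq_mul_inv, le_div_iff₀ (by positivity)]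
    have hck : 0 < cst α ^ k := by positivity
    refine le_of_mul_le_mul_left ?_ hck
    calc _ = Real.exp (k * Real.log r1) * cst α ^ k * Real.exp (-(κ / 3) * k) * A := by ring
      _ ≤ 2 * (r1 ^ m * Bk) * K1 := h5
      _ ≤ 2 * (Real.exp ((τ * k - 1) * Real.log r1) * Bk) * K1 := by gcongr
      _ = _ := by rw [hBk]; ring
  refine h8.trans (le_of_eq ?_)
  rw [← Real.exp_add, ← Real.exp_add, ← Real.exp_neg, ← Real.exp_add, mul_assoc (2 * K1 * Cm)]
  congr 1
  rw [one_div, Real.log_inv, ← Real.exp_log (show 0 < r1⁻¹ by positivity), ← Real.exp_add, Real.log_inv]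
  congr 1; ring

end PartF3

section PartF4
attribute [local instance] Matrix.linftyOpNormedAddCommGroup Matrix.linftyOpNormedSpace
  Matrix.linftyOpNormedRing Matrix.linftyOpNormedAlgebra

lemma STS (P : M2) : !![1, 0; 0, -1] * P.transpose * !![1, 0; 0, -1] =
    !![P 0 0, -P 1 0; -P 0 1, P 1 1] := by
  rw [Matrix.eta_fin_two P.transpose, Matrix.mul_fin_two, Matrix.mul_fin_two]
  simp [Matrix.transpose_apply]

lemma cp_reflect {w : ℂ → ℂ} (hw : ∀ X, w X⁻¹ = w X) {ρ : ℂ} (hρ : ρ ≠ 0) (k : ℕ) (X : ℂ) :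
    !![1, 0; 0, -1] * (cp (schM w) ρ k X).transpose * !![1, 0; 0, -1] =
      cp (schM w) ρ k (X⁻¹ * ρ * (ρ ^ k)⁻¹) := by
  have hS : (!![1, 0; 0, -1] : M2) * !![1, 0; 0, -1] = 1 := by
    ext i j; fin_cases i <;> fin_cases j <;> simp
  have hA : ∀ Y : ℂ, !![1, 0; 0, -1] * (schM w Y).transpose * !![1, 0; 0, -1] = schM w Y⁻¹ := by
    intro Y
    rw [STS]; ext i j; fin_cases i <;> fin_cases j <;> simp [schM, hw]
  induction k with
  | zero => simp [cp_zero, hS]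
  | succ k ih =>
    have e : X⁻¹ * ρ * (ρ ^ (k + 1))⁻¹ = (X * ρ ^ k)⁻¹ := by
      rw [pow_succ, mul_inv, mul_inv]; field_simp
    have e2 : X⁻¹ * ρ * (ρ ^ (k + 1))⁻¹ * ρ = X⁻¹ * ρ * (ρ ^ k)⁻¹ := by
      rw [pow_succ, mul_inv]; field_simp
    rw [cp_succ' _ _ (X⁻¹ * ρ * (ρ ^ (k + 1))⁻¹), e2, ← ih, e, ← hA, cp_succ, Matrix.transpose_mul]
    set S : M2 := !![1, 0; 0, -1]
    set P := (cp (schM w) ρ k X).transpose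
    set Q := (schM w (X * ρ ^ k)).transpose
    calc S * (P * Q) * S = S * P * (1 * Q) * S := by simp only [one_mul, mul_assoc]
      _ = _ := by rw [← hS]; simp only [mul_assoc]

lemma UB_inv {w : ℂ → ℂ} (hw : ∀ X, w X⁻¹ = w X) {ρ : ℂ} (hρ : ‖ρ‖ = 1) {r c : ℝ}
    (h : UB (schM w) ρ r c) : UB (schM w) ρ r⁻¹ c := by
  obtain ⟨C, hC, h⟩ := h
  refine ⟨2 * C, by positivity, fun k X hX => ?_⟩
  have hρ0 : ρ ≠ 0 := by rw [← norm_pos_iff, hρ]; norm_num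
  rw [mul_assoc]
  refine M2_norm_le fun i j => ?_
  have h1 := h k (X⁻¹ * ρ * (ρ ^ k)⁻¹) (by simp [hρ, hX])
  rw [← cp_reflect hw hρ0] at h1
  have h2 := (M2_entry_le _ j i).trans h1
  refine le_trans (le_of_eq ?_) h2
  rw [STS]; fin_cases i <;> fin_cases j <;> simp

lemma schM_diff {w : ℂ → ℂ} {s : Set ℂ} (hw : DifferentiableOn ℂ w s) (i j : Fin 2) :
    DifferentiableOn ℂ (fun X => schM w X i j) s := by
  fin_cases i <;> fin_cases j <;> simp [schM] <;> fun_prop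

lemma UB_interior {w : ℂ → ℂ} {ρ : ℂ} (hρ : ‖ρ‖ = 1) {a R s c : ℝ}
    (hd : DifferentiableOn ℂ w (Ann a R)) (has : a ≤ s) (hsR : s ≤ R)
    (h1 : UB (schM w) ρ a c) (h2 : UB (schM w) ρ R c) : UB (schM w) ρ s c := by
  obtain ⟨C1, hC1, h1⟩ := h1
  obtain ⟨C2, hC2, h2⟩ := h2
  refine ⟨2 * max C1 C2, by positivity, fun k X hX => ?_⟩
  rw [mul_assoc]
  refine M2_norm_le fun i j => ?_
  refine annulus_max (cp_differentiableOn hρ (schM_diff hd) k i j) ?_ ?_ X ⟨by linarith, by linarith⟩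
  · intro Y hY
    refine ((M2_entry_le _ i j).trans (h1 k Y hY)).trans ?_
    gcongr; exact le_max_left _ _
  · intro Y hY
    refine ((M2_entry_le _ i j).trans (h2 k Y hY)).trans ?_
    gcongr; exact le_max_right _ _

lemma col_im {V : ℂ → ℂ} {ρ X : ℂ} (hV : ∀ j : ℕ, (V (X * ρ ^ j)).im = 0) (z : ℂ) (k : ℕ) :
    ∃ S : ℝ, 0 ≤ S ∧ (1 ≤ k → 1 ≤ S) ∧
      ((starRingEnd ℂ) (cp (schM (fun X => z - V X)) ρ k X 1 0) *
        cp (schM (fun X => z - V X)) ρ k X 0 0).im = z.im * S := by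
  induction k with
  | zero => exact ⟨0, le_rfl, by norm_num, by simp [cp_zero]⟩
  | succ k ih =>
    obtain ⟨S, hS, hS1, h⟩ := ih
    set M := cp (schM (fun X => z - V X)) ρ k X with hM
    refine ⟨S + Complex.normSq (M 0 0), by have := Complex.normSq_nonneg (M 0 0); positivity, fun _ => ?_, ?_⟩
    · have := Complex.normSq_nonneg (M 0 0)
      rcases Nat.eq_zero_or_pos k with h0 | h0
      · subst h0
        have : M 0 0 = 1 := by rw [hM, cp_zero]; simp
        rw [this]; simp; exact hS
      · linarith [hS1 h0]
    · rw [cp_succ, ← hM]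
      have := hV k
      simp [schM, Matrix.mul_apply, Fin.sum_univ_two, Complex.normSq_apply, this] at h ⊢
      linear_combination h

lemma col_poly (V : ℂ → ℂ) (ρ X : ℂ) (k : ℕ) :
    ∃ p q : Polynomial ℂ, ∀ z : ℂ, p.eval z = cp (schM (fun X => z - V X)) ρ k X 0 0 ∧
      q.eval z = cp (schM (fun X => z - V X)) ρ k X 1 0 := by
  induction k with
  | zero => exact ⟨1, 0, fun z => by simp [cp_zero]⟩
  | succ k ih =>
    obtain ⟨p, q, h⟩ := ih
    refine ⟨(Polynomial.X - Polynomial.C (V (X * ρ ^ k))) * p - q, p, fun z => ?_⟩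
    obtain ⟨h1, h2⟩ := h z
    rw [cp_succ]
    simp [schM, Matrix.mul_apply, Fin.sum_univ_two, h1, h2]
    ring

lemma col_mono {V : ℂ → ℂ} {ρ X : ℂ} (hV : ∀ j : ℕ, (V (X * ρ ^ j)).im = 0) (E η : ℝ) (k : ℕ) :
    ‖cp (schM (fun X => E - V X)) ρ k X 0 0‖ ≤
      ‖cp (schM (fun X => (E + η * Complex.I) - V X)) ρ k X 0 0‖ := by
  obtain ⟨p, q, h⟩ := col_poly V ρ X k
  rw [← (h _).1, ← (h _).1, (IsAlgClosed.splits p).eval_eq_prod_roots, (IsAlgClosed.splits p).eval_eq_prod_roots,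
    norm_mul, norm_mul]
  have hr : ∀ r ∈ p.roots, r.im = 0 := by
    intro r hr
    have h1 : p.eval r = 0 := Polynomial.isRoot_of_mem_roots hr
    rcases Nat.eq_zero_or_pos k with h0 | h0
    · subst h0
      rw [(h r).1] at h1; simp [cp_zero] at h1
    · obtain ⟨S, _, hS1, hS⟩ := col_im hV r k
      rw [← (h r).1, h1, mul_zero] at hS
      have := hS1 h0
      rcases mul_eq_zero.mp (by simpa using hS.symm : r.im * S = 0) with h | h
      · exact h
      · linarith
  gcongr
  generalize p.roots = s at hr
  induction s using Multiset.induction with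
  | empty => simp
  | cons a s ih =>
    rw [Multiset.map_cons, Multiset.prod_cons, Multiset.map_cons, Multiset.prod_cons, norm_mul, norm_mul]
    have h1 := ih fun r hr' => hr r (Multiset.mem_cons_of_mem hr')
    have h2 := hr a (Multiset.mem_cons_self a s)
    have h3 : ‖(E : ℂ) - a‖ ≤ ‖(E + η * Complex.I : ℂ) - a‖ := by
      rw [Complex.norm_eq_sqrt_sq_add_sq, Complex.norm_eq_sqrt_sq_add_sq]
      apply Real.sqrt_le_sqrt
      simp [h2]; positivity
    gcongr

lemma stepS2 {V : ℂ → ℂ} {ρ : ℂ} (hρ : ‖ρ‖ = 1) (hV : ∀ X : ℂ, ‖X‖ = 1 → (V X).im = 0) (E η c : ℝ)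
    (h : UB (schM (fun X => (E + η * Complex.I) - V X)) ρ 1 c) :
    UB (schM (fun X => (E : ℂ) - V X)) ρ 1 c := by
  have hc := UB_nonneg (schM_det _) zero_le_one h
  obtain ⟨C, hC, h⟩ := h
  have h00 : ∀ (k : ℕ) (X : ℂ), ‖X‖ = 1 → ‖cp (schM (fun X => (E : ℂ) - V X)) ρ k X 0 0‖ ≤ C * Real.exp (c * k) := by
    intro k X hX
    exact (col_mono (fun j => hV _ (by rw [norm_rot hρ, hX])) E η k).trans ((M2_entry_le _ 0 0).trans (h k X hX))
  have hmon : ∀ k : ℕ, C * Real.exp (c * k) ≤ C * Real.exp (c * (k + 1 : ℕ)) := by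
    intro k; gcongr; push_cast; linarith
  have h10 : ∀ (k : ℕ) (X : ℂ), ‖X‖ = 1 → ‖cp (schM (fun X => (E : ℂ) - V X)) ρ k X 1 0‖ ≤ C * Real.exp (c * k) := by
    intro k X hX
    cases k with
    | zero => simp [cp_zero]; exact hC.le
    | succ k =>
      rw [cp_succ]
      simp only [schM, Matrix.mul_apply, Fin.sum_univ_two]
      simpa using (h00 k X hX).trans (hmon k)
  have hi0 : ∀ (i : Fin 2) (k : ℕ) (X : ℂ), ‖X‖ = 1 → ‖cp (schM (fun X => (E : ℂ) - V X)) ρ k X i 0‖ ≤ C * Real.exp (c * k) := by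
    intro i; fin_cases i
    · exact h00
    · exact h10
  have h1 : ∀ (k : ℕ) (X : ℂ), ‖X‖ = 1 → ‖cp (schM (fun X => (E : ℂ) - V X)) ρ k X‖ ≤ 2 * ((C + 1) * Real.exp (c * k)) := by
    intro k X hX
    refine M2_norm_le fun i j => ?_
    have hle : C * Real.exp (c * k) ≤ (C + 1) * Real.exp (c * k) := by gcongr; linarith
    fin_cases j
    · exact (hi0 i k X hX).trans hle
    · cases k with
      | zero => 
        refine (M2_entry_le _ _ _).trans ?_
        rw [cp_zero, M2_norm_one]; simp; exact hC.le
      | succ k =>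
        refine le_trans ?_ (((hi0 i k (X * ρ) (by simp [hρ, hX])).trans (hmon k)).trans hle)
        rw [cp_succ']
        simp [schM, Matrix.mul_apply, Fin.sum_univ_two]
  exact ⟨2 * (C + 1), by positivity, fun k X hX => by rw [mul_assoc]; exact h1 k X hX⟩

lemma cp_perturb {F G : ℂ → M2} {ρ : ℂ} (hρ : ‖ρ‖ = 1) {r B δ : ℝ} (hB1 : 1 ≤ B) 
    (hF : ∀ X : ℂ, ‖X‖ = r → ‖F X‖ ≤ B) (hG : ∀ X : ℂ, ‖X‖ = r → ‖G X‖ ≤ B)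
    (hFG : ∀ X : ℂ, ‖X‖ = r → ‖G X - F X‖ ≤ δ) (k : ℕ) (X : ℂ) (hX : ‖X‖ = r) :
    ‖cp G ρ k X - cp F ρ k X‖ ≤ k * B ^ k * δ := by
  have hδ : 0 ≤ δ := (norm_nonneg _).trans (hFG X hX)
  induction k with
  | zero => simp [cp_zero]
  | succ k ih =>
    have hXk : ‖X * ρ ^ k‖ = r := by rw [norm_rot hρ, hX]
    have e : cp G ρ (k + 1) X - cp F ρ (k + 1) X = (G (X * ρ ^ k) - F (X * ρ ^ k)) * cp G ρ k X +
        F (X * ρ ^ k) * (cp G ρ k X - cp F ρ k X) := by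
      rw [cp_succ, cp_succ, sub_mul, mul_sub]; abel
    rw [e]
    refine (norm_add_le _ _).trans ?_
    have h1 : ‖(G (X * ρ ^ k) - F (X * ρ ^ k)) * cp G ρ k X‖ ≤ δ * B ^ k :=
      (norm_mul_le _ _).trans (mul_le_mul (hFG _ hXk) (cp_norm_le hρ hG hB1 k X hX) (norm_nonneg _) hδ)
    have h2 : ‖F (X * ρ ^ k) * (cp G ρ k X - cp F ρ k X)‖ ≤ B * (k * B ^ k * δ) :=
      (norm_mul_le _ _).trans (mul_le_mul (hF _ hXk) ih (norm_nonneg _) (by linarith))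
    have h3 : δ * B ^ k ≤ δ * B ^ (k + 1) := by gcongr; omega
    push_cast
    calc _ ≤ δ * B ^ (k + 1) + B * (k * B ^ k * δ) := by linarith
      _ = _ := by ring

lemma schM_norm_le (w : ℂ → ℂ) (X : ℂ) {B : ℝ} (h : ‖w X‖ ≤ B) : ‖schM w X‖ ≤ 2 * (B + 1) := by
  have hB : 0 ≤ B := (norm_nonneg _).trans h
  refine M2_norm_le fun i j => ?_
  fin_cases i <;> fin_cases j <;> simp [schM] <;> linarith

lemma UB_usc {V : ℂ → ℂ} {ρ : ℂ} (hρ : ‖ρ‖ = 1) {r Bv : ℝ} (hV : ∀ X : ℂ, ‖X‖ = r → ‖V X‖ ≤ Bv)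
    {E c κ : ℝ} (hκ : 0 < κ) (h : UB (schM (fun X => (E : ℂ) - V X)) ρ r c) :
    ∃ η0 > 0, ∀ η : ℝ, 0 ≤ η → η ≤ η0 →
      UB (schM (fun X => (E + η * Complex.I) - V X)) ρ r (c + κ) := by
  obtain ⟨C, hC, h⟩ := h
  obtain ⟨k0, hk0⟩ := exists_k_small hκ hC.le
  set k := max k0 1 with hk
  have hk1 : 1 ≤ k := le_max_right _ _
  have hk1' : (1 : ℝ) ≤ k := by exact_mod_cast hk1
  have h1 : C * Real.exp (c * k) ≤ 1 / 2 * Real.exp ((c + κ) * k) := by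
    have h3 := hk0 k (le_max_left _ _)
    have h4 : C * Real.exp (-κ * k) ≤ 1 / 2 := by
      refine le_trans ?_ h3
      exact le_mul_of_one_le_right (by positivity) (by linarith)
    calc C * Real.exp (c * k) = (C * Real.exp (-κ * k)) * Real.exp ((c + κ) * k) := by
          rw [mul_assoc, ← Real.exp_add]; congr 2; ring
      _ ≤ _ := by gcongr
  set B := 2 * (|E| + 1 + |Bv| + 1) with hB
  have hB1 : 1 ≤ B := by have := abs_nonneg E; have := abs_nonneg Bv; linarith
  have hηb : ∀ η : ℝ, 0 ≤ η → η ≤ 1 → ∀ X : ℂ, ‖X‖ = r → ‖schM (fun X => (E + η * Complex.I) - V X) X‖ ≤ B := by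
    intro η h0 h1 X hX
    refine schM_norm_le _ X ?_
    refine (norm_sub_le _ _).trans (add_le_add ((norm_add_le _ _).trans (add_le_add ?_ ?_)) ((hV X hX).trans (le_abs_self _)))
    · simp
    · simp [abs_of_nonneg h0]; exact h1
  set δ := 1 / 2 * Real.exp ((c + κ) * k) / (k * B ^ k) with hδ
  have hδ0 : 0 < δ := by positivity
  refine ⟨min 1 (δ / 2), by positivity, fun η hη0 hη => ?_⟩
  refine UB_of_one hρ (hηb η hη0 (hη.trans (min_le_left _ _))) hk1 fun X hX => ?_
  have h0 := hηb 0 le_rfl zero_le_one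
  simp only [Complex.ofReal_zero, zero_mul, add_zero] at h0
  have hp := cp_perturb hρ hB1 h0 (hηb η hη0 (hη.trans (min_le_left _ _))) (δ := δ) (fun Y hY => by
    have : schM (fun X => (E + η * Complex.I) - V X) Y - schM (fun X => (E : ℂ) - V X) Y = 
        !![η * Complex.I, 0; 0, 0] := by
      ext i j; fin_cases i <;> fin_cases j <;> simp [schM]
    rw [this]
    have : ‖(!![η * Complex.I, 0; 0, 0] : M2)‖ ≤ 2 * η := by
      refine M2_norm_le fun i j => ?_
      fin_cases i <;> fin_cases j <;> simp [abs_of_nonneg hη0, hη0]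
    have := hη.trans (min_le_right _ _)
    linarith) k X hX
  have h5 : k * B ^ k * δ = 1 / 2 * Real.exp ((c + κ) * k) := by
    rw [hδ]; field_simp
  rw [h5] at hp
  have h6 := h k X hX
  have h7 := norm_add_le (cp (schM fun X => (E + η * Complex.I) - V X) ρ k X - cp (schM fun X => (E : ℂ) - V X) ρ k X)
    (cp (schM fun X => (E : ℂ) - V X) ρ k X)
  rw [sub_add_cancel] at h7
  linarith

lemma vF_diff {α lam : ℝ} (hα : α ∈ Set.Ioo (-1 : ℝ) 1) {a R : ℝ} (h1 : |bet α| < a) (h2 : |bet α| * R < 1) :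
    DifferentiableOn ℂ (vF α lam) (Ann a R) := by
  intro X hX
  have hX0 : X ≠ 0 := norm_pos_iff.mp (((abs_nonneg _).trans_lt h1).trans_le hX.1)
  have ha : aF α X ≠ 0 := aF_ne hα (h1.trans_le hX.1)
    ((mul_le_mul_of_nonneg_left hX.2 (abs_nonneg _)).trans_lt h2)
  apply DifferentiableAt.differentiableWithinAt
  unfold vF
  refine DifferentiableAt.fun_div ?_ ?_ ha
  · fun_prop (disch := assumption)
  · unfold aF; fun_prop (disch := assumption)

lemma vF_bdd {α lam : ℝ} (hα : α ∈ Set.Ioo (-1 : ℝ) 1) {r : ℝ} (h1 : |bet α| < r) (h2 : |bet α| * r < 1) :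
    ∃ B : ℝ, ∀ X : ℂ, ‖X‖ = r → ‖vF α lam X‖ ≤ B := by
  obtain ⟨B, hB⟩ := (isCompact_sphere (0 : ℂ) r).exists_bound_of_continuousOn
    ((vF_diff (lam := lam) hα h1 h2).continuousOn.mono (fun X hX => by
      have : ‖X‖ = r := by simpa using hX
      exact ⟨this.ge, this.le⟩))
  exact ⟨B, fun X hX => hB X (by simpa using hX)⟩

lemma vF_real {α lam : ℝ} {X : ℂ} (hX : ‖X‖ = 1) : (vF α lam X).im = 0 := by
  have hc : X⁻¹ = (starRingEnd ℂ) X := Complex.inv_eq_conj hX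
  have h1 : X + X⁻¹ = ((2 * X.re : ℝ) : ℂ) := by rw [hc, Complex.add_conj]
  have : vF α lam X = ((lam * (2 * X.re) / (1 - α * ((2 * X.re) / 2)) : ℝ) : ℂ) := by
    unfold vF aF; rw [h1]; push_cast; ring
  rw [this]; exact Complex.ofReal_im _

end PartF4

section PartF5
attribute [local instance] Matrix.linftyOpNormedAddCommGroup Matrix.linftyOpNormedSpace
  Matrix.linftyOpNormedRing Matrix.linftyOpNormedAlgebra

lemma UB_exists {w : ℂ → ℂ} {ρ : ℂ} (hρ : ‖ρ‖ = 1) {r B : ℝ} (hB : ∀ X : ℂ, ‖X‖ = r → ‖w X‖ ≤ B) :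
    (∀ X : ℂ, ‖X‖ = r → ‖schM w X‖ ≤ 2 * (|B| + 1)) ∧ ∃ c, UB (schM w) ρ r c := by
  have h1 : ∀ X : ℂ, ‖X‖ = r → ‖schM w X‖ ≤ 2 * (|B| + 1) :=
    fun X hX => schM_norm_le w X ((hB X hX).trans (le_abs_self _))
  have hp : 0 < 2 * (|B| + 1) := by positivity
  refine ⟨h1, Real.log (2 * (|B| + 1)), 1, one_pos, fun k X hX => ?_⟩
  have := cp_norm_le hρ h1 (by have := abs_nonneg B; linarith) k X hX
  rwa [one_mul, mul_comm, Real.exp_nat_mul, Real.exp_log hp]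

lemma UB_sInf {F : ℂ → M2} {ρ : ℂ} {r : ℝ} (hne : ∃ c, UB F ρ r c) {l : ℝ}
    (hl : ∀ c, UB F ρ r c → l ≤ c) :
    ∃ f : ℝ, l ≤ f ∧ (∀ κ > 0, UB F ρ r (f + κ)) ∧ ∀ c < f, ¬ UB F ρ r c := by
  refine ⟨sInf {c | UB F ρ r c}, le_csInf hne hl, fun κ hκ => ?_, fun c hc h => ?_⟩
  · obtain ⟨c, hc, hc'⟩ := exists_lt_of_csInf_lt hne (lt_add_of_pos_right (sInf {c | UB F ρ r c}) hκ)
    exact UB_mono hc hc'.le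
  · exact absurd (csInf_le ⟨l, hl⟩ h) (not_le.mpr hc)

set_option maxHeartbeats 1000000 in
theorem green_bounds {α lam E b : ℝ} (hα : α ∈ Set.Ioo (-1 : ℝ) 1) (hD : |α * E + 2 * lam| ≤ 2)
    (hb : Irrational b) {ρ : ℂ} (hρe : ρ = Complex.exp (2 * π * Complex.I * b)) {c0 : ℝ} (hc0 : 0 < c0)
    (hpos : ∀ c, UB (schM (fun X => (E : ℂ) - vF α lam X)) ρ 1 c → c0 ≤ c) :
    ∃ r3 η0 : ℝ, |bet α| < r3 ∧ 0 < r3 ∧ r3 < 1 ∧ 0 < η0 ∧ ∀ η : ℝ, 0 ≤ η → η ≤ η0 →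
      ∀ r : ℝ, r3 ≤ r → r < 1 → ∃ K : ℝ, 0 < K ∧ ∀ X : ℂ, (‖X‖ = r ∨ ‖X‖ = r⁻¹) → ∀ u g : ℤ → ℂ,
        Summable (fun n => ‖u n‖ ^ 2) → Summable (fun n => ‖g n‖ ^ 2) →
        (∀ n : ℤ, u (n + 1) + u (n - 1) - ((E + η * Complex.I) - vF α lam (X * ρ ^ n)) * u n = g n) →
        ∑' n, ‖u n‖ ^ 2 ≤ K * ∑' n, ‖g n‖ ^ 2 := by
  have hρ : ‖ρ‖ = 1 := by rw [hρe]; exact rho_norm b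
  have hρ1 : ∀ m : ℕ, 1 ≤ m → ρ ^ m ≠ 1 := by rw [hρe]; exact rho_pow_ne hb
  have hbet := bet_lt hα
  have hb0 := abs_nonneg (bet α)
  have hwb : ∀ (z : ℂ) (r : ℝ), |bet α| < r → r ≤ 1 → ∃ B, ∀ X : ℂ, ‖X‖ = r → ‖z - vF α lam X‖ ≤ B := by
    intro z r h1 h2
    obtain ⟨B, hB⟩ := vF_bdd (lam := lam) hα h1 (by nlinarith)
    exact ⟨‖z‖ + B, fun X hX => (norm_sub_le _ _).trans (by linarith [hB X hX])⟩
  obtain ⟨B1, hB1⟩ := hwb E 1 hbet le_rfl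
  obtain ⟨L, hL0, hLU, hLn⟩ := UB_sInf (UB_exists hρ hB1).2 hpos
  have hL : 0 < L := hc0.trans_le hL0
  obtain ⟨τ', hτ', hτ1', hS1⟩ := stepS1 hα hD hρ hρ1 hL hLU
  set r1 := (max |bet α| (1 / 2) + 1) / 2 with hr1
  have hm1 : max |bet α| (1 / 2) < 1 := max_lt hbet (by norm_num)
  have hr1b : |bet α| < r1 := by have := le_max_left |bet α| (1 / 2); linarith
  have hr1h : 1 / 2 < r1 := by have := le_max_right |bet α| (1 / 2); linarith
  have hr11 : r1 < 1 := by linarith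
  have hr1p : 0 < r1 := by linarith
  set l1 := Real.log (1 / r1) with hl1
  have hl1p : 0 < l1 := Real.log_pos (by rw [lt_div_iff₀ hr1p]; linarith)
  have hl1' : Real.log r1 = -l1 := by rw [hl1, one_div, Real.log_inv]; ring
  set τ := τ' / 2 with hτ
  have hτ0 : 0 < τ := by positivity
  have hU1 := hS1 r1 hr1b hr1h hr11 (τ * l1 / 4) (by positivity)
  obtain ⟨Bv, hBv⟩ := vF_bdd (lam := lam) hα hr1b (by nlinarith)
  obtain ⟨η0, hη0, husc⟩ := UB_usc hρ hBv (show 0 < τ * l1 / 4 by positivity) hU1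
  have hr31 : r1 < Real.exp (-(τ * l1 / 2)) := by
    rw [← Real.log_lt_iff_lt_exp hr1p, hl1']
    nlinarith
  refine ⟨Real.exp (-(τ * l1 / 2)), η0, hr1b.trans hr31, Real.exp_pos _, ?_, hη0, fun η h0 hη r hr hr' => ?_⟩
  · rw [Real.exp_lt_one_iff]; have : 0 < τ * l1 / 2 := by positivity
    linarith
  have hrr1 : r1 < r := hr31.trans_le hr
  have hr0 : 0 < r := by linarith
  have hri : 1 < r⁻¹ := (one_lt_inv₀ hr0).mpr hr'
  have hbr : |bet α| * r⁻¹ < 1 := by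
    rw [← div_eq_mul_inv, div_lt_one hr0]; linarith
  set w : ℂ → ℂ := fun X => (E + η * Complex.I) - vF α lam X with hw
  have heven : ∀ X, w X⁻¹ = w X := fun X => by simp only [hw, vF_inv]
  have hwd : DifferentiableOn ℂ w (Ann r1 r⁻¹) := (vF_diff hα hr1b hbr).const_sub _
  obtain ⟨B, hB⟩ := hwb (E + η * Complex.I) r (by linarith) hr'.le
  have hB' := (UB_exists hρ hB).1
  obtain ⟨f, hLf, hfU, hfn⟩ := UB_sInf (UB_exists hρ hB).2 (l := L) (fun c hc => by
    by_contra hcL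
    push Not at hcL
    refine hLn c hcL (stepS2 hρ (fun X hX => vF_real hX) E η c ?_)
    refine UB_interior hρ (hwd.mono fun X hX => ⟨hrr1.le.trans hX.1, hX.2⟩) hr'.le hri.le hc ?_
    exact UB_inv heven hρ hc)
  have hlr : Real.log (r / r1) ≥ l1 - τ * l1 / 2 := by
    rw [Real.log_div hr0.ne' hr1p.ne', hl1']
    have := (Real.le_log_iff_exp_le hr0).mpr hr
    linarith
  have hineq : L + τ * l1 / 4 + (1 - τ') * l1 + τ * l1 / 4 ≤ f + (1 - τ) * Real.log (r / r1) := by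
    have h1 : (1 - τ) * Real.log (r / r1) ≥ (1 - τ) * (l1 - τ * l1 / 2) :=
      mul_le_mul_of_nonneg_left hlr (by linarith)
    have h2 : τ' = 2 * τ := by rw [hτ]; ring
    have h3 : 0 ≤ τ * (τ * l1) := by positivity
    have e1 : (1 - τ) * (l1 - τ * l1 / 2) = l1 - 3 / 2 * (τ * l1) + τ * (τ * l1) / 2 := by ring
    have e2 : (1 - τ') * l1 = l1 - 2 * (τ * l1) := by rw [h2]; ring
    rw [e1] at h1
    rw [e2]
    linarith
  obtain ⟨K, hK, hmain⟩ := lemmaK hb hρe hr1p hrr1 hr' hwd hB' hτ0 (by linarith) (hL.trans_le hLf) hfU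
    (fun κ hκ => UB_inv heven hρ (hfU κ hκ)) (UB_mono (husc η h0 hη) hineq) hfn
  refine ⟨K, hK, fun X hX u g hu hg hrec => ?_⟩
  rcases hX with hX | hX
  · exact hmain X hX u g hu hg hrec
  · have key := hmain X⁻¹ (by rw [norm_inv, hX, inv_inv]) (fun n => u (-n)) (fun n => g (-n))
      ((Equiv.neg ℤ).summable_iff.mpr hu) ((Equiv.neg ℤ).summable_iff.mpr hg) (fun n => by
        have h1 := hrec (-n)
        have h2 : w (X⁻¹ * ρ ^ n) = w (X * ρ ^ (-n)) := by
          rw [← heven, mul_inv, inv_inv, zpow_neg]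
        rw [h2, ← h1]
        simp only [hw]
        rw [show -(n + 1) = -n - 1 by ring, show -(n - 1) = -n + 1 by ring]
        ring)
    have e1 := (Equiv.neg ℤ).tsum_eq (fun n => ‖u n‖ ^ 2)
    have e2 := (Equiv.neg ℤ).tsum_eq (fun n => ‖g n‖ ^ 2)
    simp only [Equiv.neg_apply] at e1 e2
    rw [e1, e2] at key
    exact key

end PartF5

section PartH1
attribute [local instance] Matrix.linftyOpNormedAddCommGroup Matrix.linftyOpNormedSpace
  Matrix.linftyOpNormedRing Matrix.linftyOpNormedAlgebra

lemma exp_norm_one (x : ℝ) : ‖Complex.exp (2 * π * Complex.I * x)‖ = 1 := rho_norm x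

lemma potV_eq_vF (α lam x : ℝ) :
    (potV α lam x : ℂ) = vF α lam (Complex.exp (2 * π * Complex.I * x)) := by
  have hc : (Complex.exp (2 * π * Complex.I * x)) + (Complex.exp (2 * π * Complex.I * x))⁻¹
      = 2 * Complex.cos (2 * π * x) := by
    rw [← Complex.exp_neg, Complex.two_cos]
    congr 2 <;> ring
  unfold vF aF potV
  rw [hc]
  push_cast
  ring

lemma tProd_succ (V : ℝ → ℝ) (b : ℝ) (n : ℕ) (x : ℝ) (z : ℂ) :
    tProd V b (n + 1) x z = tMat V (x + n * b) z * tProd V b n x z := by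
  simp [tProd, List.range_succ]

lemma tProd_eq_cp (α lam b : ℝ) (n : ℕ) (x : ℝ) (z : ℂ) :
    tProd (potV α lam) b n x z = cp (schM (fun X => z - vF α lam X))
      (Complex.exp (2 * π * Complex.I * b)) n (Complex.exp (2 * π * Complex.I * x)) := by
  induction n with
  | zero => simp [tProd, cp_zero]
  | succ n ih =>
    rw [tProd_succ, cp_succ, ih]
    congr 1
    unfold tMat schM
    rw [potV_eq_vF]
    congr 5
    rw [← Complex.exp_nat_mul, ← Complex.exp_add]
    congr 1
    push_cast
    ring

lemma opNorm2_le : ∃ C : ℝ, 0 < C ∧ ∀ M : M2, opNorm2 M ≤ C * ‖M‖ := by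
  let L : M2 →ₗ[ℂ] (EuclideanSpace ℂ (Fin 2) →L[ℂ] EuclideanSpace ℂ (Fin 2)) :=
    (Matrix.toEuclideanCLM (n := Fin 2) (𝕜 := ℂ)).toAlgEquiv.toLinearMap
  obtain ⟨C, hC, h⟩ := (LinearMap.toContinuousLinearMap L).bound
  exact ⟨C, hC, fun M => h M⟩

lemma opNorm2_entry (M : M2) (i j : Fin 2) : ‖M i j‖ ≤ opNorm2 M := by
  have h1 := (Matrix.toEuclideanCLM (n := Fin 2) (𝕜 := ℂ) M).le_opNorm (EuclideanSpace.single j 1)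
  rw [PiLp.norm_single, norm_one, mul_one] at h1
  have h2 := PiLp.norm_apply_le (Matrix.toEuclideanCLM (n := Fin 2) (𝕜 := ℂ) M (EuclideanSpace.single j 1)) i
  refine le_trans (le_of_eq ?_) (h2.trans h1)
  simp [Matrix.ofLp_toEuclideanCLM]

lemma opNorm2_ge (M : M2) (h : M.det = 1) : 1 / 2 ≤ opNorm2 M := by
  have e := opNorm2_entry M
  rw [Matrix.det_fin_two] at h
  have : (1:ℝ) ≤ 2 * opNorm2 M ^ 2 := by
    calc (1:ℝ) = ‖M 0 0 * M 1 1 - M 0 1 * M 1 0‖ := by rw [h, norm_one]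
      _ ≤ ‖M 0 0‖ * ‖M 1 1‖ + ‖M 0 1‖ * ‖M 1 0‖ := by
        rw [← norm_mul, ← norm_mul]; exact norm_sub_le _ _
      _ ≤ opNorm2 M * opNorm2 M + opNorm2 M * opNorm2 M := by
        have h0 : 0 ≤ opNorm2 M := norm_nonneg _
        gcongr <;> exact e _ _
      _ = _ := by ring
  have h0 : 0 ≤ opNorm2 M := norm_nonneg _
  nlinarith

lemma tProd_det (V : ℝ → ℝ) (b : ℝ) (n : ℕ) (x : ℝ) (z : ℂ) : (tProd V b n x z).det = 1 := by
  induction n with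
  | zero => simp [tProd]
  | succ n ih => rw [tProd_succ, Matrix.det_mul, ih]; simp [tMat, Matrix.det_fin_two]

lemma potV_cont {α : ℝ} (lam : ℝ) (hα : α ∈ Set.Ioo (-1 : ℝ) 1) : Continuous (potV α lam) := by
  unfold potV
  refine Continuous.div (by fun_prop) (by fun_prop) ?_
  intro x
  have h1 := Real.cos_le_one (2 * π * x)
  have h2 := Real.neg_one_le_cos (2 * π * x)
  have h3 := hα.1
  have h4 := hα.2
  have : |α * Real.cos (2 * π * x)| < 1 := by
    rw [abs_mul]
    have := abs_lt.mpr ⟨h3, h4⟩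
    have := Real.abs_cos_le_one (2 * π * x)
    nlinarith [abs_nonneg α, abs_nonneg (Real.cos (2 * π * x))]
  have := (abs_lt.mp this).2
  linarith

lemma opNorm2_cont : Continuous opNorm2 := by
  let L : M2 →ₗ[ℂ] (EuclideanSpace ℂ (Fin 2) →L[ℂ] EuclideanSpace ℂ (Fin 2)) :=
    (Matrix.toEuclideanCLM (n := Fin 2) (𝕜 := ℂ)).toAlgEquiv.toLinearMap
  have : Continuous fun M : M2 => ‖(LinearMap.toContinuousLinearMap L) M‖ := by fun_prop
  exact this

lemma tProd_cont {V : ℝ → ℝ} (hV : Continuous V) (b : ℝ) (n : ℕ) (z : ℂ) :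
    Continuous (fun x => tProd V b n x z) := by
  induction n with
  | zero => simp [tProd]; fun_prop
  | succ n ih =>
    simp_rw [tProd_succ]
    refine Continuous.matrix_mul ?_ ih
    unfold tMat
    refine continuous_matrix fun i j => ?_
    fin_cases i <;> fin_cases j <;> simp <;> fun_prop

lemma logop_cont {V : ℝ → ℝ} (hV : Continuous V) (b : ℝ) (n : ℕ) (z : ℂ) :
    Continuous (fun x => Real.log (opNorm2 (tProd V b n x z))) := by
  refine Continuous.log (opNorm2_cont.comp (tProd_cont hV b n z)) ?_
  intro x
  have := opNorm2_ge _ (tProd_det V b n x z)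
  linarith

lemma lyap_bddBelow {V : ℝ → ℝ} (hV : Continuous V) (b : ℝ) (z : ℂ) :
    BddBelow (Set.range fun n : ℕ+ =>
      ((n : ℝ))⁻¹ * ∫ x in (0:ℝ)..(1:ℝ), Real.log (opNorm2 (tProd V b n x z))) := by
  refine ⟨- |Real.log (1 / 2)|, ?_⟩
  rintro _ ⟨n, rfl⟩
  have h1 : Real.log (1 / 2) ≤ ∫ x in (0:ℝ)..(1:ℝ), Real.log (opNorm2 (tProd V b n x z)) := by
    have := intervalIntegral.integral_mono_on (μ := MeasureTheory.volume) (a := 0) (b := 1) (by norm_num)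
      (f := fun _ => Real.log (1 / 2)) (by simp)
      ((logop_cont hV b n z).intervalIntegrable 0 1)
      (fun x _ => Real.log_le_log (by norm_num) (opNorm2_ge _ (tProd_det V b n x z)))
    simpa using this
  have hn : (1 : ℝ) ≤ n := by exact_mod_cast n.pos
  have hn' : ((n : ℝ))⁻¹ ≤ 1 := inv_le_one_of_one_le₀ hn
  have hn0 : 0 ≤ ((n : ℝ))⁻¹ := by positivity
  have h2 := neg_abs_le (Real.log (1 / 2))
  have h3 := abs_nonneg (Real.log (1 / 2))
  show _ ≤ ((n : ℝ))⁻¹ * _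
  calc - |Real.log (1 / 2)| ≤ ((n : ℝ))⁻¹ * (- |Real.log (1 / 2)|) := by nlinarith
    _ ≤ _ := by gcongr; linarith

lemma lyap_le_of_UB {α lam b c : ℝ} {z : ℂ} (hα : α ∈ Set.Ioo (-1 : ℝ) 1)
    (h : UB (schM (fun X => z - vF α lam X)) (Complex.exp (2 * π * Complex.I * b)) 1 c) :
    lyap (potV α lam) b z ≤ c := by
  obtain ⟨C, hC, h⟩ := h
  obtain ⟨C2, hC2, h2⟩ := opNorm2_le
  have key : ∀ n : ℕ+, lyap (potV α lam) b z ≤ c + Real.log (C2 * C) * ((n : ℝ))⁻¹ := by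
    intro n
    refine (ciInf_le (lyap_bddBelow (potV_cont lam hα) b z) n).trans ?_
    have hn : (0 : ℝ) < n := by exact_mod_cast n.pos
    have h1 : (∫ x in (0:ℝ)..(1:ℝ), Real.log (opNorm2 (tProd (potV α lam) b n x z)))
        ≤ c * n + Real.log (C2 * C) := by
      have := intervalIntegral.integral_mono_on (μ := MeasureTheory.volume) (a := 0) (b := 1) (by norm_num)
        (g := fun _ => c * n + Real.log (C2 * C))
        ((logop_cont (potV_cont lam hα) b n z).intervalIntegrable 0 1) (by simp)
        (fun x _ => by
          have h3 := opNorm2_ge _ (tProd_det (potV α lam) b n x z)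
          have h4 : opNorm2 (tProd (potV α lam) b n x z) ≤ C2 * C * Real.exp (c * n) := by
            refine (h2 _).trans ?_
            rw [tProd_eq_cp, mul_assoc C2 C]
            exact mul_le_mul_of_nonneg_left (h n _ (rho_norm x)) hC2.le
          refine (Real.log_le_log (by linarith) h4).trans (le_of_eq ?_)
          rw [Real.log_mul (by positivity) (by positivity), Real.log_exp]; ring)
      simpa using this
    show ((n : ℝ))⁻¹ * _ ≤ _
    calc _ ≤ ((n : ℝ))⁻¹ * (c * n + Real.log (C2 * C)) := by gcongr
      _ = _ := by field_simp
  have ht : Filter.Tendsto (fun n : ℕ => c + Real.log (C2 * C) * (((n + 1 : ℕ) : ℝ))⁻¹) Filter.atTop (nhds (c + Real.log (C2 * C) * 0)) := by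
    refine Filter.Tendsto.const_add _ (Filter.Tendsto.const_mul _ ?_)
    exact (tendsto_inv_atTop_nhds_zero_nat (𝕜 := ℝ)).comp (Filter.tendsto_add_atTop_nat 1)
  rw [mul_zero, add_zero] at ht
  refine ge_of_tendsto' ht fun n => ?_
  exact key ⟨n + 1, Nat.succ_pos n⟩

end PartH1

section PartH2
attribute [local instance] Matrix.linftyOpNormedAddCommGroup Matrix.linftyOpNormedSpace
  Matrix.linftyOpNormedRing Matrix.linftyOpNormedAlgebra

open Polynomial in
lemma jensen_poly {p q : ℂ[X]} {g : ℂ → ℝ} (hp : p.eval 0 ≠ 0) (hq : ∀ X : ℂ, ‖X‖ = 1 → q.eval X ≠ 0)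
    (hg : CircleIntegrable g 0 1)
    (h : ∀ X : ℂ, ‖X‖ = 1 → ‖p.eval X‖ ≤ ‖q.eval X‖ * Real.exp (g X)) :
    Real.log ‖p.eval 0‖ ≤ Real.log q.mahlerMeasure + Real.circleAverage g 0 1 := by
  have hp0 : p ≠ 0 := by rintro rfl; simp at hp
  have hI : ∀ p : ℂ[X], CircleIntegrable (fun z => Real.log ‖p.eval z‖) 0 1 := fun p => by
    rw [circleIntegrable_def]; exact intervalIntegrable_mahlerMeasure p
  have h1 : ‖p.eval 0‖ ≤ p.mahlerMeasure := by
    have := p.norm_coeff_le_choose_mul_mahlerMeasure 0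
    simpa [coeff_zero_eq_eval_zero] using this
  have h2 : Real.log ‖p.eval 0‖ ≤ p.logMahlerMeasure := by
    rw [logMahlerMeasure_eq_log_MahlerMeasure]
    exact Real.log_le_log (norm_pos_iff.mpr hp) h1
  refine h2.trans ?_
  rw [← logMahlerMeasure_eq_log_MahlerMeasure, logMahlerMeasure_def, logMahlerMeasure_def,
    ← Real.circleAverage_fun_add (hI q) hg]
  classical
  let f : ℂ → ℝ := fun z => if p.eval z = 0 then Real.log ‖q.eval z‖ + g z else Real.log ‖p.eval z‖
  have hfe : (fun z => Real.log ‖p.eval z‖) =ᶠ[Filter.codiscreteWithin (Metric.sphere (0:ℂ) |1|)] f := by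
    have hfin : {z : ℂ | p.eval z = 0}.Finite := by
      have := p.rootSet_finite ℂ
      refine this.subset fun z hz => ?_
      rw [mem_rootSet]; exact ⟨hp0, by simpa using hz⟩
    filter_upwards [compl_finite_mem_codiscreteWithin (s := Metric.sphere (0:ℂ) |1|) hfin] with z hz
    have hz' : ¬ p.eval z = 0 := hz
    simp [f, hz']
  rw [Real.circleAverage_congr_codiscreteWithin hfe one_ne_zero]
  refine Real.circleAverage_mono ((hI p).congr_codiscreteWithin hfe) ((hI q).add hg) ?_
  intro z hz
  have hz1 : ‖z‖ = 1 := by simpa using hz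
  simp only [f]
  split_ifs with hz0
  · exact le_rfl
  · have hq0 := norm_pos_iff.mpr (hq z hz1)
    have := Real.log_le_log (norm_pos_iff.mpr hz0) (h z hz1)
    rwa [Real.log_mul hq0.ne' (Real.exp_pos _).ne', Real.log_exp] at this

open Polynomial in
lemma nF_poly (α lam : ℝ) (z ρ : ℂ) (n : ℕ) :
    ∃ P : Fin 2 → Fin 2 → ℂ[X], ∀ X i j, cp (nF α lam z) ρ n X i j = (P i j).eval X := by
  induction n with
  | zero =>
    refine ⟨fun i j => C ((1 : M2) i j), fun X i j => by simp [cp_zero]⟩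
  | succ n ih =>
    obtain ⟨P, hP⟩ := ih
    have hN : ∃ Q : Fin 2 → Fin 2 → ℂ[X], ∀ X i j, nF α lam z (X * ρ ^ n) i j = (Q i j).eval X := by
      let Y : ℂ[X] := Polynomial.X * C (ρ ^ n)
      let p : ℂ[X] := Y - C (α : ℂ) * (C (1/2) * (Y ^ 2 + 1))
      refine ⟨!![C z * p - C (lam : ℂ) * (Y ^ 2 + 1), -p; p, 0], fun X i j => ?_⟩
      fin_cases i <;> fin_cases j <;> simp [nF, pF, p, Y] <;> ring
    obtain ⟨Q, hQ⟩ := hN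
    refine ⟨fun i j => ∑ k, Q i k * P k j, fun X i j => ?_⟩
    rw [cp_succ, Matrix.mul_apply, Polynomial.eval_finset_sum]
    exact Finset.sum_congr rfl fun k _ => by rw [hQ, hP, eval_mul]

lemma quad_le (M : M2) (u0 u1 : ℝ) :
    ‖(u0 * M 0 0 * u0 + u0 * M 0 1 * u1 + u1 * M 1 0 * u0 + u1 * M 1 1 * u1 : ℂ)‖
      ≤ (u0 ^ 2 + u1 ^ 2) * opNorm2 M := by
  let U : EuclideanSpace ℂ (Fin 2) := WithLp.toLp 2 ![(u0 : ℂ), (u1 : ℂ)]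
  have hU : ‖U‖ ^ 2 = u0 ^ 2 + u1 ^ 2 := by
    rw [EuclideanSpace.norm_sq_eq]; simp [U, Fin.sum_univ_two]
  have h1 := norm_inner_le_norm (𝕜 := ℂ) U (Matrix.toEuclideanCLM (n := Fin 2) (𝕜 := ℂ) M U)
  have h2 := (Matrix.toEuclideanCLM (n := Fin 2) (𝕜 := ℂ) M).le_opNorm U
  have h3 : inner ℂ U (Matrix.toEuclideanCLM (n := Fin 2) (𝕜 := ℂ) M U) =
      (u0 * M 0 0 * u0 + u0 * M 0 1 * u1 + u1 * M 1 0 * u0 + u1 * M 1 1 * u1 : ℂ) := by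
    rw [PiLp.inner_apply, Fin.sum_univ_two]
    simp [Matrix.ofLp_toEuclideanCLM, U, Matrix.mulVec, dotProduct, Fin.sum_univ_two]
    ring
  rw [← h3, ← hU]
  refine h1.trans ?_
  unfold opNorm2
  nlinarith [norm_nonneg U]

open Polynomial in
lemma q_poly {α : ℝ} (hα : α ∈ Set.Ioo (-1 : ℝ) 1) {ρ : ℂ} (hρ : ‖ρ‖ = 1) (n : ℕ) :
    ∃ q : ℂ[X], q.mahlerMeasure = cst α ^ n ∧
      ∀ X : ℂ, ‖X‖ = 1 → ‖q.eval X‖ = ∏ j ∈ Finset.range n, ‖aF α (X * ρ ^ j)‖ := by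
  induction n with
  | zero => exact ⟨1, by simp, by simp⟩
  | succ n ih =>
    obtain ⟨q, hq1, hq2⟩ := ih
    set a : ℂ := -(bet α * ρ ^ n) with ha
    have hM : (C a * X + C 1 : ℂ[X]).mahlerMeasure = 1 := by
      by_cases h0 : a = 0
      · rw [h0]; simp
      · rw [mahlerMeasure_C_mul_X_add_C h0]
        have : ‖a‖ ≤ 1 := by
          rw [ha, norm_neg, norm_mul, norm_pow, hρ]; simp; exact (bet_lt hα).le
        simpa using this
    have hc := cst_pos α
    refine ⟨q * (C (cst α : ℂ) * ((C a * X + C 1) * (C a * X + C 1))), ?_, ?_⟩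
    · rw [mahlerMeasure_mul, mahlerMeasure_mul, mahlerMeasure_mul, hM, hq1, pow_succ]
      simp [abs_of_pos hc]
    · intro Y hY
      have hY' : ‖Y * ρ ^ n‖ = 1 := by rw [norm_rot hρ, hY]
      rw [Finset.prod_range_succ, ← hq2 Y hY, eval_mul, norm_mul]
      congr 1
      rw [aF_fac hα (by rw [← norm_pos_iff, hY']; norm_num)]
      have e1 : ‖(1 - bet α * (Y * ρ ^ n)⁻¹ : ℂ)‖ = ‖(1 - bet α * (Y * ρ ^ n) : ℂ)‖ := by
        rw [Complex.inv_eq_conj hY', ← Complex.norm_conj]; simp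
      rw [norm_mul, norm_mul, e1]
      simp only [eval_mul, eval_add, eval_C, eval_X, norm_mul, mul_assoc]
      have e2 : a * Y + 1 = 1 - bet α * (Y * ρ ^ n) := by rw [ha]; ring
      rw [e2]

lemma big_root {α D : ℝ} (hα : α ∈ Set.Ioo (-1 : ℝ) 1) (hD : 2 < |D|) :
    ∃ t : ℝ, cst α < |t| ∧ t ^ 2 + D / 2 * t + α ^ 2 / 4 = 0 := by
  have h1 := one_sub_sq_pos hα
  have hD2 : 4 < D ^ 2 := by rw [← sq_abs]; nlinarith
  set s := √(D ^ 2 - 4 * α ^ 2) with hs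
  have hs2 : s ^ 2 = D ^ 2 - 4 * α ^ 2 := Real.sq_sqrt (by nlinarith)
  have hs0 : 0 ≤ s := Real.sqrt_nonneg _
  have hw2 : √(1 - α ^ 2) ^ 2 = 1 - α ^ 2 := Real.sq_sqrt h1.le
  have hw0 : 0 ≤ √(1 - α ^ 2) := Real.sqrt_nonneg _
  have hws : 2 * √(1 - α ^ 2) ≤ s := by
    rw [← sq_le_sq₀ (by positivity) hs0]; nlinarith
  rcases le_total 0 D with h | h
  · refine ⟨-(D + s) / 4, ?_, by nlinarith⟩
    rw [abs_of_nonneg h] at hD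
    rw [neg_div, abs_neg, abs_of_nonneg (by positivity)]
    unfold cst; linarith
  · refine ⟨(-D + s) / 4, ?_, by nlinarith⟩
    rw [abs_of_nonpos h] at hD
    rw [abs_of_nonneg (by linarith)]
    unfold cst; linarith

lemma nF_zero_pow {α lam E t : ℝ} (ht : t ^ 2 + (α * E + 2 * lam) / 2 * t + α ^ 2 / 4 = 0) (n : ℕ) :
    (nF α lam (E : ℂ) 0 ^ n).mulVec ![(t : ℂ), ((-α / 2 : ℝ) : ℂ)] =
      ((t : ℂ) ^ n) • ![(t : ℂ), ((-α / 2 : ℝ) : ℂ)] := by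
  have h1 : (nF α lam (E : ℂ) 0).mulVec ![(t : ℂ), ((-α / 2 : ℝ) : ℂ)] =
      (t : ℂ) • ![(t : ℂ), ((-α / 2 : ℝ) : ℂ)] := by
    have ht' : (t : ℂ) ^ 2 + (α * E + 2 * lam) / 2 * t + α ^ 2 / 4 = 0 := by exact_mod_cast ht
    ext i
    fin_cases i
    · simp [nF, pF, Matrix.mulVec, dotProduct, Fin.sum_univ_two]
      linear_combination -ht'
    · simp [nF, pF, Matrix.mulVec, dotProduct, Fin.sum_univ_two]
      ring
  induction n with
  | zero => simp
  | succ n ih =>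
    rw [pow_succ, ← Matrix.mulVec_mulVec, h1, Matrix.mulVec_smul, ih, smul_smul, pow_succ, mul_comm]

end PartH2

section PartH3
attribute [local instance] Matrix.linftyOpNormedAddCommGroup Matrix.linftyOpNormedSpace
  Matrix.linftyOpNormedRing Matrix.linftyOpNormedAlgebra

lemma circleMap_exp (x : ℝ) : circleMap 0 1 (2 * π * x) = Complex.exp (2 * π * Complex.I * x) := by
  simp only [circleMap]; push_cast; rw [zero_add, one_mul]; congr 1; ring

open Polynomial in
lemma lyap_lower {α lam E b t : ℝ} (hα : α ∈ Set.Ioo (-1 : ℝ) 1) (htc : cst α < |t|)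
    (ht : t ^ 2 + (α * E + 2 * lam) / 2 * t + α ^ 2 / 4 = 0) (n : ℕ) :
    n * (Real.log |t| - Real.log (cst α)) ≤
      ∫ x in (0:ℝ)..(1:ℝ), Real.log (opNorm2 (tProd (potV α lam) b n x (E : ℂ))) := by
  set ρ := Complex.exp (2 * π * Complex.I * b) with hρd
  have hρ : ‖ρ‖ = 1 := rho_norm b
  have hc := cst_pos α
  have hbet := bet_lt hα
  have ht0 : 0 < |t| := hc.trans htc
  obtain ⟨P, hP⟩ := nF_poly α lam (E : ℂ) ρ n
  obtain ⟨q, hq1, hq2⟩ := q_poly hα hρ n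
  set u1 : ℝ := -α / 2 with hu1
  set W : ℝ := t ^ 2 + u1 ^ 2 with hW
  have hW0 : 0 < W := by
    have : 0 < t ^ 2 := by rw [← sq_abs]; positivity
    positivity
  have hane : ∀ Y : ℂ, ‖Y‖ = 1 → aF α Y ≠ 0 := fun Y hY =>
    aF_ne hα (by rw [hY]; exact hbet) (by rw [hY, mul_one]; exact hbet)
  let A : ℂ → M2 := fun X => cp (schM (fun X => (E : ℂ) - vF α lam X)) ρ n X
  let p : ℂ[X] := C (t : ℂ) * P 0 0 * C (t : ℂ) + C (t : ℂ) * P 0 1 * C (u1 : ℂ)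
    + C (u1 : ℂ) * P 1 0 * C (t : ℂ) + C (u1 : ℂ) * P 1 1 * C (u1 : ℂ)
  have hpe : ∀ X : ℂ, p.eval X = t * (cp (nF α lam (E : ℂ)) ρ n X) 0 0 * t
      + t * (cp (nF α lam (E : ℂ)) ρ n X) 0 1 * u1 + u1 * (cp (nF α lam (E : ℂ)) ρ n X) 1 0 * t
      + u1 * (cp (nF α lam (E : ℂ)) ρ n X) 1 1 * u1 := by
    intro X
    simp only [p, eval_add, eval_mul, eval_C, hP]
  have hp0 : p.eval 0 = (t : ℂ) ^ n * W := by
    rw [hpe, cp_at_zero]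
    have := nF_zero_pow ht n
    have h0 := congrFun this 0
    have h1 := congrFun this 1
    simp only [Matrix.mulVec, dotProduct, Fin.sum_univ_two, Matrix.cons_val_zero, Matrix.cons_val_one,
      Pi.smul_apply, smul_eq_mul] at h0 h1
    rw [hW]
    push_cast
    rw [← hu1] at h0 h1
    linear_combination (t : ℂ) * h0 + (u1 : ℂ) * h1
  have hpn : ‖p.eval 0‖ = |t| ^ n * W := by
    rw [hp0, norm_mul, norm_pow, Complex.norm_real, Complex.norm_real, Real.norm_eq_abs,
      Real.norm_eq_abs, abs_of_pos hW0]
  have hdet : ∀ x : ℝ, 1 / 2 ≤ opNorm2 (A (Complex.exp (2 * π * Complex.I * x))) := fun x => by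
    have := opNorm2_ge _ (tProd_det (potV α lam) b n x (E : ℂ))
    rwa [tProd_eq_cp] at this
  let g : ℂ → ℝ := fun X => Real.log W + Real.log (opNorm2 (A X))
  have hg0 : ∀ x : ℝ, g (circleMap 0 1 (2 * π * x)) =
      Real.log W + Real.log (opNorm2 (tProd (potV α lam) b n x (E : ℂ))) := by
    intro x; rw [circleMap_exp, tProd_eq_cp]
  have hLc := logop_cont (potV_cont lam hα) b n (E : ℂ)
  have hgc : Continuous fun θ : ℝ => g (circleMap 0 1 θ) := by
    have h1 : (fun θ : ℝ => g (circleMap 0 1 θ)) = fun θ : ℝ =>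
        Real.log W + Real.log (opNorm2 (tProd (potV α lam) b n (θ / (2 * π)) (E : ℂ))) := by
      funext θ
      rw [← hg0]
      congr 2
      field_simp
    rw [h1]
    exact continuous_const.add (hLc.comp (continuous_id.div_const _))
  have hgI : CircleIntegrable g 0 1 := hgc.intervalIntegrable _ _
  have hexp : ∀ X : ℂ, ‖X‖ = 1 → ∃ x : ℝ, X = Complex.exp (2 * π * Complex.I * x) := by
    intro X hX
    refine ⟨Complex.arg X / (2 * π), ?_⟩
    have := Complex.norm_mul_exp_arg_mul_I X
    rw [hX] at this
    push_cast at this ⊢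
    rw [one_mul] at this
    conv_lhs => rw [← this]
    congr 1
    have : (π : ℂ) ≠ 0 := by exact_mod_cast Real.pi_ne_zero
    field_simp
  have hJ := jensen_poly (p := p) (q := q) (g := g)
    (by rw [← norm_pos_iff, hpn]; positivity)
    (fun X hX => by
      rw [← norm_pos_iff, hq2 X hX]
      exact Finset.prod_pos fun j _ => norm_pos_iff.mpr (hane _ (by rw [norm_rot hρ, hX])))
    hgI
    (fun X hX => by
      have hX0 : X ≠ 0 := by rw [← norm_pos_iff, hX]; norm_num
      have e1 : Real.exp (g X) = W * opNorm2 (A X) := by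
        obtain ⟨x, rfl⟩ := hexp X hX
        have := hdet x
        simp only [g]
        rw [Real.exp_add, Real.exp_log hW0, Real.exp_log (by linarith)]
      rw [e1, hpe, cp_nF hρ hX0 (fun j => hane _ (by rw [norm_rot hρ, hX])), hq2 X hX]
      set S := ∏ j ∈ Finset.range n, (X * ρ ^ j * aF α (X * ρ ^ j)) with hS
      have hSn : ‖S‖ = ∏ j ∈ Finset.range n, ‖aF α (X * ρ ^ j)‖ := by
        rw [hS, norm_prod]
        refine Finset.prod_congr rfl fun j _ => ?_
        rw [norm_mul, norm_rot hρ, hX, one_mul]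
      rw [← hSn]
      have := quad_le (A X) t u1
      calc _ = ‖S * (t * A X 0 0 * t + t * A X 0 1 * u1 + u1 * A X 1 0 * t + u1 * A X 1 1 * u1 : ℂ)‖ := by
            simp only [Matrix.smul_apply, smul_eq_mul, A]
            congr 1; ring
        _ ≤ _ := by rw [norm_mul]; gcongr)
  have hav : Real.circleAverage g 0 1 = Real.log W +
      ∫ x in (0:ℝ)..(1:ℝ), Real.log (opNorm2 (tProd (potV α lam) b n x (E : ℂ))) := by
    rw [Real.circleAverage_def]
    have h1 := intervalIntegral.integral_comp_mul_left (a := 0) (b := 1)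
      (fun θ : ℝ => g (circleMap 0 1 θ)) (c := 2 * π) (by positivity)
    rw [mul_zero, mul_one] at h1
    rw [← h1]
    simp_rw [hg0]
    rw [intervalIntegral.integral_add (by simp) (hLc.intervalIntegrable 0 1)]
    simp
  rw [hav, hpn, hq1, Real.log_mul (by positivity) hW0.ne', Real.log_pow, Real.log_pow] at hJ
  linarith

theorem lyap_pos_of_gt {α lam E b : ℝ} (hα : α ∈ Set.Ioo (-1 : ℝ) 1) (hD : 2 < |α * E + 2 * lam|) :
    0 < lyap (potV α lam) b (E : ℂ) := by
  obtain ⟨t, htc, ht⟩ := big_root hα hD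
  have h0 : 0 < Real.log |t| - Real.log (cst α) := sub_pos.mpr (Real.log_lt_log (cst_pos α) htc)
  refine h0.trans_le ?_
  refine le_ciInf fun n => ?_
  have hn : (0 : ℝ) < n := by exact_mod_cast n.pos
  rw [inv_mul_eq_div, le_div_iff₀ hn, mul_comm]
  exact lyap_lower hα htc ht n

end PartH3

section PartG1

noncomputable abbrev L2Z := lp (fun _ : ℤ => ℂ) 2

lemma L2Z_summable (u : L2Z) : Summable (fun n => ‖u n‖ ^ 2) := by
  have := (memℓp_gen_iff (p := 2) (by norm_num)).mp (lp.memℓp u)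
  simpa using this

lemma L2Z_norm (u : L2Z) : ‖u‖ ^ 2 = ∑' n, ‖u n‖ ^ 2 := by
  have := lp.norm_rpow_eq_tsum (p := 2) (by norm_num) u
  simpa using this

lemma L2Z_mem {u : ℤ → ℂ} (h : Summable (fun n => ‖u n‖ ^ 2)) : Memℓp u 2 :=
  (memℓp_gen_iff (p := 2) (by norm_num)).mpr (by simpa using h)

lemma wop_summable (e : ℤ ≃ ℤ) {w : ℤ → ℂ} (hw : ∀ n, ‖w n‖ ≤ 1) (u : L2Z) :
    Summable (fun n => ‖w n * u (e n)‖ ^ 2) := by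
  refine Summable.of_nonneg_of_le (fun n => by positivity) (fun n => ?_)
    ((L2Z_summable u).comp_injective e.injective)
  have := hw n
  simp only [Function.comp]
  rw [norm_mul, mul_pow]
  nlinarith [norm_nonneg (w n), sq_nonneg ‖u (e n)‖, pow_le_one₀ (n := 2) (norm_nonneg (w n)) this]

/-- weighted composition operator -/
noncomputable def wop (e : ℤ ≃ ℤ) (w : ℤ → ℂ) (hw : ∀ n, ‖w n‖ ≤ 1) : L2Z →L[ℂ] L2Z :=
  LinearMap.mkContinuous
    { toFun := fun u => ⟨fun n => w n * u (e n), L2Z_mem (wop_summable e hw u)⟩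
      map_add' := fun u v => by
        apply lp.ext; funext n
        change w n * (u + v) (e n) = w n * u (e n) + w n * v (e n)
        rw [lp.coeFn_add, Pi.add_apply, mul_add]
      map_smul' := fun c u => by
        apply lp.ext; funext n
        change w n * (c • u) (e n) = c * (w n * u (e n))
        rw [lp.coeFn_smul, Pi.smul_apply, smul_eq_mul]; ring } 1 (fun u => by
    rw [one_mul, ← sq_le_sq₀ (norm_nonneg _) (norm_nonneg _), L2Z_norm, L2Z_norm]
    have h1 : ∑' n, ‖u (e n)‖ ^ 2 = ∑' n, ‖u n‖ ^ 2 := e.tsum_eq (fun n => ‖u n‖ ^ 2)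
    rw [← h1]
    refine Summable.tsum_le_tsum (fun n => ?_) (wop_summable e hw u)
      ((L2Z_summable u).comp_injective e.injective)
    change ‖w n * u (e n)‖ ^ 2 ≤ _
    rw [norm_mul, mul_pow]
    nlinarith [norm_nonneg (w n), sq_nonneg ‖u (e n)‖, pow_le_one₀ (n := 2) (norm_nonneg (w n)) (hw n)])

lemma wop_apply (e : ℤ ≃ ℤ) (w : ℤ → ℂ) (hw : ∀ n, ‖w n‖ ≤ 1) (u : L2Z) (n : ℤ) :
    (wop e w hw u) n = w n * u (e n) := rfl

lemma wop_norm (e : ℤ ≃ ℤ) (w : ℤ → ℂ) (hw : ∀ n, ‖w n‖ ≤ 1) : ‖wop e w hw‖ ≤ 1 :=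
  LinearMap.mkContinuous_norm_le _ zero_le_one _

noncomputable def Jop : L2Z →L[ℂ] L2Z :=
  wop (Equiv.addRight (1 : ℤ)) (fun _ => 1) (by simp) + wop (Equiv.addRight (-1 : ℤ)) (fun _ => 1) (by simp)

noncomputable def Wop (ρ : ℂ) (hρ : ‖ρ‖ = 1) : L2Z →L[ℂ] L2Z :=
  wop (Equiv.refl ℤ) (fun n => ρ ^ n) (by simp [hρ])

noncomputable def Wop' (ρ : ℂ) (hρ : ‖ρ‖ = 1) : L2Z →L[ℂ] L2Z :=
  wop (Equiv.refl ℤ) (fun n => (ρ ^ n)⁻¹) (by simp [hρ])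

/-- multiplication by `x + 1/x`, `x = X ρ^n` -/
noncomputable def Cop (ρ : ℂ) (hρ : ‖ρ‖ = 1) (X : ℂ) : L2Z →L[ℂ] L2Z :=
  X • Wop ρ hρ + X⁻¹ • Wop' ρ hρ

noncomputable def Aop (α : ℝ) (ρ : ℂ) (hρ : ‖ρ‖ = 1) (X : ℂ) : L2Z →L[ℂ] L2Z :=
  1 - ((α : ℂ) / 2) • Cop ρ hρ X

noncomputable def Tpp (α lam : ℝ) (ρ : ℂ) (hρ : ‖ρ‖ = 1) (z X : ℂ) : L2Z →L[ℂ] L2Z :=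
  Aop α ρ hρ X * (Jop - z • 1) + (lam : ℂ) • Cop ρ hρ X

lemma Jop_apply (u : L2Z) (n : ℤ) : (Jop u) n = u (n + 1) + u (n - 1) := by
  simp only [Jop, ContinuousLinearMap.add_apply, lp.coeFn_add, Pi.add_apply, wop_apply]
  simp [sub_eq_add_neg]

lemma Cop_apply (ρ : ℂ) (hρ : ‖ρ‖ = 1) (X : ℂ) (u : L2Z) (n : ℤ) :
    (Cop ρ hρ X u) n = (X * ρ ^ n + (X * ρ ^ n)⁻¹) * u n := by
  simp only [Cop, Wop, Wop', ContinuousLinearMap.add_apply, lp.coeFn_add, Pi.add_apply,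
    ContinuousLinearMap.smul_apply, lp.coeFn_smul, Pi.smul_apply, wop_apply, smul_eq_mul]
  simp
  ring

lemma Aop_apply (α : ℝ) (ρ : ℂ) (hρ : ‖ρ‖ = 1) (X : ℂ) (u : L2Z) (n : ℤ) :
    (Aop α ρ hρ X u) n = aF α (X * ρ ^ n) * u n := by
  simp only [Aop, ContinuousLinearMap.sub_apply, lp.coeFn_sub, Pi.sub_apply,
    ContinuousLinearMap.smul_apply, lp.coeFn_smul, Pi.smul_apply, Cop_apply, smul_eq_mul,
    ContinuousLinearMap.one_apply, aF]
  ring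

lemma Tpp_apply (α lam : ℝ) (ρ : ℂ) (hρ : ‖ρ‖ = 1) (z X : ℂ) (u : L2Z) (n : ℤ) :
    (Tpp α lam ρ hρ z X u) n = aF α (X * ρ ^ n) * (u (n + 1) + u (n - 1) - z * u n)
      + lam * (X * ρ ^ n + (X * ρ ^ n)⁻¹) * u n := by
  simp only [Tpp, ContinuousLinearMap.add_apply, ContinuousLinearMap.mul_apply, lp.coeFn_add, Pi.add_apply,
    ContinuousLinearMap.smul_apply, lp.coeFn_smul, Pi.smul_apply, Cop_apply, smul_eq_mul, Aop_apply,
    ContinuousLinearMap.sub_apply, lp.coeFn_sub, Pi.sub_apply, Jop_apply, ContinuousLinearMap.one_apply]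
  ring

lemma Tpp_apply' (α lam : ℝ) (ρ : ℂ) (hρ : ‖ρ‖ = 1) (z X : ℂ) (u : L2Z) (n : ℤ)
    (ha : aF α (X * ρ ^ n) ≠ 0) :
    (Tpp α lam ρ hρ z X u) n = aF α (X * ρ ^ n) *
      (u (n + 1) + u (n - 1) - (z - vF α lam (X * ρ ^ n)) * u n) := by
  rw [Tpp_apply]
  unfold vF
  field_simp
  ring

lemma Tpp_shift (α lam : ℝ) (ρ : ℂ) (hρ : ‖ρ‖ = 1) (z δ X : ℂ) :
    Tpp α lam ρ hρ (z + δ) X = Tpp α lam ρ hρ z X - δ • Aop α ρ hρ X := by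
  unfold Tpp
  rw [add_smul, ← sub_sub, mul_sub (Aop α ρ hρ X) (Jop - z • 1), mul_smul_comm, mul_one]
  abel

lemma Cop_norm (ρ : ℂ) (hρ : ‖ρ‖ = 1) (X : ℂ) : ‖Cop ρ hρ X‖ ≤ ‖X‖ + ‖X‖⁻¹ := by
  unfold Cop
  refine (norm_add_le _ _).trans ?_
  rw [norm_smul, norm_smul, norm_inv]
  have h1 : ‖Wop ρ hρ‖ ≤ 1 := wop_norm _ _ _
  have h2 : ‖Wop' ρ hρ‖ ≤ 1 := wop_norm _ _ _
  have := norm_nonneg X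
  have h3 : 0 ≤ ‖X‖⁻¹ := by positivity
  nlinarith

lemma Tpp_diff (α lam : ℝ) (ρ : ℂ) (hρ : ‖ρ‖ = 1) (z : ℂ) {X : ℂ} (hX : X ≠ 0) :
    DifferentiableAt ℂ (Tpp α lam ρ hρ z) X := by
  have hC : DifferentiableAt ℂ (Cop ρ hρ) X := by
    unfold Cop
    exact (differentiableAt_id.smul_const _).add ((differentiableAt_inv hX).smul_const _)
  have hA : DifferentiableAt ℂ (Aop α ρ hρ) X := by
    unfold Aop
    exact (differentiableAt_const _).sub (hC.fun_const_smul _)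
  unfold Tpp
  exact (hA.mul_const _).add (hC.fun_const_smul _)

def GB (α lam : ℝ) (ρ z X : ℂ) (K : ℝ) : Prop := ∀ u g : ℤ → ℂ,
  Summable (fun n => ‖u n‖ ^ 2) → Summable (fun n => ‖g n‖ ^ 2) →
  (∀ n : ℤ, u (n + 1) + u (n - 1) - (z - vF α lam (X * ρ ^ n)) * u n = g n) →
  ∑' n, ‖u n‖ ^ 2 ≤ K * ∑' n, ‖g n‖ ^ 2

end PartG1

section PartG2

lemma GB_lower {α lam : ℝ} {ρ z X : ℂ} (hρ : ‖ρ‖ = 1) {K a0 : ℝ} (hK : 0 < K) (ha0 : 0 < a0)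
    (ha : ∀ n : ℤ, a0 ≤ ‖aF α (X * ρ ^ n)‖) (h : GB α lam ρ z X K) (u : L2Z) :
    ‖u‖ ≤ (√K / a0) * ‖Tpp α lam ρ hρ z X u‖ := by
  have hne : ∀ n : ℤ, aF α (X * ρ ^ n) ≠ 0 := fun n => norm_pos_iff.mp (ha0.trans_le (ha n))
  set f := Tpp α lam ρ hρ z X u with hf
  have hfn : ∀ n, f n = aF α (X * ρ ^ n) *
      (u (n + 1) + u (n - 1) - (z - vF α lam (X * ρ ^ n)) * u n) := fun n => Tpp_apply' _ _ _ _ _ _ _ _ (hne n)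
  have hle : ∀ n, ‖f n / aF α (X * ρ ^ n)‖ ^ 2 ≤ (a0 ^ 2)⁻¹ * ‖f n‖ ^ 2 := by
    intro n
    rw [norm_div, div_pow, div_eq_inv_mul]
    have := ha n
    gcongr
  have hs : Summable fun n => (a0 ^ 2)⁻¹ * ‖f n‖ ^ 2 := (L2Z_summable f).mul_left _
  have hs' : Summable fun n => ‖f n / aF α (X * ρ ^ n)‖ ^ 2 :=
    Summable.of_nonneg_of_le (fun n => by positivity) hle hs
  have h1 := h u (fun n => f n / aF α (X * ρ ^ n)) (L2Z_summable u) hs' (fun n => by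
    rw [hfn n, mul_div_cancel_left₀ _ (hne n)])
  have h2 := Summable.tsum_le_tsum hle hs' hs
  rw [tsum_mul_left, ← L2Z_norm] at h2
  rw [← L2Z_norm] at h1
  rw [← sq_le_sq₀ (norm_nonneg _) (by positivity), mul_pow, div_pow, Real.sq_sqrt hK.le]
  calc ‖u‖ ^ 2 ≤ _ := h1
    _ ≤ K * ((a0 ^ 2)⁻¹ * ‖f‖ ^ 2) := by gcongr
    _ = _ := by ring

lemma Tpp_single (α lam : ℝ) (ρ : ℂ) (hρ : ‖ρ‖ = 1) (z X : ℂ) (m : ℤ) :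
    Tpp α lam ρ hρ z X (lp.single 2 m (1 : ℂ)) =
      lp.single 2 (m - 1) (aF α (X * ρ ^ (m - 1))) + lp.single 2 (m + 1) (aF α (X * ρ ^ (m + 1)))
      + lp.single 2 m (-z * aF α (X * ρ ^ m) + lam * (X * ρ ^ m + (X * ρ ^ m)⁻¹)) := by
  apply lp.ext
  funext n
  rw [Tpp_apply]
  simp only [lp.coeFn_add, Pi.add_apply, lp.single_apply, Pi.single_apply]
  by_cases h1 : n = m - 1
  · subst h1
    simp [show m - 1 ≠ m + 1 by omega, show m - 1 - 1 ≠ m by omega]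
  · by_cases h2 : n = m + 1
    · subst h2
      simp [show m + 1 ≠ m - 1 by omega, show m + 1 + 1 ≠ m by omega]
    · by_cases h3 : n = m
      · subst h3
        simp [show n ≠ n - 1 by omega]
        ring
      · simp [h1, h2, h3, show n + 1 ≠ m by omega, show n - 1 ≠ m by omega]

lemma GB_isUnit {α lam : ℝ} {ρ z X : ℂ} (hρ : ‖ρ‖ = 1) {K a0 a1 : ℝ} (hK : 0 < K) (ha0 : 0 < a0)
    (ha : ∀ n : ℤ, a0 ≤ ‖aF α (X * ρ ^ n)‖) (ha1 : ∀ n : ℤ, ‖aF α (X * ρ ^ n)‖ ≤ a1)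
    (h : GB α lam ρ z X K) : IsUnit (Tpp α lam ρ hρ z X) := by
  have hne : ∀ n : ℤ, aF α (X * ρ ^ n) ≠ 0 := fun n => norm_pos_iff.mp (ha0.trans_le (ha n))
  rw [ContinuousLinearMap.isUnit_iff_bijective,
    ContinuousLinearMap.bijective_iff_dense_range_and_antilipschitz]
  refine ⟨?_, ⟨⟨√K / a0, by positivity⟩, ?_⟩⟩
  · rw [Submodule.topologicalClosure_eq_top_iff, Submodule.eq_bot_iff]
    intro v hv
    rw [Submodule.mem_orthogonal'] at hv
    have h1 : ∀ m : ℤ, inner ℂ v (Tpp α lam ρ hρ z X (lp.single 2 m (1 : ℂ))) = 0 := fun m => hv _ ⟨_, rfl⟩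
    simp only [Tpp_single, inner_add_right, lp.inner_single_right, RCLike.inner_apply] at h1
    set y : ℤ → ℂ := fun n => aF α (X * ρ ^ n) * (starRingEnd ℂ) (v n) with hy
    have hys : Summable fun n => ‖y n‖ ^ 2 := by
      refine Summable.of_nonneg_of_le (fun n => by positivity) (fun n => ?_) ((L2Z_summable v).mul_left (a1 ^ 2))
      rw [hy]
      simp only [norm_mul, RCLike.norm_conj, mul_pow]
      have := ha1 n
      gcongr
    have h2 := h y (fun _ => 0) hys (by simp [summable_zero]) (fun n => by
      have := h1 n
      have e : (z - vF α lam (X * ρ ^ n)) * y n =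
          (z * aF α (X * ρ ^ n) - lam * (X * ρ ^ n + (X * ρ ^ n)⁻¹)) * (starRingEnd ℂ) (v n) := by
        have := hne n
        rw [hy]; unfold vF; field_simp
      rw [e, hy]
      linear_combination this)
    simp only [norm_zero, ne_eq, OfNat.ofNat_ne_zero, not_false_eq_true, zero_pow, tsum_zero, mul_zero] at h2
    apply lp.ext
    funext n
    have h3 : ‖y n‖ ^ 2 ≤ 0 := (hys.le_tsum n (fun j _ => by positivity)).trans h2
    have h4 : y n = 0 := by
      have : ‖y n‖ = 0 := by nlinarith [norm_nonneg (y n)]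
      exact norm_eq_zero.mp this
    have h5 := (mul_eq_zero.mp h4).resolve_left (hne n)
    simpa using h5
  · refine AddMonoidHomClass.antilipschitz_of_bound _ ?_
    intro u
    exact GB_lower hρ hK ha0 ha h u

lemma GB_self {α lam E η : ℝ} {ρ X : ℂ} (hρ : ‖ρ‖ = 1) (hX : ‖X‖ = 1) (hη : 0 < η) :
    GB α lam ρ ((E : ℂ) + η * Complex.I) X ((η ^ 2)⁻¹) := by
  intro u g hu hg h
  have hv : ∀ n : ℤ, (vF α lam (X * ρ ^ n)).im = 0 := fun n => vF_real (by simp [hX, hρ])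
  set s : ℤ → ℝ := fun n => ((starRingEnd ℂ) (u n) * u (n + 1)).im with hs
  have hu1 : Summable fun n : ℤ => ‖u (n + 1)‖ ^ 2 := hu.comp_injective (add_left_injective (1 : ℤ))
  have hss : Summable s := by
    refine Summable.of_norm_bounded (hu.add hu1) (fun n => ?_)
    rw [Real.norm_eq_abs]
    refine (Complex.abs_im_le_norm _).trans ?_
    rw [norm_mul, RCLike.norm_conj]
    nlinarith [sq_nonneg (‖u n‖ - ‖u (n + 1)‖), sq_nonneg ‖u n‖, sq_nonneg ‖u (n+1)‖]
  have hss1 : Summable fun n => s (n - 1) := hss.comp_injective (sub_left_injective (b := (1:ℤ)))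
  have hsum : ∑' n, s (n - 1) = ∑' n, s n := (Equiv.subRight (1 : ℤ)).tsum_eq s
  have key : ∀ n, s n - s (n - 1) - η * ‖u n‖ ^ 2 = ((starRingEnd ℂ) (u n) * g n).im := by
    intro n
    rw [← h n, hs]
    simp only [sub_add_cancel]
    have := hv n
    rw [← Complex.normSq_eq_norm_sq, Complex.normSq_apply]
    simp [Complex.mul_im, Complex.mul_re, this]
    ring
  have hb : ∀ n, η * ‖u n‖ ^ 2 - (s n - s (n - 1)) ≤ η / 2 * ‖u n‖ ^ 2 + (2 * η)⁻¹ * ‖g n‖ ^ 2 := by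
    intro n
    have h1 : -((starRingEnd ℂ) (u n) * g n).im ≤ ‖u n‖ * ‖g n‖ := by
      refine (neg_le_abs _).trans ((Complex.abs_im_le_norm _).trans ?_)
      rw [norm_mul, RCLike.norm_conj]
    have h2 : ‖u n‖ * ‖g n‖ ≤ η / 2 * ‖u n‖ ^ 2 + (2 * η)⁻¹ * ‖g n‖ ^ 2 := by
      have : η / 2 * ‖u n‖ ^ 2 + (2 * η)⁻¹ * ‖g n‖ ^ 2 - ‖u n‖ * ‖g n‖ = (2 * η)⁻¹ * (η * ‖u n‖ - ‖g n‖) ^ 2 := by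
        field_simp; ring
      have h3 : 0 ≤ (2 * η)⁻¹ * (η * ‖u n‖ - ‖g n‖) ^ 2 := by positivity
      linarith
    have := key n
    linarith
  have hl : HasSum (fun n => η * ‖u n‖ ^ 2 - (s n - s (n - 1))) (η * ∑' n, ‖u n‖ ^ 2 - (∑' n, s n - ∑' n, s (n - 1))) :=
    (hu.hasSum.mul_left η).sub (hss.hasSum.sub hss1.hasSum)
  have hr := (hu.hasSum.mul_left (η / 2)).add (hg.hasSum.mul_left (2 * η)⁻¹)
  have := hasSum_le hb hl hr
  rw [hsum, sub_self, sub_zero] at this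
  have h3 : η / 2 * ∑' n, ‖u n‖ ^ 2 ≤ (2 * η)⁻¹ * ∑' n, ‖g n‖ ^ 2 := by linarith
  have h4 : (2 / η) * (η / 2 * ∑' n, ‖u n‖ ^ 2) ≤ (2 / η) * ((2 * η)⁻¹ * ∑' n, ‖g n‖ ^ 2) := by gcongr
  have e1 : (2 / η) * (η / 2 * ∑' n, ‖u n‖ ^ 2) = ∑' n, ‖u n‖ ^ 2 := by field_simp
  have e2 : (2 / η) * ((2 * η)⁻¹ * ∑' n, ‖g n‖ ^ 2) = (η ^ 2)⁻¹ * ∑' n, ‖g n‖ ^ 2 := by field_simp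
  rwa [e1, e2] at h4

lemma aF_bounds {α : ℝ} (hα : α ∈ Set.Ioo (-1 : ℝ) 1) {r : ℝ} (h0 : 0 < r) (h1 : |bet α| < r) (h2 : |bet α| * r < 1) :
    ∃ a0 a1 : ℝ, 0 < a0 ∧ ∀ X : ℂ, (‖X‖ = r ∨ ‖X‖ = r⁻¹) → a0 ≤ ‖aF α X‖ ∧ ‖aF α X‖ ≤ a1 := by
  have hb := abs_nonneg (bet α)
  have h3 : |bet α| * r⁻¹ < 1 := by rw [← div_eq_mul_inv, div_lt_one h0]; exact h1
  have hc := cst_pos α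
  have p1 : 0 < 1 - |bet α| * r := by linarith
  have p2 : 0 < 1 - |bet α| * r⁻¹ := by linarith
  have main : ∀ X : ℂ, ‖X‖ = r → cst α * (1 - |bet α| * r) * (1 - |bet α| * r⁻¹) ≤ ‖aF α X‖ ∧
      ‖aF α X‖ ≤ cst α * (1 + |bet α| * r) * (1 + |bet α| * r⁻¹) := by
    intro X hX
    have hX0 : X ≠ 0 := by rw [← norm_pos_iff, hX]; exact h0
    have n1 : ‖(bet α * X : ℂ)‖ = |bet α| * r := by rw [norm_mul, hX]; simp
    have n2 : ‖(bet α * X⁻¹ : ℂ)‖ = |bet α| * r⁻¹ := by rw [norm_mul, norm_inv, hX]; simp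
    have q1 := norm_sub_norm_le (1 : ℂ) (bet α * X)
    have q2 := norm_sub_norm_le (1 : ℂ) (bet α * X⁻¹)
    have q3 := norm_sub_le (1 : ℂ) (bet α * X)
    have q4 := norm_sub_le (1 : ℂ) (bet α * X⁻¹)
    rw [n1, norm_one] at q1 q3
    rw [n2, norm_one] at q2 q4
    rw [aF_fac hα hX0, norm_mul, norm_mul, Complex.norm_real, Real.norm_eq_abs, abs_of_pos hc]
    constructor <;> gcongr
  refine ⟨cst α * (1 - |bet α| * r) * (1 - |bet α| * r⁻¹), cst α * (1 + |bet α| * r) * (1 + |bet α| * r⁻¹), by positivity, fun X hX => ?_⟩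
  rcases hX with hX | hX
  · exact main X hX
  · rw [← aF_inv]
    exact main X⁻¹ (by rw [norm_inv, hX, inv_inv])

end PartG2

section PartG3

lemma Aop_norm {α : ℝ} (hα : α ∈ Set.Ioo (-1 : ℝ) 1) (ρ : ℂ) (hρ : ‖ρ‖ = 1) {r : ℝ} (hr : 0 < r) {X : ℂ}
    (hX : X ∈ Ann r r⁻¹) : ‖Aop α ρ hρ X‖ ≤ 1 + r⁻¹ := by
  unfold Aop
  refine (norm_sub_le _ _).trans ?_
  have h1 : ‖(1 : L2Z →L[ℂ] L2Z)‖ ≤ 1 := ContinuousLinearMap.norm_id_le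
  have h2 := Cop_norm ρ hρ X
  have h3 : ‖X‖⁻¹ ≤ r⁻¹ := inv_anti₀ hr hX.1
  have h4 := hX.2
  have h5 : |α| ≤ 1 := abs_le.mpr ⟨hα.1.le, hα.2.le⟩
  rw [norm_smul]
  have h6 : ‖(α : ℂ) / 2‖ ≤ 1 / 2 := by
    rw [norm_div, Complex.norm_real, Real.norm_eq_abs]; norm_num; linarith
  have h7 : ‖(α : ℂ) / 2‖ * ‖Cop ρ hρ X‖ ≤ 1 / 2 * (r⁻¹ + r⁻¹) :=
    mul_le_mul h6 (by linarith) (norm_nonneg _) (by norm_num)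
  linarith

lemma inverse_bound {T : L2Z →L[ℂ] L2Z} (hT : IsUnit T) {M : ℝ} (hM : 0 ≤ M)
    (h : ∀ u, ‖u‖ ≤ M * ‖T u‖) : ‖Ring.inverse T‖ ≤ M := by
  refine ContinuousLinearMap.opNorm_le_bound _ hM fun f => ?_
  have h1 : T (Ring.inverse T f) = f := by
    rw [← ContinuousLinearMap.mul_apply, Ring.mul_inverse_cancel _ hT]; rfl
  have := h (Ring.inverse T f)
  rwa [h1] at this

theorem not_spec {α lam b θ E : ℝ} (hα : α ∈ Set.Ioo (-1 : ℝ) 1)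
    (hb : Irrational b) (H : L2Z →L[ℂ] L2Z) (hH : IsSchrodingerOp (potV α lam) b θ H)
    (hL : 0 < lyap (potV α lam) b (E : ℂ)) (hD : |α * E + 2 * lam| ≤ 2) :
    (E : ℂ) ∉ spectrum ℂ H := by
  obtain ⟨ρ, hρe⟩ : ∃ ρ, ρ = Complex.exp (2 * π * Complex.I * b) := ⟨_, rfl⟩
  have hρ : ‖ρ‖ = 1 := by rw [hρe]; exact rho_norm b
  obtain ⟨r, η0, hbr, hr0, hr1, hη0, hG⟩ := green_bounds hα hD hb hρe hL
    (fun c hc => lyap_le_of_UB hα (by rw [← hρe]; exact hc))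
  have hbet := bet_lt hα
  have hb0 := abs_nonneg (bet α)
  have hrn : ∀ (X : ℂ) (n : ℤ), ‖X * ρ ^ n‖ = ‖X‖ := fun X n => by simp [hρ]
  -- boundary bound at real energy
  obtain ⟨K, hK, hGB⟩ := hG 0 le_rfl hη0.le r le_rfl hr1
  obtain ⟨a0, a1, ha0, ha⟩ := aF_bounds hα hr0 hbr (by nlinarith)
  obtain ⟨M, hM⟩ : ∃ M, M = √K / a0 := ⟨_, rfl⟩
  have hM0 : 0 < M := by rw [hM]; positivity
  have hlow : ∀ X : ℂ, (‖X‖ = r ∨ ‖X‖ = r⁻¹) → ∀ u, ‖u‖ ≤ M * ‖Tpp α lam ρ hρ E X u‖ := by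
    intro X hX u
    rw [hM]
    refine GB_lower hρ hK ha0 (fun n => (ha _ (by rw [hrn]; exact hX)).1) ?_ u
    intro u g hu hg hug
    refine hGB X hX u g hu hg (fun n => ?_)
    rw [← hug n]; simp
  have hri : 1 < r⁻¹ := (one_lt_inv₀ hr0).mpr hr1
  obtain ⟨B, hB⟩ : ∃ B, B = 1 + r⁻¹ := ⟨_, rfl⟩
  have hB0 : 0 < B := by rw [hB]; positivity
  obtain ⟨η, hη, hηle, hηM⟩ : ∃ η : ℝ, 0 < η ∧ η ≤ η0 ∧ M * (η * B) ≤ 1 / 4 := by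
    refine ⟨min η0 (1 / (4 * M * B)), lt_min hη0 (by positivity), min_le_left _ _, ?_⟩
    calc M * (min η0 (1 / (4 * M * B)) * B) ≤ M * ((1 / (4 * M * B)) * B) := by
          gcongr; exact min_le_right _ _
      _ = 1 / 4 := by field_simp
  obtain ⟨z, hz⟩ : ∃ z : ℂ, z = (E : ℂ) + η * Complex.I := ⟨_, rfl⟩
  have hδ : ‖(η : ℂ) * Complex.I‖ = η := by simp [abs_of_pos hη]
  have hAn : ∀ X ∈ Ann r r⁻¹, ‖((η : ℂ) * Complex.I) • Aop α ρ hρ X‖ ≤ η * B := by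
    intro X hX
    rw [norm_smul, hδ, hB]
    gcongr
    exact Aop_norm hα ρ hρ hr0 hX
  have hsh : ∀ X, Tpp α lam ρ hρ z X = Tpp α lam ρ hρ E X - ((η : ℂ) * Complex.I) • Aop α ρ hρ X :=
    fun X => by rw [hz]; exact Tpp_shift _ _ _ _ _ _ _
  -- boundary bound at complex energy
  have hlow2 : ∀ X : ℂ, (‖X‖ = r ∨ ‖X‖ = r⁻¹) → ∀ u, ‖u‖ ≤ (2 * M) * ‖Tpp α lam ρ hρ z X u‖ := by
    intro X hX u
    have hXA : X ∈ Ann r r⁻¹ := by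
      rcases hX with h | h
      · exact ⟨h.ge, by rw [h]; linarith⟩
      · exact ⟨by rw [h]; linarith, h.le⟩
    have h1 := hlow X hX u
    have h2 : Tpp α lam ρ hρ E X u = Tpp α lam ρ hρ z X u + (((η : ℂ) * Complex.I) • Aop α ρ hρ X) u := by
      rw [hsh, ContinuousLinearMap.sub_apply]; abel
    have h3 : ‖(((η : ℂ) * Complex.I) • Aop α ρ hρ X) u‖ ≤ η * B * ‖u‖ :=
      ContinuousLinearMap.le_of_opNorm_le _ (hAn X hXA) u
    have h4 := norm_add_le (Tpp α lam ρ hρ z X u) ((((η : ℂ) * Complex.I) • Aop α ρ hρ X) u)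
    rw [← h2] at h4
    have h5 : M * ‖Tpp α lam ρ hρ E X u‖ ≤ M * (‖Tpp α lam ρ hρ z X u‖ + η * B * ‖u‖) := by
      gcongr; linarith
    have h6 : M * (η * B) * ‖u‖ ≤ 1 / 4 * ‖u‖ := by gcongr
    have h7 : 0 ≤ M * ‖Tpp α lam ρ hρ z X u‖ := by positivity
    nlinarith
  have hunit : ∀ X ∈ Ann r r⁻¹, IsUnit (Tpp α lam ρ hρ z X) := by
    intro X hX
    have hX0 : 0 < ‖X‖ := hr0.trans_le hX.1
    rcases lt_trichotomy ‖X‖ 1 with h | h | h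
    · obtain ⟨K', hK', hG'⟩ := hG η hη.le hηle ‖X‖ hX.1 h
      obtain ⟨c0, c1, hc0, hc⟩ := aF_bounds hα hX0 (hbr.trans_le hX.1) (by nlinarith)
      have hc' := fun n : ℤ => hc (X * ρ ^ n) (Or.inl (hrn X n))
      refine GB_isUnit hρ hK' hc0 (fun n => (hc' n).1) (fun n => (hc' n).2) ?_
      rw [hz]
      exact hG' X (Or.inl rfl)
    · obtain ⟨c0, c1, hc0, hc⟩ := aF_bounds hα one_pos hbet (by linarith)
      have hc' := fun n : ℤ => hc (X * ρ ^ n) (Or.inl ((hrn X n).trans h))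
      refine GB_isUnit (K := (η ^ 2)⁻¹) hρ (by positivity) hc0 (fun n => (hc' n).1) (fun n => (hc' n).2) ?_
      rw [hz]
      exact GB_self hρ h hη
    · have hi : r ≤ ‖X‖⁻¹ := (le_inv_comm₀ hX0 hr0).mp hX.2
      have hi1 : ‖X‖⁻¹ < 1 := inv_lt_one_of_one_lt₀ h
      obtain ⟨K', hK', hG'⟩ := hG η hη.le hηle ‖X‖⁻¹ hi hi1
      obtain ⟨c0, c1, hc0, hc⟩ := aF_bounds hα (inv_pos.mpr hX0) (hbr.trans_le hi) (by nlinarith)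
      have hc' := fun n : ℤ => hc (X * ρ ^ n) (Or.inr (by rw [hrn, inv_inv]))
      refine GB_isUnit hρ hK' hc0 (fun n => (hc' n).1) (fun n => (hc' n).2) ?_
      rw [hz]
      exact hG' X (Or.inr (by rw [inv_inv]))
  have hne0 : ∀ X ∈ Ann r r⁻¹, X ≠ 0 := fun X hX => norm_pos_iff.mp (hr0.trans_le hX.1)
  have hdiff : DifferentiableOn ℂ (fun X => Ring.inverse (Tpp α lam ρ hρ z X)) (Ann r r⁻¹) := by
    intro X hX
    have h1 : DifferentiableAt ℂ (Ring.inverse : (L2Z →L[ℂ] L2Z) → _) (Tpp α lam ρ hρ z X) :=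
      differentiableAt_inverse (hunit X hX)
    exact (DifferentiableAt.comp X h1 (Tpp_diff α lam ρ hρ z (hne0 X hX))).differentiableWithinAt
  have hbd : ∀ X : ℂ, (‖X‖ = r ∨ ‖X‖ = r⁻¹) → ‖Ring.inverse (Tpp α lam ρ hρ z X)‖ ≤ 2 * M := by
    intro X hX
    have hXA : X ∈ Ann r r⁻¹ := by
      rcases hX with h | h
      · exact ⟨h.ge, by rw [h]; linarith⟩
      · exact ⟨by rw [h]; linarith, h.le⟩
    exact inverse_bound (hunit X hXA) (by positivity) (hlow2 X hX)
  obtain ⟨X, hXe⟩ : ∃ X, X = Complex.exp (2 * π * Complex.I * θ) := ⟨_, rfl⟩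
  have hX1 : ‖X‖ = 1 := by rw [hXe]; exact rho_norm θ
  have hXA : X ∈ Ann r r⁻¹ := ⟨by rw [hX1]; exact hr1.le, by rw [hX1]; exact hri.le⟩
  have hmax := annulus_max hdiff (fun X h => hbd X (Or.inl h)) (fun X h => hbd X (Or.inr h)) X hXA
  have hU := hunit X hXA
  -- the operator at real energy is invertible
  have hTE : IsUnit (Tpp α lam ρ hρ E X) := by
    set T := Tpp α lam ρ hρ z X with hT
    set Q := ((η : ℂ) * Complex.I) • Aop α ρ hρ X with hQ
    have e1 : Tpp α lam ρ hρ E X = T * (1 - (-(Ring.inverse T * Q))) := by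
      rw [sub_neg_eq_add, mul_add, mul_one, ← mul_assoc, Ring.mul_inverse_cancel _ hU, one_mul, hT, hsh]
      abel
    rw [e1]
    refine hU.mul (isUnit_one_sub_of_norm_lt_one ?_)
    rw [norm_neg]
    calc ‖Ring.inverse T * Q‖ ≤ ‖Ring.inverse T‖ * ‖Q‖ := norm_mul_le _ _
      _ ≤ (2 * M) * (η * B) := by
          gcongr
          exact hAn X hXA
      _ < 1 := by nlinarith
  have hane : ∀ n : ℤ, aF α (X * ρ ^ n) ≠ 0 := fun n =>
    aF_ne hα (by rw [hrn, hX1]; exact hbet) (by rw [hrn, hX1, mul_one]; exact hbet)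
  have hpot : ∀ n : ℤ, (potV α lam ((n : ℝ) * b + θ) : ℂ) = vF α lam (X * ρ ^ n) := by
    intro n
    rw [potV_eq_vF, hXe, hρe, ← Complex.exp_int_mul, ← Complex.exp_add]
    congr 2
    push_cast
    ring
  have hfac : Tpp α lam ρ hρ E X = Aop α ρ hρ X * (H - (E : ℂ) • 1) := by
    ext u n
    rw [Tpp_apply' _ _ _ _ _ _ _ _ (hane n), ContinuousLinearMap.mul_apply, Aop_apply]
    congr 1
    rw [ContinuousLinearMap.sub_apply, lp.coeFn_sub, Pi.sub_apply, hH u n, hpot]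
    simp only [ContinuousLinearMap.smul_apply, lp.coeFn_smul, Pi.smul_apply, smul_eq_mul,
      ContinuousLinearMap.one_apply]
    ring
  have hAinj : Function.Injective (Aop α ρ hρ X) := by
    intro u v huv
    apply lp.ext
    funext n
    have := congrArg (fun w : L2Z => w n) huv
    simp only [Aop_apply] at this
    exact mul_left_cancel₀ (hane n) this
  have hHu : IsUnit (H - (E : ℂ) • 1) := by
    rw [ContinuousLinearMap.isUnit_iff_bijective] at hTE ⊢
    refine ⟨fun u v huv => hTE.1 ?_, fun f => ?_⟩
    · rw [hfac, ContinuousLinearMap.mul_apply, ContinuousLinearMap.mul_apply, huv]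
    · obtain ⟨u, hu⟩ := hTE.2 (Aop α ρ hρ X f)
      rw [hfac, ContinuousLinearMap.mul_apply] at hu
      exact ⟨u, hAinj hu⟩
  rw [spectrum.mem_iff, not_not, Algebra.algebraMap_eq_smul_one, ← neg_sub]
  exact hHu.neg

end PartG3

/-- for every `θ` and every `E` in the spectrum of `H_{α,θ,b}`,
`L(E) > 0 ↔ |αE + 2λ| > 2`. -/
theorem lyapunov_pos_iff (α lam b θ : ℝ) (hα : α ∈ Set.Ioo (-1 : ℝ) 1)
    (hb : Irrational b)
    (H : lp (fun _ : ℤ => ℂ) 2 →L[ℂ] lp (fun _ : ℤ => ℂ) 2)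
    (hH : IsSchrodingerOp (potV α lam) b θ H)
    (E : ℝ) (hE : (E : ℂ) ∈ spectrum ℂ H) :
    0 < lyap (potV α lam) b (E : ℂ) ↔ 2 < |α * E + 2 * lam| := by
  refine ⟨fun h => ?_, fun h => lyap_pos_of_gt hα h⟩
  by_contra hD
  exact not_spec hα hb H hH h (not_lt.mp hD) hE
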